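/- Let K be a number field and let D₁ and D₂ be quaternion division algebras over K, i.e., central division K-algebras of degree 2. If D₁ and D₂ have the same quadratic subfields — for every field extension F/K of degree 2, there is a K-algebra embedding F → D₁ if and only if there is a K-algebra embedding F → D₂ — then D₁ and D₂ are isomorphic as K-algebras. -/

import Mathlib

universe u v w

/-!
If `D₁` and `D₂` have the same quadratic subfields, a common one `K(√a)` gives `D₁ ≃ (a, b)` and
`D₂ ≃ (a, c)`. Neither `b` nor `c` is a norm from `K(√a)`, and `D₁ ≃ D₂` as soon as `b c` is one, so
by the Hasse norm theorem it suffices that at every place `b` is a local norm if and only if `c` is: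
the local norms have index at most two, hence `b c` is then a local norm everywhere. Suppose that
`a` is not a square at a place `i` and that `b` is a local norm there. Then `b` is a global norm
times a square at `i`, and so `(a, b)` contains a square root of a global nonsquare `β` that is a
square at `i`. By hypothesis so does `(a, c)`, that is, `β = a x² + c (y² - a z²)`. Since `a` is not
a square at `i`, this forces `c` to be a local norm at `i`.

Squares and norms in the completions are described by approximation inside `K`. The Hasse norm
theorem for `K(√a)` and the indices of the local norm groups are obtained together by counting.
Dirichlet's unit theorem for `K` and `K(√a)` bounds the index of the global norms in the `S`-units
from above. The indices of the local squares and a set of auxiliary primes detecting the squares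
among the `S`-units bound the index of the everywhere local norms from below. The two bounds agree,
so every inequality between them is an equality.
-/

open IsDedekindDomain Module NumberField WithZero
open scoped WithZero

namespace QuaternionHasse

section NormSubgroup

variable {R : Type*} [CommRing R]

/-- The units represented by the form `p² - a q²`. If `a` is a nonsquare in a field, these are the
norms from `R(√a)`. -/
def normSubgroup (a : R) : Subgroup Rˣ where
  carrier := {x | ∃ p q : R, (x : R) = p ^ 2 - a * q ^ 2}
  one_mem' := ⟨1, 0, by simp⟩
  mul_mem' := by
    rintro x y ⟨p, q, hx⟩ ⟨p', q', hy⟩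
    exact ⟨p * p' + a * q * q', p * q' + q * p', by rw [Units.val_mul, hx, hy]; ring⟩
  inv_mem' := by
    rintro x ⟨p, q, hx⟩
    refine ⟨p * ↑x⁻¹, q * ↑x⁻¹, ?_⟩
    calc (↑x⁻¹ : R) = x * ↑x⁻¹ * ↑x⁻¹ := by rw [x.mul_inv, one_mul]
      _ = (p * ↑x⁻¹) ^ 2 - a * (q * ↑x⁻¹) ^ 2 := by rw [hx]; ring

theorem mem_normSubgroup {a : R} {x : Rˣ} :
    x ∈ normSubgroup a ↔ ∃ p q : R, (x : R) = p ^ 2 - a * q ^ 2 := Iff.rfl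

theorem sq_mem_normSubgroup (a : R) (x : Rˣ) : x ^ 2 ∈ normSubgroup a := ⟨x, 0, by simp⟩

theorem neg_mem_normSubgroup (a : Rˣ) : -a ∈ normSubgroup (a : R) := ⟨0, 1, by simp⟩

theorem normSubgroup_mul_sq (a : R) (c : Rˣ) : normSubgroup (a * c ^ 2) = normSubgroup a := by
  ext x
  constructor
  · rintro ⟨p, q, h⟩
    exact ⟨p, q * c, by rw [h]; ring⟩
  · rintro ⟨p, q, h⟩
    refine ⟨p, q * ↑c⁻¹, ?_⟩
    calc (x : R) = p ^ 2 - a * q ^ 2 * (c * ↑c⁻¹) ^ 2 := by rw [h, c.mul_inv]; ring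
      _ = p ^ 2 - a * c ^ 2 * (q * ↑c⁻¹) ^ 2 := by ring

end NormSubgroup

section LocalSquares

variable {K : Type*} [Field K] {Γ₀ : Type*} [LinearOrderedCommGroupWithZero Γ₀]
  {V : Valuation K Γ₀}

theorem valuation_two_le_one : V 2 ≤ 1 := by
  simpa [one_add_one_eq_two] using V.map_add 1 1

theorem valuation_four : V 4 = V 2 ^ 2 := by rw [← map_pow]; norm_num

theorem valuation_four_le_one : V 4 ≤ 1 :=
  valuation_four.trans_le (pow_le_one' valuation_two_le_one 2)

theorem valuation_eq_one_of_sub_one_lt_one {x : K} (h : V (x - 1) < 1) : V x = 1 := by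
  simpa using V.map_one_add_of_lt h

theorem valuation_eq_one_of_sub_sq_lt_one {a g : K} (ha : V a = 1) (h : V (a - g ^ 2) < 1) :
    V g = 1 := by
  have hsq : V (g ^ 2) = V a := by
    simpa using V.map_sub_eq_of_lt_right (h.trans_eq ha.symm)
  rw [map_pow, ha] at hsq
  exact (pow_eq_one_iff.1 hsq).resolve_right two_ne_zero

/-- The units of `K` whose valuation is the square of a value. -/
def evenValuation (V : Valuation K Γ₀) : Subgroup Kˣ where
  carrier := {x | ∃ y : Kˣ, V x = V y ^ 2}
  one_mem' := ⟨1, by simp⟩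
  mul_mem' := by
    rintro x x' ⟨y, h⟩ ⟨y', h'⟩
    exact ⟨y * y', by simp [h, h', mul_pow]⟩
  inv_mem' := by
    rintro x ⟨y, h⟩
    exact ⟨y⁻¹, by simp [h]⟩

variable [NeZero (2 : K)]

theorem four_ne_zero_of_two : (4 : K) ≠ 0 := by
  rw [show (4 : K) = 2 ^ 2 by norm_num]
  exact pow_ne_zero 2 two_ne_zero

theorem valuation_four_pos : 0 < V 4 := by
  rw [zero_lt_iff, Valuation.ne_zero_iff]
  exact four_ne_zero_of_two

/-- The units of `K` that become squares in the completion at `V`: by Hensel's lemma a unit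
congruent to `1` modulo `4𝔪` is a square there, so no completion is needed to define it. -/
def localSquares (V : Valuation K Γ₀) : Subgroup Kˣ where
  carrier := {x | ∃ y : K, y ≠ 0 ∧ V (x * y ^ 2 - 1) < V 4}
  one_mem' := ⟨1, one_ne_zero, by simpa using valuation_four_pos⟩
  mul_mem' := by
    rintro x x' ⟨y, hy, h⟩ ⟨y', hy', h'⟩
    refine ⟨y * y', mul_ne_zero hy hy', ?_⟩
    have hexpand : ((x * x' : Kˣ) : K) * (y * y') ^ 2 - 1
      = (x * y ^ 2) * (x' * y' ^ 2 - 1) + (x * y ^ 2 - 1) := by push_cast; ring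
    rw [hexpand]
    refine V.map_add_lt ?_ h
    rwa [map_mul, valuation_eq_one_of_sub_one_lt_one (h.trans_le valuation_four_le_one), one_mul]
  inv_mem' := by
    rintro x ⟨y, hy, h⟩
    refine ⟨y⁻¹, inv_ne_zero hy, ?_⟩
    have hx : (x : K) ≠ 0 := x.ne_zero
    have hexpand : ((x⁻¹ : Kˣ) : K) * y⁻¹ ^ 2 - 1 = -(x * y ^ 2 - 1) / (x * y ^ 2) := by
      push_cast; field_simp; ring
    rwa [hexpand, map_div₀, valuation_eq_one_of_sub_one_lt_one (h.trans_le valuation_four_le_one),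
      Valuation.map_neg, div_one]

theorem mem_localSquares_of_sub_sq_lt {x y : Kˣ} (h : V (x - y ^ 2) < V 4 * V (y ^ 2 : K)) :
    x ∈ localSquares V := by
  refine ⟨(y : K)⁻¹, inv_ne_zero y.ne_zero, ?_⟩
  have hy : 0 < V (y ^ 2 : K) := by simp [zero_lt_iff]
  have hdiv : (x : K) * (y : K)⁻¹ ^ 2 - 1 = (x - y ^ 2) / y ^ 2 := by field_simp
  rwa [hdiv, map_div₀, div_lt_iff₀ hy]

theorem sq_mem_localSquares (x : Kˣ) : x ^ 2 ∈ localSquares V :=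
  mem_localSquares_of_sub_sq_lt (y := x) <| by
    simpa [zero_lt_iff] using four_ne_zero_of_two (K := K)

theorem inv_mul_mem_localSquares {x y : Kˣ} (h : V (x - y) < V 4 * V x) :
    x⁻¹ * y ∈ localSquares V := by
  refine mem_localSquares_of_sub_sq_lt (y := 1) ?_
  have hx : 0 < V (x : K) := by simp [zero_lt_iff]
  have hdiv : ((x⁻¹ * y : Kˣ) : K) - ((1 : Kˣ) : K) ^ 2 = -(x - y) / x := by
    push_cast; field_simp; ring
  rwa [hdiv, map_div₀, Valuation.map_neg, div_lt_iff₀ hx, Units.val_one, one_pow, map_one, mul_one]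

theorem localSquares_le_evenValuation : localSquares V ≤ evenValuation V := by
  rintro x ⟨y, hy, h⟩
  refine ⟨(Units.mk0 y hy)⁻¹, ?_⟩
  have hone := valuation_eq_one_of_sub_one_lt_one (h.trans_le valuation_four_le_one)
  rw [map_mul, map_pow] at hone
  simpa using eq_inv_of_mul_eq_one_left hone

end LocalSquares

section Perturbation

variable {K : Type*} [Field K] [NeZero (2 : K)] {V : Valuation K ℤᵐ⁰}

theorem lt_one_iff_le_exp_neg_one {x : ℤᵐ⁰} : x < 1 ↔ x ≤ exp (-1 : ℤ) := by
  rw [← lt_mul_exp_iff_le exp_ne_zero, ← exp_add, neg_add_cancel, exp_zero]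

theorem exists_mul_sq_eq_one_add_four_mul {x : Kˣ} (hx : x ∈ localSquares V) (n : ℕ) :
    ∃ y d : K, y ≠ 0 ∧ x * y ^ 2 = 1 + 4 * d ∧ V d ≤ exp (-((n : ℤ) + 1)) := by
  have h4 := four_ne_zero_of_two (K := K)
  induction n with
  | zero =>
    obtain ⟨y, hy, h⟩ := hx
    refine ⟨y, (x * y ^ 2 - 1) / 4, hy, by field_simp; ring, ?_⟩
    rw [map_div₀]
    simpa using lt_one_iff_le_exp_neg_one.1 ((div_lt_one₀ valuation_four_pos).2 h)
  | succ n ih =>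
    -- Newton's step: `x y² = 1 + 4d` gives `x (y / (1 + 2d))² = 1 - 4 (d / (1 + 2d))²`.
    obtain ⟨y, d, hy, hxy, hd⟩ := ih
    have hd1 : V d < 1 := hd.trans_lt (by rw [← exp_zero, exp_lt_exp]; lia)
    have hone : V (1 + 2 * d) = 1 := V.map_one_add_of_lt <| by
      rw [map_mul]
      exact mul_lt_one_of_nonneg_of_lt_one_right valuation_two_le_one zero_le hd1
    have hne : 1 + 2 * d ≠ 0 := by
      rw [← V.ne_zero_iff, hone]; exact one_ne_zero
    refine ⟨y / (1 + 2 * d), -d ^ 2 / (1 + 2 * d) ^ 2, div_ne_zero hy hne, ?_, ?_⟩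
    · rw [div_pow, ← mul_div_assoc, hxy, div_eq_iff (pow_ne_zero 2 hne), add_mul, mul_assoc,
        div_mul_cancel₀ _ (pow_ne_zero 2 hne)]
      ring
    · rw [map_div₀, map_pow, hone, Valuation.map_neg, map_pow, one_pow, div_one]
      calc V d ^ 2 ≤ exp (-((n : ℤ) + 1)) ^ 2 := pow_le_pow_left' hd 2
        _ ≤ exp (-(((n + 1 : ℕ) : ℤ) + 1)) := by
          rw [pow_two, ← exp_add, exp_le_exp]; push_cast; lia

theorem exists_valuation_mul_sq_sub_one_lt {x : Kˣ} (hx : x ∈ localSquares V) {γ : ℤᵐ⁰}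
    (hγ : γ ≠ 0) : ∃ y : K, y ≠ 0 ∧ V (x * y ^ 2 - 1) < γ := by
  obtain ⟨n, hn⟩ := exists_exp_neg_natCast_lt hγ
  obtain ⟨y, d, hy, hxy, hd⟩ := exists_mul_sq_eq_one_add_four_mul hx n
  refine ⟨y, hy, ?_⟩
  rw [hxy, add_sub_cancel_left, map_mul]
  calc V 4 * V d ≤ V d := mul_le_of_le_one_left' valuation_four_le_one
    _ ≤ exp (-((n : ℤ) + 1)) := hd
    _ < exp (-(n : ℤ)) := by rw [exp_lt_exp]; lia
    _ < γ := hn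

theorem mem_localSquares_sup_normSubgroup_of_sub_lt {a p r : K} {c : Kˣ}
    (h : V (c - (p ^ 2 - a * r ^ 2)) < V 4 * V c) : c ∈ localSquares V ⊔ normSubgroup a := by
  have hn : p ^ 2 - a * r ^ 2 ≠ 0 := by
    intro h0
    rw [h0, sub_zero] at h
    exact h.not_ge (mul_le_of_le_one_left' valuation_four_le_one)
  have hsq := inv_mul_mem_localSquares (y := Units.mk0 _ hn) h
  have hc : c = (c⁻¹ * Units.mk0 _ hn)⁻¹ * Units.mk0 _ hn := by simp
  rw [hc]
  exact Subgroup.mul_mem_sup (inv_mem hsq) ⟨p, r, rfl⟩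

theorem mem_localSquares_sup_normSubgroup_of_eq_sub {q c : Kˣ} (hq : q ∈ localSquares V)
    {a m n : K} (hc : (c : K) = m ^ 2 - a * q * n ^ 2) :
    c ∈ localSquares V ⊔ normSubgroup a := by
  set A := max (V (a * q * n ^ 2)) 1
  have hApos : 0 < A := zero_lt_one.trans_le (le_max_right _ _)
  have hB : V 4 * V (c : K) ≠ 0 := mul_ne_zero valuation_four_pos.ne' (by simp)
  obtain ⟨y, hy, hδ⟩ := exists_valuation_mul_sq_sub_one_lt hq
    (γ := min 1 (V 4 * V (c : K) / A)) (by
      rcases min_choice 1 (V 4 * V (c : K) / A) with h | h <;> rw [h]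
      exacts [one_ne_zero, div_ne_zero hB hApos.ne'])
  have hone := valuation_eq_one_of_sub_one_lt_one (hδ.trans_le (min_le_left _ _))
  refine mem_localSquares_sup_normSubgroup_of_sub_lt (p := m) (r := n / y) ?_
  have hdiff : (c : K) - (m ^ 2 - a * (n / y) ^ 2) =
      -(a * q * n ^ 2 * (q * y ^ 2 - 1) / (q * y ^ 2)) := by
    rw [hc]; field_simp; ring
  rw [hdiff, Valuation.map_neg, map_div₀, hone, div_one, map_mul]
  calc V (a * q * n ^ 2) * V (q * y ^ 2 - 1) ≤ A * V (q * y ^ 2 - 1) :=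
        mul_le_mul_left (le_max_left _ _) _
    _ < V 4 * V (c : K) := by
        rw [mul_comm]
        exact (lt_div_iff₀ hApos).1 (hδ.trans_le (min_le_right _ _))

theorem mem_localSquares_sup_normSubgroup_of_eq_mul_sub {q c : Kˣ} (hq : q ∈ localSquares V)
    {a m n : K} (hc : (c : K) = q * m ^ 2 - a * n ^ 2) :
    c ∈ localSquares V ⊔ normSubgroup a := by
  rw [← mul_inv_cancel_left q c]
  refine mul_mem (Subgroup.mem_sup_left hq)
    (mem_localSquares_sup_normSubgroup_of_eq_sub (inv_mem hq) (m := m) (n := n) ?_)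
  push_cast; rw [hc]; field_simp

theorem mem_localSquares_sup_normSubgroup_symm {a b : Kˣ}
    (h : b ∈ localSquares V ⊔ normSubgroup (a : K)) :
    a ∈ localSquares V ⊔ normSubgroup (b : K) := by
  obtain ⟨q, hq, n, ⟨x, y, hn⟩, hqn⟩ := Subgroup.mem_sup.1 h
  have hb : (b : K) = q * (x ^ 2 - a * y ^ 2) := by rw [← hn, ← hqn, Units.val_mul]
  by_cases hy : y = 0
  · -- `b` is a local square, and `a = ((a + 1) / 2)² - ((a - 1) / 2)²`.
    subst hy
    have hx : x ≠ 0 := by rintro rfl; simp at hb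
    refine mem_localSquares_sup_normSubgroup_of_eq_sub (inv_mem hq)
      (m := (a + 1) / 2) (n := (a - 1) / 2 / x) ?_
    have := four_ne_zero_of_two (K := K)
    have h2 : (2 : K) ≠ 0 := two_ne_zero
    rw [Units.val_inv_eq_inv_val, hb]; field_simp; ring
  · refine mem_localSquares_sup_normSubgroup_of_eq_sub (inv_mem hq) (m := x / y) (n := 1 / y) ?_
    rw [Units.val_inv_eq_inv_val, hb]; field_simp; ring

end Perturbation

section ArtinSchreier

variable {K : Type*} [Field K] {Γ₀ : Type*} [LinearOrderedCommGroupWithZero Γ₀]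
  {V : Valuation K Γ₀} {ρ : K}

/-- `ρ` is integral and `t² + t - ρ` has no root in the residue field of `V`. The square root of
`1 + 4ρ` then generates the unramified quadratic extension of the completion. -/
def IsArtinSchreierIrreducible (V : Valuation K Γ₀) (ρ : K) : Prop :=
  V ρ ≤ 1 ∧ ∀ t : K, V t ≤ 1 → V (t ^ 2 + t - ρ) = 1

theorem IsArtinSchreierIrreducible.exists_valuation_quadratic_eq_sq
    (h : IsArtinSchreierIrreducible V ρ) {z q : K} (hzq : z ^ 2 + z * q - ρ * q ^ 2 ≠ 0) :
    ∃ y : K, y ≠ 0 ∧ V (z ^ 2 + z * q - ρ * q ^ 2) = V y ^ 2 := by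
  rcases le_or_gt (V z) (V q) with hle | hlt
  · have hq : q ≠ 0 := by
      rintro rfl
      obtain rfl : z = 0 := by simpa using hle
      simp at hzq
    have ht : V (z / q) ≤ 1 := by
      rw [map_div₀]; exact div_le_one_of_le₀ hle zero_le
    have hfactor : z ^ 2 + z * q - ρ * q ^ 2 = q ^ 2 * ((z / q) ^ 2 + z / q - ρ) := by
      field_simp
    exact ⟨q, hq, by rw [hfactor, map_mul, h.2 _ ht, mul_one, map_pow]⟩
  · have hz : z ≠ 0 := by
      rintro rfl
      simp at hlt
    have hs : V (q / z) < 1 := by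
      rw [map_div₀]; exact (div_lt_one₀ (zero_le.trans_lt hlt)).2 hlt
    have hle : V (1 - ρ * (q / z)) ≤ 1 :=
      V.map_sub_le V.map_one.le (by rw [map_mul]; exact mul_le_one' h.1 hs.le)
    have hlt : V (q / z * (1 - ρ * (q / z))) < 1 := by
      rw [map_mul]; exact mul_lt_one_of_nonneg_of_lt_one_left zero_le hs hle
    have hfactor : z ^ 2 + z * q - ρ * q ^ 2 = z ^ 2 * (1 + q / z * (1 - ρ * (q / z))) := by
      field_simp; ring
    exact ⟨z, hz, by rw [hfactor, map_mul, V.map_one_add_of_lt hlt, mul_one, map_pow]⟩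

variable [NeZero (2 : K)]

theorem IsArtinSchreierIrreducible.one_add_four_mul_ne_zero (h : IsArtinSchreierIrreducible V ρ) :
    1 + 4 * ρ ≠ 0 := by
  intro h0
  have h4 := four_ne_zero_of_two (K := K)
  have hρ : 4 * ρ = -1 := by linear_combination h0
  have hV4 : V 4 = 1 := by
    refine le_antisymm valuation_four_le_one ?_
    calc 1 = V (4 * ρ) := by rw [hρ, Valuation.map_neg, map_one]
      _ ≤ V 4 := by rw [map_mul]; exact mul_le_of_le_one_right' h.1
  have hV2 : V 2 = 1 := (pow_eq_one_iff.1 (valuation_four.symm.trans hV4)).resolve_right two_ne_zero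
  have hroot : (-1 / 2 : K) ^ 2 + -1 / 2 - ρ = 0 := by
    have h2 : (2 : K) ≠ 0 := two_ne_zero
    apply mul_left_cancel₀ h4
    linear_combination (norm := (field_simp; ring)) -h0
  have := h.2 (-1 / 2) (by rw [map_div₀, Valuation.map_neg, hV2]; simp)
  rw [hroot, map_zero] at this
  exact zero_ne_one this

theorem IsArtinSchreierIrreducible.normSubgroup_le_evenValuation
    (h : IsArtinSchreierIrreducible V ρ) : normSubgroup (1 + 4 * ρ) ≤ evenValuation V := by
  rintro c ⟨p, q, hc⟩
  have h2 : (2 : K) ≠ 0 := two_ne_zero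
  have hc' : (c : K) = 4 * (((p - q) / 2) ^ 2 + (p - q) / 2 * q - ρ * q ^ 2) := by
    rw [hc]; field_simp; ring
  obtain ⟨y, hy, hVy⟩ := h.exists_valuation_quadratic_eq_sq (z := (p - q) / 2) (q := q)
    (right_ne_zero_of_mul (hc' ▸ c.ne_zero))
  exact ⟨Units.mk0 (2 * y) (mul_ne_zero h2 hy), by
    rw [hc', map_mul, hVy, valuation_four, Units.val_mk0, map_mul, mul_pow]⟩

theorem IsArtinSchreierIrreducible.localSquares_sup_normSubgroup_le
    (h : IsArtinSchreierIrreducible V ρ) :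
    localSquares V ⊔ normSubgroup (1 + 4 * ρ) ≤ evenValuation V :=
  sup_le localSquares_le_evenValuation h.normSubgroup_le_evenValuation

end ArtinSchreier

section LocalNondegeneracy

variable {K : Type*} [Field K] {V : Valuation K ℤᵐ⁰}

/-- A normalized discrete valuation whose residue field has a separable quadratic extension and, in
residue characteristic two, is perfect; finite residue fields have both properties. -/
structure IsQuasiFinite (V : Valuation K ℤᵐ⁰) : Prop where
  surjective : Function.Surjective V
  exists_isArtinSchreierIrreducible : ∃ ρ, IsArtinSchreierIrreducible V ρ
  exists_sub_sq_lt (h : V 2 < 1) {u : K} (hu : V u ≤ 1) : ∃ w : K, V w ≤ 1 ∧ V (u - w ^ 2) < 1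

theorem exists_unit_valuation_eq_exp (hV : Function.Surjective V) (k : ℤ) :
    ∃ x : Kˣ, V x = exp k := by
  obtain ⟨x, hx⟩ := hV (exp k)
  exact ⟨Units.mk0 x (by rintro rfl; exact exp_ne_zero (hx ▸ map_zero V)), hx⟩

theorem notMem_evenValuation_of_eq_exp_odd {x : Kˣ} {k : ℤ} (h : V x = exp (2 * k + 1)) :
    x ∉ evenValuation V := by
  rintro ⟨y, hy⟩
  have h0 : V (y : K) ≠ 0 := by simp
  rw [h, ← exp_log h0, pow_two, ← exp_add] at hy
  have := exp_injective hy
  lia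

theorem exists_valuation_two_eq_exp [NeZero (2 : K)] (V : Valuation K ℤᵐ⁰) :
    ∃ e : ℕ, V 2 = exp (-(e : ℤ)) := by
  have h2 : V 2 ≠ 0 := by simpa using two_ne_zero
  have hle : log (V 2) ≤ 0 := by
    rw [← exp_le_exp, exp_log h2, exp_zero]; exact valuation_two_le_one
  exact ⟨(-log (V 2)).toNat, by rw [Int.toNat_of_nonneg (by lia), neg_neg, exp_log h2]⟩

theorem valuation_mul_inv_sq_sub_one {a g : Kˣ} (hg : V (g : K) = 1) :
    V (((a * g⁻¹ ^ 2 : Kˣ) : K) - 1) = V ((a : K) - g ^ 2) := by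
  have hdiv : ((a * g⁻¹ ^ 2 : Kˣ) : K) - 1 = (a - g ^ 2) / g ^ 2 := by push_cast; field_simp
  rw [hdiv, map_div₀, map_pow, hg, one_pow, div_one]

theorem IsQuasiFinite.exists_valuation_mul_sq_sub_one_le_of_even (hV : IsQuasiFinite V) {a : Kˣ}
    {e k : ℕ} (he : V 2 = exp (-(e : ℤ))) (hk : k < e) (ha : V (a : K) = 1)
    (hak : V ((a : K) - 1) = exp (-(2 * k : ℤ))) :
    ∃ c : Kˣ, V ((a * c ^ 2 : Kˣ) : K) = 1 ∧
      V (((a * c ^ 2 : Kˣ) : K) - 1) ≤ exp (-(2 * k + 1 : ℤ)) := by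
  have h2 : V 2 < 1 := by rw [he, ← exp_zero, exp_lt_exp]; lia
  obtain ⟨ϖ, hϖ⟩ := exists_unit_valuation_eq_exp hV.surjective (-(k : ℤ))
  have hϖ2 : V ((ϖ : K) ^ 2) = exp (-(2 * k : ℤ)) := by
    rw [map_pow, hϖ, pow_two, ← exp_add]; congr 1; ring
  obtain ⟨w, hw, hw2⟩ := hV.exists_sub_sq_lt h2 (u := ((a : K) - 1) / ϖ ^ 2)
    (by rw [map_div₀, hak, hϖ2, div_self exp_ne_zero])
  have hdiff : V ((a : K) - (1 + ϖ * w) ^ 2) ≤ exp (-(2 * k + 1 : ℤ)) := by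
    have hexpand : (a : K) - (1 + ϖ * w) ^ 2 =
        ϖ ^ 2 * (((a : K) - 1) / ϖ ^ 2 - w ^ 2) - 2 * ϖ * w := by field_simp; ring
    rw [hexpand]
    refine V.map_sub_le ?_ ?_
    · rw [map_mul, hϖ2]
      refine (mul_le_mul_right (lt_one_iff_le_exp_neg_one.1 hw2) _).trans ?_
      rw [← exp_add, exp_le_exp]; lia
    · rw [map_mul, map_mul, he, hϖ]
      refine (mul_le_of_le_one_right' hw).trans ?_
      rw [← exp_add, exp_le_exp]; lia
  have hg : V (1 + ϖ * w) = 1 := valuation_eq_one_of_sub_sq_lt_one ha <| hdiff.trans_lt <| by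
    rw [← exp_zero, exp_lt_exp]; lia
  have hg0 : 1 + (ϖ : K) * w ≠ 0 := by rw [← V.ne_zero_iff, hg]; exact one_ne_zero
  refine ⟨(Units.mk0 _ hg0)⁻¹, by simp [ha, hg], ?_⟩
  rwa [valuation_mul_inv_sq_sub_one (by simpa using hg)]

variable [NeZero (2 : K)] {a : Kˣ}

/- With `Δ = 1 + 4ρ` and `B = a - Δ`, the element `-ΔB` is a norm from `K(√(aΔ))`. By symmetry and
the hypothesis on `a`, this moves around to `B` being a local norm from the unramified `K(√Δ)`. -/
theorem sub_mem_evenValuation_of_forall_mem {B : Kˣ} {ρ : K}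
    (hρ : IsArtinSchreierIrreducible V ρ)
    (ha : ∀ x : Kˣ, x ∈ localSquares V ⊔ normSubgroup (a : K)) (hB : (B : K) = a - (1 + 4 * ρ)) :
    B ∈ evenValuation V := by
  obtain ⟨Δ, hΔ⟩ : ∃ Δ : Kˣ, (Δ : K) = 1 + 4 * ρ := ⟨Units.mk0 _ hρ.one_add_four_mul_ne_zero, rfl⟩
  have haΔ : a * Δ ∈ localSquares V ⊔ normSubgroup ((-Δ * B : Kˣ) : K) :=
    mem_localSquares_sup_normSubgroup_symm <| Subgroup.mem_sup_right
      ⟨Δ, 1, by push_cast; rw [hB, hΔ]; ring⟩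
  have hΔB : Δ ∈ localSquares V ⊔ normSubgroup ((-Δ * B : Kˣ) : K) := by
    simpa using mul_mem (inv_mem (mem_localSquares_sup_normSubgroup_symm (ha (-Δ * B)))) haΔ
  have hneg : -Δ ∈ localSquares V ⊔ normSubgroup (Δ : K) :=
    Subgroup.mem_sup_right (neg_mem_normSubgroup Δ)
  have hBΔ : B ∈ localSquares V ⊔ normSubgroup (Δ : K) := by
    simpa only [inv_mul_cancel_left] using
      mul_mem (inv_mem hneg) (mem_localSquares_sup_normSubgroup_symm hΔB)
  exact hρ.localSquares_sup_normSubgroup_le (hΔ ▸ hBΔ)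

theorem valuation_sub_one_ne_exp_of_odd {e k : ℕ} (he : V 2 = exp (-(e : ℤ)))
    (hk : 2 * k + 2 ≤ 2 * e) (ha : ∀ x : Kˣ, x ∈ localSquares V ⊔ normSubgroup (a : K))
    {ρ : K} (hρ : IsArtinSchreierIrreducible V ρ) :
    V ((a : K) - 1) ≠ exp (-(2 * k + 1 : ℤ)) := by
  intro h
  have hlt : V (4 * ρ) < V ((a : K) - 1) := by
    calc V (4 * ρ) ≤ V 4 := by rw [map_mul]; exact mul_le_of_le_one_right' hρ.1
      _ = exp (-(2 * e : ℤ)) := by rw [valuation_four, he, pow_two, ← exp_add]; congr 1; ring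
      _ < V ((a : K) - 1) := by rw [h, exp_lt_exp]; lia
  have hB : V ((a : K) - (1 + 4 * ρ)) = exp (-(2 * k + 1 : ℤ)) := by
    rw [← sub_sub, V.map_sub_eq_of_lt_left hlt, h]
  have hB0 : (a : K) - (1 + 4 * ρ) ≠ 0 := by
    rw [← V.ne_zero_iff, hB]; exact exp_ne_zero
  refine notMem_evenValuation_of_eq_exp_odd (k := -k - 1) ?_
    (sub_mem_evenValuation_of_forall_mem (B := Units.mk0 _ hB0) hρ ha rfl)
  rw [Units.val_mk0, hB]; congr 1; ring

theorem IsQuasiFinite.mem_localSquares_of_valuation_sub_one_le (hV : IsQuasiFinite V)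
    (ha1 : V (a : K) = 1) (ha4 : V ((a : K) - 1) ≤ V 4)
    (ha : ∀ x : Kˣ, x ∈ localSquares V ⊔ normSubgroup (a : K)) : a ∈ localSquares V := by
  obtain ⟨ρ, hρ⟩ : ∃ ρ, (a : K) = 1 + 4 * ρ :=
    ⟨((a : K) - 1) / 4, by rw [mul_div_cancel₀ _ four_ne_zero_of_two]; ring⟩
  have hVρ : V ρ ≤ 1 := by
    refine le_of_mul_le_mul_left ?_ (valuation_four_pos (V := V))
    rwa [mul_one, ← map_mul, ← add_sub_cancel_left (1 : K) (4 * ρ), ← hρ]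
  obtain ⟨t, ht, htρ⟩ : ∃ t : K, V t ≤ 1 ∧ V (t ^ 2 + t - ρ) ≠ 1 := by
    by_contra! hirr
    obtain ⟨ϖ, hϖ⟩ := exists_unit_valuation_eq_exp hV.surjective 1
    exact notMem_evenValuation_of_eq_exp_odd (k := 0) hϖ <|
      IsArtinSchreierIrreducible.localSquares_sup_normSubgroup_le ⟨hVρ, hirr⟩ (hρ ▸ ha ϖ)
  have htρ' : V (t ^ 2 + t - ρ) < 1 := lt_of_le_of_ne
    (V.map_sub_le (V.map_add_le (by rw [map_pow]; exact pow_le_one' ht 2) ht) hVρ) htρ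
  have hdiff : V ((a : K) - (1 + 2 * t) ^ 2) < V 4 := by
    have : (a : K) - (1 + 2 * t) ^ 2 = -(4 * (t ^ 2 + t - ρ)) := by rw [hρ]; ring
    rw [this, Valuation.map_neg, map_mul]
    exact mul_lt_of_lt_one_right valuation_four_pos htρ'
  have hg := valuation_eq_one_of_sub_sq_lt_one ha1 (hdiff.trans_le valuation_four_le_one)
  have hg0 : 1 + 2 * t ≠ 0 := by rw [← V.ne_zero_iff, hg]; exact one_ne_zero
  exact mem_localSquares_of_sub_sq_lt (y := Units.mk0 _ hg0) (by simpa [hg] using hdiff)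

theorem IsQuasiFinite.exists_valuation_mul_sq_sub_one_le (hV : IsQuasiFinite V)
    (ha : ∀ x : Kˣ, x ∈ localSquares V ⊔ normSubgroup (a : K)) {e : ℕ}
    (he : V 2 = exp (-(e : ℤ))) {n : ℕ} (hn : n ≤ 2 * e) :
    ∃ c : Kˣ, V ((a * c ^ 2 : Kˣ) : K) = 1 ∧
      V (((a * c ^ 2 : Kˣ) : K) - 1) ≤ exp (-(n : ℤ)) := by
  obtain ⟨ρ, hρ⟩ := hV.exists_isArtinSchreierIrreducible
  induction n with
  | zero =>
    obtain ⟨y, hy⟩ : a ∈ evenValuation V := hρ.localSquares_sup_normSubgroup_le <|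
      mem_localSquares_sup_normSubgroup_symm
        (b := Units.mk0 _ hρ.one_add_four_mul_ne_zero) (ha _)
    have hone : V ((a * y⁻¹ ^ 2 : Kˣ) : K) = 1 := by simp [hy]
    exact ⟨y⁻¹, hone, by simpa using V.map_sub_le hone.le V.map_one.le⟩
  | succ n ih =>
    obtain ⟨c, hc, hcn⟩ := ih (by lia)
    rcases le_or_gt (V (((a * c ^ 2 : Kˣ) : K) - 1)) (exp (-((n + 1 : ℕ) : ℤ))) with hle | hgt
    · exact ⟨c, hc, hle⟩
    have heq : V (((a * c ^ 2 : Kˣ) : K) - 1) = exp (-(n : ℤ)) := by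
      obtain ⟨m, hm⟩ : ∃ m : ℤ, V (((a * c ^ 2 : Kˣ) : K) - 1) = exp m :=
        ⟨_, (exp_log (zero_le.trans_lt hgt).ne').symm⟩
      rw [hm, exp_le_exp] at hcn
      rw [hm, exp_lt_exp] at hgt
      rw [hm]
      congr 1
      lia
    rcases Nat.even_or_odd' n with ⟨k, rfl | rfl⟩
    · obtain ⟨g, hg, hgk⟩ := hV.exists_valuation_mul_sq_sub_one_le_of_even he (k := k) (by lia) hc
        (by simpa using heq)
      rw [mul_assoc, ← mul_pow] at hg hgk
      exact ⟨c * g, hg, by simpa using hgk⟩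
    · have hac : ∀ x : Kˣ, x ∈ localSquares V ⊔ normSubgroup ((a * c ^ 2 : Kˣ) : K) := fun x ↦ by
        rw [Units.val_mul, Units.val_pow_eq_pow_val, normSubgroup_mul_sq]; exact ha x
      exact (valuation_sub_one_ne_exp_of_odd he (k := k) (by lia) hac hρ (by simpa using heq)).elim

theorem IsQuasiFinite.exists_notMem_localSquares_sup_normSubgroup (hV : IsQuasiFinite V)
    (ha : a ∉ localSquares V) : ∃ x : Kˣ, x ∉ localSquares V ⊔ normSubgroup (a : K) := by
  by_contra! hall
  obtain ⟨e, he⟩ := exists_valuation_two_eq_exp V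
  obtain ⟨c, hc, hc4⟩ := hV.exists_valuation_mul_sq_sub_one_le hall he le_rfl
  have hV4 : V 4 = exp (-((2 * e : ℕ) : ℤ)) := by
    rw [valuation_four, he, pow_two, ← exp_add]; congr 1; push_cast; ring
  have hmem : a * c ^ 2 ∈ localSquares V := by
    refine hV.mem_localSquares_of_valuation_sub_one_le hc (hV4 ▸ hc4) fun x ↦ ?_
    rw [Units.val_mul, Units.val_pow_eq_pow_val, normSubgroup_mul_sq]
    exact hall x
  exact ha <| by simpa using mul_mem hmem (inv_mem (sq_mem_localSquares (V := V) c))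

end LocalNondegeneracy

theorem index_evenValuation {K : Type*} [Field K] {V : Valuation K ℤᵐ⁰}
    (hV : Function.Surjective V) : (evenValuation V).index = 2 := by
  obtain ⟨ϖ, hϖ⟩ := exists_unit_valuation_eq_exp hV 1
  have hexp (b : Kˣ) : V (b : K) = exp (log (V (b : K))) := (exp_log (by simp)).symm
  rw [Subgroup.index_eq_two_iff]
  refine ⟨ϖ, fun b ↦ ?_⟩
  rcases Int.even_or_odd' (log (V (b : K))) with ⟨k, hk | hk⟩
  · obtain ⟨y, hy⟩ := exists_unit_valuation_eq_exp hV k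
    refine .inr ⟨⟨y, ?_⟩, notMem_evenValuation_of_eq_exp_odd (k := k) ?_⟩
    · rw [hexp, hk, hy, pow_two, ← exp_add]; congr 1; ring
    · rw [Units.val_mul, map_mul, hexp b, hk, hϖ, ← exp_add]
  · obtain ⟨y, hy⟩ := exists_unit_valuation_eq_exp hV (k + 1)
    refine .inl ⟨⟨y, ?_⟩, notMem_evenValuation_of_eq_exp_odd (k := k) (by rw [hexp, hk])⟩
    rw [Units.val_mul, map_mul, hexp b, hk, hϖ, hy, pow_two, ← exp_add, ← exp_add]; congr 1; ring

section SquareClasses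

theorem card_ker_powMonoidHom_two_le {A : Type*} [CommRing A] (I : Set A) [Finite I]
    (h : ∀ x : A, x ^ 2 = 1 → x - 1 ∈ I ∨ x + 1 ∈ I) :
    Nat.card (powMonoidHom 2 : Aˣ →* Aˣ).ker ≤ 2 * Nat.card I := by
  classical
  have hI (x : (powMonoidHom 2 : Aˣ →* Aˣ).ker) : (x.1 : A) - 1 ∈ I ∨ (x.1 : A) + 1 ∈ I :=
    h _ (by rw [← Units.val_pow_eq_pow_val, show x.1 ^ 2 = 1 from x.2, Units.val_one])
  rw [two_mul, ← Nat.card_sum]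
  refine Nat.card_le_card_of_injective (fun x ↦ if hx : (x.1 : A) - 1 ∈ I then .inl ⟨_, hx⟩
    else .inr ⟨_, (hI x).resolve_left hx⟩) fun x y hxy ↦ Subtype.ext (Units.ext ?_)
  dsimp only at hxy
  split_ifs at hxy <;> simpa using hxy

theorem relIndex_le_card {G α : Type*} [Group G] [Finite α] {H L : Subgroup G} (f : L → α)
    (hf : ∀ x y, f x = f y → (x : G)⁻¹ * y ∈ H) :
    H.relIndex L ≠ 0 ∧ H.relIndex L ≤ Nat.card α := by
  have hinj : Function.Injective fun q : L ⧸ H.subgroupOf L ↦ f q.out := fun q q' h ↦ by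
    rw [← q.out_eq', ← q'.out_eq']
    exact QuotientGroup.eq.2 (Subgroup.mem_subgroupOf.2 (hf _ _ h))
  have := Finite.of_injective _ hinj
  exact ⟨Nat.card_pos.ne', Nat.card_le_card_of_injective _ hinj⟩

end SquareClasses

section AdicValuation

variable {R : Type*} [CommRing R] [IsDedekindDomain R] {K : Type*} [Field K] [Algebra R K]
  [IsFractionRing R K] (v : HeightOneSpectrum R)

theorem exists_isArtinSchreierIrreducible [Finite (R ⧸ v.asIdeal)] :
    ∃ ρ, IsArtinSchreierIrreducible (v.valuation K) ρ := by
  -- On the finite residue field `t ↦ t² + t` takes the same value at `0` and `-1`.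
  obtain ⟨r, hr⟩ : ∃ r : R, ∀ t : R ⧸ v.asIdeal, t ^ 2 + t ≠ Ideal.Quotient.mk _ r := by
    by_contra! hsurj
    have hinj := Finite.injective_iff_surjective (f := fun t : R ⧸ v.asIdeal ↦ t ^ 2 + t).2
      fun s ↦ by obtain ⟨r, rfl⟩ := Ideal.Quotient.mk_surjective s; exact hsurj r
    have : Nontrivial (R ⧸ v.asIdeal) := Ideal.Quotient.nontrivial_iff.2 v.isPrime.ne_top
    simpa using @hinj 0 (-1) (by simp)
  refine ⟨algebraMap R K r, v.valuation_le_one r, fun t ht ↦ ?_⟩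
  refine le_antisymm ?_ (not_lt.1 fun hlt ↦ ?_)
  · exact Valuation.map_sub_le _
      (Valuation.map_add_le _ (by rw [map_pow]; exact pow_le_one' ht 2) ht) (v.valuation_le_one r)
  obtain ⟨a, ha⟩ := v.exists_valuation_sub_lt_of_integer ht 1
  have hroot : v.valuation K (algebraMap R K (a ^ 2 + a - r)) < 1 := by
    have hexpand : algebraMap R K (a ^ 2 + a - r) = (t ^ 2 + t - algebraMap R K r) +
        (algebraMap R K a - t) * (algebraMap R K a + t + 1) := by
      simp only [map_sub, map_add, map_pow]; ring
    rw [hexpand]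
    refine Valuation.map_add_lt _ hlt ?_
    rw [map_mul]
    exact mul_lt_of_lt_of_le_one ha <| Valuation.map_add_le _
      (Valuation.map_add_le _ (v.valuation_le_one a) ht) (Valuation.map_one _).le
  rw [v.valuation_lt_one_iff_mem, ← Ideal.Quotient.eq_zero_iff_mem, map_sub, map_add, map_pow,
    sub_eq_zero] at hroot
  exact hr _ hroot

theorem exists_valuation_sub_sq_lt_one [Finite (R ⧸ v.asIdeal)] (h2 : v.valuation K 2 < 1) {u : K}
    (hu : v.valuation K u ≤ 1) : ∃ w : K, v.valuation K w ≤ 1 ∧ v.valuation K (u - w ^ 2) < 1 := by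
  have h20 : (2 : R ⧸ v.asIdeal) = 0 := by
    rw [← map_ofNat (algebraMap R K), v.valuation_lt_one_iff_mem,
      ← Ideal.Quotient.eq_zero_iff_mem] at h2
    rwa [map_ofNat] at h2
  have hinj : Function.Injective (fun t : R ⧸ v.asIdeal ↦ t ^ 2) := fun s t hst ↦
    sub_eq_zero.1 <| pow_eq_zero_iff two_ne_zero |>.1 <| by
      linear_combination hst + h20 * (t ^ 2 - s * t)
  obtain ⟨a, ha⟩ := v.exists_valuation_sub_lt_of_integer hu 1
  obtain ⟨w, hw⟩ := Finite.injective_iff_surjective.1 hinj (Ideal.Quotient.mk _ a)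
  obtain ⟨w, rfl⟩ := Ideal.Quotient.mk_surjective w
  refine ⟨algebraMap R K w, v.valuation_le_one w, ?_⟩
  have hlt : v.valuation K (algebraMap R K (a - w ^ 2)) < 1 :=
    (v.valuation_lt_one_iff_mem _).2 <| Ideal.Quotient.eq.1 <| by rw [map_pow]; exact hw.symm
  rw [map_sub, map_pow] at hlt
  rw [Valuation.map_sub_swap] at ha
  simpa using Valuation.map_add_lt _ ha hlt

theorem isQuasiFinite_valuation [Finite (R ⧸ v.asIdeal)] : IsQuasiFinite (v.valuation K) where
  surjective := v.valuation_surjective K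
  exists_isArtinSchreierIrreducible := exists_isArtinSchreierIrreducible v
  exists_sub_sq_lt h2 _ hu := exists_valuation_sub_sq_lt_one v h2 hu

theorem valuation_algebraMap_le_exp_neg_iff {a : R} {n : ℕ} :
    v.valuation K (algebraMap R K a) ≤ exp (-(n : ℤ)) ↔ a ∈ v.asIdeal ^ n := by
  rw [← v.intValuation_le_pow_iff_mem, ← v.valuation_of_algebraMap (K := K)]

variable {v}

theorem exists_eq_algebraMap_mul_sq_of_mem_evenValuation {x : Kˣ}
    (hx : x ∈ evenValuation (v.valuation K)) :
    ∃ a ∉ v.asIdeal, ∃ y : Kˣ, (x : K) = algebraMap R K a * y ^ 2 := by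
  obtain ⟨y, hy⟩ := hx
  have hxy : v.valuation K ((x : K) / y ^ 2) = 1 := by simp [hy]
  obtain ⟨n, d, h⟩ := v.exists_primeCompl_mul_eq_of_integer ((x : K) / y ^ 2) hxy.le
  have hd : (d : R) ∉ v.asIdeal := d.2
  have hd0 : algebraMap R K d ≠ 0 := by
    rw [← (v.valuation K).ne_zero_iff, v.valuation_eq_one_iff_notMem.2 hd]
    exact one_ne_zero
  have hn : n ∉ v.asIdeal := by
    rw [← v.valuation_eq_one_iff_notMem (K := K), ← h, map_mul, hxy, one_mul,
      v.valuation_eq_one_iff_notMem.2 hd]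
  refine ⟨n * d, fun hnd ↦ (v.isPrime.mem_or_mem hnd).elim hn hd, y * (Units.mk0 _ hd0)⁻¹, ?_⟩
  rw [map_mul, ← h, Units.val_mul, Units.val_inv_eq_inv_val, Units.val_mk0]
  field_simp

variable (v)

variable [NeZero (2 : K)]

variable (K) in
/-- The multiplicity of `v` in the ideal generated by `2`. -/
noncomputable def twoMultiplicity : ℕ := (exists_valuation_two_eq_exp (v.valuation K)).choose

theorem valuation_two : v.valuation K 2 = exp (-(twoMultiplicity K v : ℤ)) :=
  (exists_valuation_two_eq_exp (v.valuation K)).choose_spec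

theorem twoMultiplicity_eq_zero (h : v.valuation K 2 = 1) : twoMultiplicity K v = 0 := by
  rw [valuation_two, ← exp_zero, exp_inj] at h
  lia

variable {v}

theorem sub_one_mem_or_add_one_mem_of_sq_sub_one_mem {x : R}
    (h : x ^ 2 - 1 ∈ v.asIdeal ^ (2 * twoMultiplicity K v + 1)) :
    x - 1 ∈ v.asIdeal ^ (twoMultiplicity K v + 1) ∨
      x + 1 ∈ v.asIdeal ^ (twoMultiplicity K v + 1) := by
  by_contra! hcon
  simp only [← valuation_algebraMap_le_exp_neg_iff v (K := K), not_le] at h hcon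
  obtain ⟨h1, h2⟩ := hcon
  rw [show x ^ 2 - 1 = (x - 1) * (x + 1) by ring, map_mul, map_mul] at h
  have n1 := (zero_le.trans_lt h1).ne'
  have n2 := (zero_le.trans_lt h2).ne'
  rw [← exp_log n1, exp_lt_exp] at h1
  rw [← exp_log n2, exp_lt_exp] at h2
  rw [← exp_log n1, ← exp_log n2, ← exp_add, exp_le_exp] at h
  push_cast at *
  lia

theorem inv_mul_mem_localSquares_of_sub_mem {x x' y y' : Kˣ} {a a' c : R}
    (hx : (x : K) = algebraMap R K a * y ^ 2) (hx' : (x' : K) = algebraMap R K a' * y' ^ 2)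
    (ha : a ∉ v.asIdeal) (hc : c ∉ v.asIdeal)
    (h : a * c ^ 2 - a' ∈ v.asIdeal ^ (2 * twoMultiplicity K v + 1)) :
    x⁻¹ * x' ∈ localSquares (v.valuation K) := by
  have hVa := v.valuation_eq_one_iff_notMem (K := K) |>.2 ha
  have hVc := v.valuation_eq_one_iff_notMem (K := K) |>.2 hc
  obtain ⟨γ, hγ⟩ : ∃ γ : Kˣ, (γ : K) = algebraMap R K c :=
    ⟨Units.mk0 _ ((v.valuation K).ne_zero_iff.1 (hVc ▸ one_ne_zero)), rfl⟩
  have hz : ((x * (y⁻¹ * γ) ^ 2 : Kˣ) : K) = algebraMap R K (a * c ^ 2) := by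
    rw [map_mul, map_pow, ← hγ]; push_cast; rw [hx]; field_simp
  have hz' : ((x' * y'⁻¹ ^ 2 : Kˣ) : K) = algebraMap R K a' := by
    push_cast; rw [hx']; field_simp
  have hmem : (x * (y⁻¹ * γ) ^ 2)⁻¹ * (x' * y'⁻¹ ^ 2) ∈ localSquares (v.valuation K) := by
    refine inv_mul_mem_localSquares ?_
    rw [hz, hz', map_mul, map_pow (algebraMap R K), map_mul, map_pow, hVa, hVc, one_pow, mul_one,
      mul_one, ← map_pow (algebraMap R K), ← map_mul, ← map_sub, valuation_four, valuation_two,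
      pow_two (exp _), ← exp_add]
    refine ((valuation_algebraMap_le_exp_neg_iff v).2 h).trans_lt ?_
    rw [exp_lt_exp]; push_cast; lia
  convert mul_mem hmem (sq_mem_localSquares (y⁻¹ * γ * y')) using 1
  ext; push_cast; field_simp

theorem card_quotient_pow (n : ℕ) :
    Nat.card (R ⧸ v.asIdeal ^ n) = Nat.card (R ⧸ v.asIdeal) ^ n := by
  have := v.isPrime
  simpa only [Submodule.cardQuot_apply] using cardQuot_pow_of_prime v.ne_bot (i := n)

variable [Finite (R ⧸ v.asIdeal)]

theorem card_map_mkQ_pow_add_one (e : ℕ) :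
    Nat.card (Submodule.map (v.asIdeal ^ (2 * e + 1)).mkQ (v.asIdeal ^ (e + 1))) =
      Nat.card (R ⧸ v.asIdeal) ^ e := by
  have h := Submodule.card_quotient_mul_card_quotient (v.asIdeal ^ (e + 1))
    (v.asIdeal ^ (2 * e + 1)) (Ideal.pow_le_pow_right (by lia))
  rw [card_quotient_pow, card_quotient_pow,
    show Nat.card (R ⧸ v.asIdeal) ^ (2 * e + 1) =
      Nat.card (R ⧸ v.asIdeal) ^ e * Nat.card (R ⧸ v.asIdeal) ^ (e + 1) by ring] at h
  exact Nat.eq_of_mul_eq_mul_right (pow_pos Nat.card_pos _) h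

variable (K v) in
theorem card_ker_powMonoidHom_two_units_quotient_le :
    Nat.card (powMonoidHom 2 : (R ⧸ v.asIdeal ^ (2 * twoMultiplicity K v + 1))ˣ →* _).ker ≤
      2 * Nat.card (R ⧸ v.asIdeal) ^ twoMultiplicity K v := by
  have := Ideal.finite_quotient_pow (IsNoetherian.noetherian v.asIdeal)
    (2 * twoMultiplicity K v + 1)
  rw [← card_map_mkQ_pow_add_one]
  refine card_ker_powMonoidHom_two_le (SetLike.coe <| Submodule.map (Submodule.mkQ _)
    (v.asIdeal ^ (twoMultiplicity K v + 1))) fun x hx ↦ ?_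
  obtain ⟨x, rfl⟩ := Ideal.Quotient.mk_surjective x
  rw [← map_pow, ← map_one (Ideal.Quotient.mk _), Ideal.Quotient.eq] at hx
  exact (sub_one_mem_or_add_one_mem_of_sq_sub_one_mem (K := K) hx).imp
    Submodule.mem_map_of_mem Submodule.mem_map_of_mem

theorem relIndex_localSquares_evenValuation_le :
    (localSquares (v.valuation K)).relIndex (evenValuation (v.valuation K)) ≠ 0 ∧
      (localSquares (v.valuation K)).relIndex (evenValuation (v.valuation K)) ≤
        2 * Nat.card (R ⧸ v.asIdeal) ^ twoMultiplicity K v := by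
  set m := 2 * twoMultiplicity K v + 1
  have := Ideal.finite_quotient_pow (IsNoetherian.noetherian v.asIdeal) m
  have := v.isMaximal
  choose a ha y hay using fun x : evenValuation (v.valuation K) ↦
    exists_eq_algebraMap_mul_sq_of_mem_evenValuation x.2
  have hunit x : IsUnit (Ideal.Quotient.mk (v.asIdeal ^ m) (a x)) :=
    Ideal.Quotient.isUnit_mk_pow_of_notMem _ (ha x)
  obtain ⟨hne, hle⟩ := relIndex_le_card (H := localSquares (v.valuation K))
    (fun x ↦ ((hunit x).unit : (R ⧸ v.asIdeal ^ m)ˣ ⧸ (powMonoidHom 2).range)) fun x x' hxx' ↦ by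
      obtain ⟨c, hc⟩ := QuotientGroup.eq.1 hxx'
      obtain ⟨c', hc'⟩ := Ideal.Quotient.mk_surjective (c : R ⧸ v.asIdeal ^ m)
      refine inv_mul_mem_localSquares_of_sub_mem (hay x) (hay x') (ha x) (c := c')
        ((Ideal.Quotient.isUnit_mk_pow_iff_notMem _ (by lia)).1 (hc' ▸ c.isUnit)) ?_
      rw [← Ideal.Quotient.eq, map_mul, map_pow, hc', ← (hunit x).unit_spec,
        ← (hunit x').unit_spec, ← Units.val_pow_eq_pow_val, ← Units.val_mul, Units.val_inj,
        ← eq_inv_mul_iff_mul_eq]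
      exact hc
  refine ⟨hne, hle.trans ?_⟩
  rw [← Subgroup.index_eq_card, Subgroup.index_range]
  exact card_ker_powMonoidHom_two_units_quotient_le K v

theorem index_localSquares_le : (localSquares (v.valuation K)).index ≠ 0 ∧
    (localSquares (v.valuation K)).index ≤
      4 * Nat.card (R ⧸ v.asIdeal) ^ twoMultiplicity K v := by
  have hindex := Subgroup.relIndex_mul_index (localSquares_le_evenValuation (V := v.valuation K))
  obtain ⟨hne, hle⟩ := relIndex_localSquares_evenValuation_le (v := v) (K := K)
  rw [index_evenValuation (v.valuation_surjective K)] at hindex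
  rw [← hindex]
  exact ⟨mul_ne_zero hne two_ne_zero, by lia⟩

end AdicValuation

section NumberField

variable {K : Type*} [Field K] [NumberField K]

theorem prod_asIdeal_pow_twoMultiplicity_dvd (S : Finset (HeightOneSpectrum (𝓞 K))) :
    ∏ v ∈ S, v.asIdeal ^ twoMultiplicity K v ∣ Ideal.span {(2 : 𝓞 K)} := by
  refine Finset.prod_dvd_of_coprime (fun v _ w _ hvw ↦ IsCoprime.pow ?_) fun v _ ↦ ?_
  · have hv := v.isMaximal
    have hw := w.isMaximal
    exact Ideal.isCoprime_iff_sup_eq.2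
      (Ideal.IsMaximal.coprime_of_ne hv hw fun h ↦ hvw (HeightOneSpectrum.ext h))
  · rw [Ideal.dvd_span_singleton, ← valuation_algebraMap_le_exp_neg_iff (K := K), map_ofNat,
      valuation_two]

theorem prod_index_localSquares_le (S : Finset (HeightOneSpectrum (𝓞 K))) :
    ∏ v ∈ S, (localSquares (v.valuation K)).index ≤ 4 ^ S.card * 2 ^ finrank ℚ K := by
  have hnorm : Ideal.absNorm (Ideal.span {(2 : 𝓞 K)}) = 2 ^ finrank ℚ K := by
    rw [← RingOfIntegers.rank K]
    exact_mod_cast Ideal.absNorm_span_natCast (S := 𝓞 K) 2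
  have hfin (v : HeightOneSpectrum (𝓞 K)) : Finite (𝓞 K ⧸ v.asIdeal) :=
    v.asIdeal.finiteQuotientOfFreeOfNeBot v.ne_bot
  calc ∏ v ∈ S, (localSquares (v.valuation K)).index
      ≤ ∏ v ∈ S, 4 * Ideal.absNorm v.asIdeal ^ twoMultiplicity K v :=
        Finset.prod_le_prod' fun v _ ↦ index_localSquares_le.2
    _ = 4 ^ S.card * Ideal.absNorm (∏ v ∈ S, v.asIdeal ^ twoMultiplicity K v) := by
        rw [Finset.prod_mul_distrib, Finset.prod_const, map_prod]; simp only [map_pow]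
    _ ≤ 4 ^ S.card * 2 ^ finrank ℚ K := by
        rw [← hnorm]
        exact Nat.mul_le_mul_left _ <| Nat.le_of_dvd (by rw [hnorm]; positivity) <|
          map_dvd _ (prod_asIdeal_pow_twoMultiplicity_dvd S)

end NumberField

section Index

theorem index_range_nsmulAddMonoidHom_sup_torsion {M : Type*} [AddCommGroup M] [Module.Finite ℤ M]
    (n : ℕ) : ((nsmulAddMonoidHom n : M →+ M).range ⊔
      (Submodule.torsion ℤ M).toAddSubgroup).index = n ^ finrank ℤ M := by
  set T := Submodule.torsion ℤ M
  have hmap : (nsmulAddMonoidHom n : M →+ M).range.map T.mkQ.toAddMonoidHom =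
      (nsmulAddMonoidHom n : M ⧸ T →+ M ⧸ T).range := by
    ext x
    constructor
    · rintro ⟨_, ⟨y, rfl⟩, rfl⟩
      exact ⟨T.mkQ y, (map_nsmul T.mkQ n y).symm⟩
    · rintro ⟨y, rfl⟩
      obtain ⟨y, rfl⟩ := T.mkQ_surjective y
      exact ⟨n • y, ⟨y, rfl⟩, map_nsmul T.mkQ n y⟩
  have hker : T.mkQ.toAddMonoidHom.ker = T.toAddSubgroup := by ext x; simp
  have hrange : T.mkQ.toAddMonoidHom.range = ⊤ := AddMonoidHom.range_eq_top.2 T.mkQ_surjective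
  have hindex := AddSubgroup.index_map (nsmulAddMonoidHom n : M →+ M).range T.mkQ.toAddMonoidHom
  rwa [hmap, AddSubgroup.index_range_nsmul, hker, hrange, AddSubgroup.index_top, mul_one,
    finrank_quotient_eq_of_le_torsion le_rfl, eq_comm] at hindex

theorem index_range_nsmulAddMonoidHom {M : Type*} [AddCommGroup M] [Module.Finite ℤ M] {n : ℕ}
    (hn : n ≠ 0) : (nsmulAddMonoidHom n : M →+ M).range.index =
      n ^ finrank ℤ M * Nat.card (nsmulAddMonoidHom n : M →+ M).ker := by
  set T := Submodule.torsion ℤ M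
  have : Finite T := Module.finite_of_fg_torsion T (Submodule.torsion_isTorsion)
  have htorsion : (nsmulAddMonoidHom n : M →+ M).range.addSubgroupOf T.toAddSubgroup =
      (nsmulAddMonoidHom n : T →+ T).range := by
    ext x
    refine ⟨fun ⟨y, hy⟩ ↦ ?_, fun ⟨y, hy⟩ ↦ ⟨y, congrArg Subtype.val hy⟩⟩
    obtain ⟨a, ha⟩ := (Submodule.mem_torsion_iff _).1 x.2
    refine ⟨⟨y, (Submodule.mem_torsion_iff _).2 ⟨a * ⟨n, by simpa using hn⟩, ?_⟩⟩,
      Subtype.ext hy⟩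
    have hy' : n • y = x := hy
    rw [← ha, ← hy']
    simp [Submonoid.smul_def, mul_smul]
  have hker : Nat.card (nsmulAddMonoidHom n : T →+ T).ker =
      Nat.card (nsmulAddMonoidHom n : M →+ M).ker := by
    refine Nat.card_congr ⟨fun x ↦ ⟨x.1, congrArg Subtype.val x.2⟩,
      fun x ↦ ⟨⟨x.1, (Submodule.mem_torsion_iff _).2 ⟨⟨n, by simpa using hn⟩, ?_⟩⟩,
        Subtype.ext x.2⟩, fun _ ↦ rfl, fun _ ↦ rfl⟩
    have hx : n • (x : M) = 0 := x.2
    simpa [Submonoid.smul_def] using hx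
  rw [← AddSubgroup.relIndex_mul_index (le_sup_left : _ ≤ _ ⊔ T.toAddSubgroup),
    index_range_nsmulAddMonoidHom_sup_torsion,
    AddSubgroup.relIndex_sup_left, AddSubgroup.relIndex, htorsion, AddSubgroup.index_range,
    mul_comm]
  exact congrArg _ hker

theorem index_range_powMonoidHom {G : Type*} [CommGroup G] [Module.Finite ℤ (Additive G)] {n : ℕ}
    (hn : n ≠ 0) : (powMonoidHom n : G →* G).range.index =
      n ^ finrank ℤ (Additive G) * Nat.card (powMonoidHom n : G →* G).ker :=
  index_range_nsmulAddMonoidHom (M := Additive G) hn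

theorem index_range_powMonoidHom_two_eq_mul {U A : Type*} [CommGroup U] [CommGroup A] (f : A →* U)
    (i : U →* A) (d : A →* A) (hfi : ∀ u, f (i u) = u ^ 2) (hker : d.ker = i.range)
    (hrange : d.range = f.ker) (hd : ∀ b ∈ f.ker, d b = b ^ 2) :
    (powMonoidHom 2 : U →* U).range.index =
      f.range.index * (powMonoidHom 2 : f.ker →* f.ker).range.index := by
  have hU : (powMonoidHom 2 : U →* U).range = i.range.map f := by
    rw [MonoidHom.map_range]
    exact congrArg _ (MonoidHom.ext fun u ↦ (hfi u).symm)
  have hker_eq : ((powMonoidHom 2 : f.ker →* f.ker).range.map f.ker.subtype) = f.ker.map d := by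
    ext y
    constructor
    · rintro ⟨_, ⟨w, rfl⟩, rfl⟩
      exact ⟨w, w.2, hd _ w.2⟩
    · rintro ⟨w, hw, rfl⟩
      exact ⟨_, ⟨⟨w, hw⟩, rfl⟩, (hd _ hw).symm⟩
  have hkerindex : (f.ker.map d).relIndex f.ker = (f.ker ⊔ i.range).index := by
    rw [← hker, ← hrange, MonoidHom.range_eq_map, Subgroup.relIndex_map_map, top_sup_eq,
      Subgroup.relIndex_top_right]
  rw [← Subgroup.relIndex_top_right (powMonoidHom 2 : f.ker →* f.ker).range,
    ← Subgroup.relIndex_map_map_of_injective _ _ f.ker.subtype_injective, hker_eq,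
    ← MonoidHom.range_eq_map, Subgroup.range_subtype, hkerindex, hU, Subgroup.index_map,
    sup_comm, mul_comm]

end Index

section Dedekind

variable {R : Type*} [CommRing R] [IsDedekindDomain R] {K : Type*} [Field K] [Algebra R K]
  [IsFractionRing R K]

variable (R) in
theorem finite_setOf_valuation_ne_one {x : K} (hx : x ≠ 0) :
    {v : HeightOneSpectrum R | v.valuation K x ≠ 1}.Finite := by
  refine ((HeightOneSpectrum.Support.finite R x).union
    (HeightOneSpectrum.Support.finite R x⁻¹)).subset fun v hv ↦ ?_
  have hpos : 0 < v.valuation K x := (Valuation.pos_iff _).2 hx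
  rcases lt_or_gt_of_ne hv with h | h
  · exact .inr (by rwa [HeightOneSpectrum.Support, Set.mem_ofPred_eq, map_inv₀, one_lt_inv₀ hpos])
  · exact .inl h

theorem exists_valuation_lt_one_and_forall_ne_eq_one [Finite (ClassGroup R)]
    (v : HeightOneSpectrum R) :
    ∃ x : Kˣ, v.valuation K x < 1 ∧ ∀ u : HeightOneSpectrum R, u ≠ v → u.valuation K x = 1 := by
  set h := Nat.card (ClassGroup R)
  have hv : v.asIdeal ∈ nonZeroDivisors (Ideal R) := mem_nonZeroDivisors_of_ne_zero v.ne_bot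
  have hprincipal : ClassGroup.mk0 (⟨v.asIdeal, hv⟩ ^ h) = 1 := by rw [map_pow, pow_card_eq_one']
  rw [ClassGroup.mk0_eq_one_iff] at hprincipal
  obtain ⟨π, hπ⟩ := hprincipal.principal
  replace hπ : v.asIdeal ^ h = Ideal.span {π} := by simpa using hπ
  have hπ0 : π ≠ 0 := by
    rintro rfl
    exact pow_ne_zero h v.ne_bot (by simpa using hπ)
  refine ⟨Units.mk0 (algebraMap R K π) (by simpa using hπ0), ?_, fun u hu ↦ ?_⟩
  · rw [Units.val_mk0, v.valuation_lt_one_iff_mem]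
    exact Ideal.pow_le_self Nat.card_pos.ne' (hπ ▸ Ideal.mem_span_singleton_self π)
  · rw [Units.val_mk0, u.valuation_eq_one_iff_notMem]
    refine fun hmem ↦ hu (HeightOneSpectrum.ext (v.isMaximal.eq_of_le u.isPrime.ne_top ?_).symm)
    exact u.isPrime.le_of_pow_le (hπ ▸ (Ideal.span_singleton_le_iff_mem _).2 hmem)

variable {S : Type*} [CommRing S] [IsDedekindDomain S] {L : Type*} [Field L] [Algebra S L]
  [IsFractionRing S L]

theorem intValuation_comap_ringEquiv (e : R ≃+* S) (w : HeightOneSpectrum S) (r : R) :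
    (w.comap (e : R →+* S) e.surjective).intValuation r = w.intValuation (e r) := by
  rcases eq_or_ne r 0 with rfl | hr
  · simp
  have hpow (n : ℕ) : r ∈ (w.asIdeal.comap (e : R →+* S)) ^ n ↔ e r ∈ w.asIdeal ^ n := by
    rw [← Ideal.mem_comap (f := e), ← Ideal.map_symm, Ideal.map_pow, Ideal.map_symm]
    rfl
  rw [HeightOneSpectrum.intValuation_eq_exp_neg_multiplicity _ hr,
    HeightOneSpectrum.intValuation_eq_exp_neg_multiplicity _ (by simpa using hr)]
  congr 3
  refine multiplicity_eq_of_emultiplicity_eq (emultiplicity_eq_emultiplicity_iff.2 fun n ↦ ?_)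
  rw [Ideal.dvd_span_singleton, Ideal.dvd_span_singleton]
  exact hpow n

theorem valuation_comap_ringEquiv (e : R ≃+* S) (f : K →+* L)
    (hf : ∀ r, f (algebraMap R K r) = algebraMap S L (e r)) (w : HeightOneSpectrum S) (x : K) :
    (w.comap (e : R →+* S) e.surjective).valuation K x = w.valuation L (f x) := by
  obtain ⟨a, b, -, rfl⟩ := IsFractionRing.div_surjective (A := R) x
  simp only [map_div₀, hf, HeightOneSpectrum.valuation_of_algebraMap, intValuation_comap_ringEquiv]

end Dedekind

section SUnits

variable {K : Type*} [Field K] [NumberField K]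

/-- The group of `S`-units of a number field, for a finite set `S` of primes. -/
noncomputable abbrev sUnits (S : Finset (HeightOneSpectrum (𝓞 K))) : Subgroup Kˣ :=
  (S : Set (HeightOneSpectrum (𝓞 K))).unit K

theorem sUnits_mono {S T : Finset (HeightOneSpectrum (𝓞 K))} (h : S ⊆ T) : sUnits S ≤ sUnits T :=
  fun _ hx v hv ↦ hx v fun hvS ↦ hv (h hvS)

theorem neg_one_mem_sUnits (S : Finset (HeightOneSpectrum (𝓞 K))) : -1 ∈ sUnits S :=
  fun v _ ↦ by simp

/-- The tuple of logarithmic valuations of an `S`-unit at the primes of `S`. -/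
noncomputable def sUnitsLog (S : Finset (HeightOneSpectrum (𝓞 K))) :
    Additive (sUnits S) →ₗ[ℤ] (S → ℤ) :=
  AddMonoidHom.toIntLinearMap
    { toFun x v := log (v.1.valuation K (x.toMul : Kˣ))
      map_zero' := by ext; simp
      map_add' x y := by ext; simp [log_mul] }

/-- The inclusion of the units of the ring of integers into the `S`-units. -/
noncomputable def unitsToSUnits (S : Finset (HeightOneSpectrum (𝓞 K))) :
    Additive (𝓞 K)ˣ →ₗ[ℤ] Additive (sUnits S) :=
  AddMonoidHom.toIntLinearMap <| MonoidHom.toAdditive <|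
    (Units.map (algebraMap (𝓞 K) K : 𝓞 K →* K)).codRestrict (sUnits S) fun u v _ ↦
      v.valuation_eq_one_iff_notMem.2 fun h ↦
        v.isPrime.ne_top (Ideal.eq_top_of_isUnit_mem _ h u.isUnit)

theorem unitsToSUnits_injective (S : Finset (HeightOneSpectrum (𝓞 K))) :
    Function.Injective (unitsToSUnits S) := fun _ _ h ↦
  Additive.toMul.injective <| Units.map_injective (FaithfulSMul.algebraMap_injective (𝓞 K) K) <|
    congrArg (fun z ↦ (z.toMul : Kˣ)) h

theorem exists_unit_of_forall_valuation_eq_one {x : Kˣ}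
    (h : ∀ v : HeightOneSpectrum (𝓞 K), v.valuation K x = 1) :
    ∃ u : (𝓞 K)ˣ, Units.map (algebraMap (𝓞 K) K : 𝓞 K →* K) u = x := by
  obtain ⟨a, ha⟩ := HeightOneSpectrum.mem_integers_of_valuation_le_one (R := 𝓞 K) K (x : K)
    fun v ↦ (h v).le
  obtain ⟨b, hb⟩ := HeightOneSpectrum.mem_integers_of_valuation_le_one (R := 𝓞 K) K (x⁻¹ : K)
    fun v ↦ by rw [map_inv₀, h v, inv_one]
  have hab : a * b = 1 := by
    apply FaithfulSMul.algebraMap_injective (𝓞 K) K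
    rw [map_mul, ha, hb, map_one, mul_inv_cancel₀ x.ne_zero]
  exact ⟨Units.mkOfMulEqOne a b hab, Units.ext ha⟩

theorem range_unitsToSUnits (S : Finset (HeightOneSpectrum (𝓞 K))) :
    LinearMap.range (unitsToSUnits S) = LinearMap.ker (sUnitsLog S) := by
  have hlog (x : Additive (sUnits S)) (v : S) :
      sUnitsLog S x v = 0 ↔ v.1.valuation K (x.toMul : Kˣ) = 1 := by
    change log _ = 0 ↔ _
    rw [← exp_inj, exp_log (by simp), exp_zero]
  ext x
  rw [LinearMap.mem_ker, funext_iff]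
  refine ⟨?_, fun hx ↦ ?_⟩
  · rintro ⟨u, rfl⟩ v
    exact (hlog _ _).2 (v.1.valuation_eq_one_iff_notMem.2 fun h ↦
      v.1.isPrime.ne_top (Ideal.eq_top_of_isUnit_mem _ h u.toMul.isUnit))
  · obtain ⟨u, hu⟩ := exists_unit_of_forall_valuation_eq_one (x := x.toMul) fun v ↦ by
      by_cases hv : v ∈ S
      · exact (hlog x ⟨v, hv⟩).1 (hx _)
      · exact x.toMul.2 v hv
    exact ⟨Additive.ofMul u, Additive.toMul.injective (Subtype.ext hu)⟩

theorem finrank_range_sUnitsLog (S : Finset (HeightOneSpectrum (𝓞 K))) :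
    finrank ℤ (LinearMap.range (sUnitsLog S)) = S.card := by
  classical
  refine le_antisymm ((Submodule.finrank_le _).trans (by simp)) ?_
  choose x hx hx' using exists_valuation_lt_one_and_forall_ne_eq_one (R := 𝓞 K) (K := K)
  have hxS (v : S) : x v.1 ∈ sUnits S := fun u hu ↦ hx' v.1 u fun e ↦ hu (e ▸ v.2)
  let g (v : S) : LinearMap.range (sUnitsLog S) := ⟨_, Additive.ofMul ⟨x v.1, hxS v⟩, rfl⟩
  have hself (v : S) : (g v : S → ℤ) v ≠ 0 :=
    (log_lt_iff_lt_exp (by simp)).2 (hx v.1) |>.ne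
  have hne (v u : S) (huv : u ≠ v) : (g u : S → ℤ) v = 0 :=
    (congrArg log (hx' u.1 v.1 fun e ↦ huv (Subtype.ext e).symm)).trans log_one
  have hli : LinearIndependent ℤ g := by
    rw [Fintype.linearIndependent_iff]
    intro c hc v
    have hv := congrArg (fun z : LinearMap.range (sUnitsLog S) ↦ (z : S → ℤ) v) hc
    simp only [AddSubmonoidClass.coe_finsetSum, Finset.sum_apply, SetLike.val_smul, Pi.smul_apply,
      smul_eq_mul] at hv
    rw [Finset.sum_eq_single v (fun u _ hu ↦ by rw [hne v u hu, mul_zero]) (by simp)] at hv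
    exact (mul_eq_zero.1 hv).resolve_right (hself v)
  simpa using hli.fintype_card_le_finrank

instance module_finite_sUnits (S : Finset (HeightOneSpectrum (𝓞 K))) :
    Module.Finite ℤ (Additive (sUnits S)) := by
  have hker : Module.Finite ℤ (LinearMap.ker (sUnitsLog S)) := by
    rw [← range_unitsToSUnits]
    infer_instance
  have hquot : Module.Finite ℤ (Additive (sUnits S) ⧸ LinearMap.ker (sUnitsLog S)) :=
    Module.Finite.equiv (sUnitsLog S).quotKerEquivRange.symm
  exact Module.Finite.of_submodule_quotient (LinearMap.ker (sUnitsLog S))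

theorem finrank_sUnits_add_one (S : Finset (HeightOneSpectrum (𝓞 K))) :
    finrank ℤ (Additive (sUnits S)) + 1 = S.card + Fintype.card (InfinitePlace K) := by
  have h := Submodule.finrank_quotient_add_finrank (LinearMap.ker (sUnitsLog S))
  rw [(sUnitsLog S).quotKerEquivRange.finrank_eq, finrank_range_sUnitsLog, ← range_unitsToSUnits,
    ← (LinearEquiv.ofInjective _ (unitsToSUnits_injective S)).finrank_eq, Units.finrank_eq,
    Units.rank] at h
  have : 0 < Fintype.card (InfinitePlace K) := Fintype.card_pos
  omega

end SUnits

theorem card_ker_powMonoidHom_two {G K : Type*} [CommGroup G] [Field K] [NeZero (2 : K)]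
    {f : G →* Kˣ} (hf : Function.Injective f) {g : G} (hg : f g = -1) :
    Nat.card (powMonoidHom 2 : G →* G).ker = 2 := by
  rw [Nat.card_eq_two_iff]
  refine ⟨1, ⟨g, hf (by simp [hg])⟩, fun h ↦ two_ne_zero (α := K) ?_, ?_⟩
  · have h1 : f 1 = f g := congrArg (fun z : (powMonoidHom 2 : G →* G).ker ↦ f z) h
    rw [map_one, hg, Units.ext_iff, Units.val_one, Units.val_neg, Units.val_one] at h1
    linear_combination h1
  · ext ⟨x, hx⟩
    have hsq : f x ^ 2 = 1 ^ 2 := by rw [← map_pow, show x ^ 2 = 1 from hx, map_one, one_pow]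
    simp only [Set.mem_insert_iff, Set.mem_singleton_iff, Set.mem_univ, iff_true]
    exact (Units.eq_or_eq_neg_of_sq_eq_sq _ _ hsq).imp
      (fun h ↦ Subtype.ext (hf (by simpa using h))) (fun h ↦ Subtype.ext (hf (h.trans hg.symm)))

theorem index_range_powMonoidHom_two_sUnits {K : Type*} [Field K] [NumberField K]
    (S : Finset (HeightOneSpectrum (𝓞 K))) :
    (powMonoidHom 2 : sUnits S →* sUnits S).range.index =
      2 ^ (S.card + Fintype.card (InfinitePlace K)) := by
  rw [index_range_powMonoidHom two_ne_zero, card_ker_powMonoidHom_two (sUnits S).subtype_injective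
    (g := ⟨-1, neg_one_mem_sUnits S⟩) rfl, ← pow_succ, finrank_sUnits_add_one]

section PrimesAbove

variable {K : Type*} [Field K] {M : Type*} [Field M] [Algebra K M]

variable (M) in
theorem exists_under_eq (v : HeightOneSpectrum (𝓞 K)) :
    ∃ w : HeightOneSpectrum (𝓞 M), w.under (𝓞 K) = v := by
  obtain ⟨p, _, hp⟩ := v
  obtain ⟨P, hP, rfl⟩ := p.exists_ideal_over_prime_of_isIntegral_of_isDomain (S := 𝓞 M) (by simp)
  exact ⟨⟨P, hP, by aesop⟩, rfl⟩

/-- The preimage `σ⁻¹(w)` of a prime under an automorphism. -/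
noncomputable def conjPrime (σ : M ≃ₐ[K] M) (w : HeightOneSpectrum (𝓞 M)) :
    HeightOneSpectrum (𝓞 M) :=
  w.comap (RingOfIntegers.mapRingEquiv (σ : M ≃+* M) : 𝓞 M →+* 𝓞 M)
    (RingOfIntegers.mapRingEquiv (σ : M ≃+* M)).surjective

theorem under_conjPrime (σ : M ≃ₐ[K] M) (w : HeightOneSpectrum (𝓞 M)) :
    (conjPrime σ w).under (𝓞 K) = w.under (𝓞 K) := by
  ext x
  change RingOfIntegers.mapRingEquiv (σ : M ≃+* M) (algebraMap (𝓞 K) (𝓞 M) x) ∈ w.asIdeal ↔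
    algebraMap (𝓞 K) (𝓞 M) x ∈ w.asIdeal
  rw [show RingOfIntegers.mapRingEquiv (σ : M ≃+* M) (algebraMap (𝓞 K) (𝓞 M) x) =
    algebraMap (𝓞 K) (𝓞 M) x from RingOfIntegers.ext (σ.commutes x)]

variable [NumberField M]

theorem valuation_conjPrime (σ : M ≃ₐ[K] M) (w : HeightOneSpectrum (𝓞 M)) (x : M) :
    (conjPrime σ w).valuation M x = w.valuation M (σ x) :=
  valuation_comap_ringEquiv _ (σ : M →+* M) (fun _ ↦ rfl) w x

variable [NumberField K]

theorem exists_valuation_algebraMap_eq_under_pow (w : HeightOneSpectrum (𝓞 M)) :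
    ∃ e : ℕ, e ≠ 0 ∧
      ∀ x : K, w.valuation M (algebraMap K M x) = (w.under (𝓞 K)).valuation K x ^ e := by
  have : w.asIdeal.LiesOver (w.under (𝓞 K)).asIdeal := ⟨rfl⟩
  exact ⟨(w.under (𝓞 K)).asIdeal.ramificationIdx' w.asIdeal,
    Ideal.IsDedekindDomain.ramificationIdx'_ne_zero_of_liesOver w.asIdeal (w.under (𝓞 K)).ne_bot,
    fun x ↦ (HeightOneSpectrum.valuation_liesOver M (w.under (𝓞 K)) w x).symm⟩

theorem valuation_algebraMap_lt_iff (w : HeightOneSpectrum (𝓞 M)) {x y : K} :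
    w.valuation M (algebraMap K M x) < w.valuation M (algebraMap K M y) ↔
      (w.under (𝓞 K)).valuation K x < (w.under (𝓞 K)).valuation K y := by
  obtain ⟨e, he, h⟩ := exists_valuation_algebraMap_eq_under_pow (K := K) w
  rw [h, h, pow_lt_pow_iff_left₀ zero_le zero_le he]

theorem valuation_algebraMap_lt_one_iff (w : HeightOneSpectrum (𝓞 M)) {x : K} :
    w.valuation M (algebraMap K M x) < 1 ↔ (w.under (𝓞 K)).valuation K x < 1 := by
  simpa using valuation_algebraMap_lt_iff w (x := x) (y := 1)

theorem valuation_algebraMap_le_one_iff (w : HeightOneSpectrum (𝓞 M)) {x : K} :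
    w.valuation M (algebraMap K M x) ≤ 1 ↔ (w.under (𝓞 K)).valuation K x ≤ 1 := by
  simpa using (valuation_algebraMap_lt_iff w (x := 1) (y := x)).not

theorem valuation_algebraMap_eq_one_iff (w : HeightOneSpectrum (𝓞 M)) {x : K} :
    w.valuation M (algebraMap K M x) = 1 ↔ (w.under (𝓞 K)).valuation K x = 1 := by
  obtain ⟨e, he, h⟩ := exists_valuation_algebraMap_eq_under_pow (K := K) w
  simp [h, pow_eq_one_iff, he]

variable (M) in
theorem finite_setOf_under_eq (v : HeightOneSpectrum (𝓞 K)) :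
    {w : HeightOneSpectrum (𝓞 M) | w.under (𝓞 K) = v}.Finite := by
  obtain ⟨π, hπ⟩ := v.valuation_exists_uniformizer K
  have hπ0 : π ≠ 0 := by
    rintro rfl
    exact exp_ne_zero (by rw [← hπ, map_zero])
  refine (finite_setOf_valuation_ne_one (𝓞 M) (x := algebraMap K M π) (by simpa)).subset ?_
  rintro w rfl
  rw [Set.mem_ofPred_eq, Ne, valuation_algebraMap_eq_one_iff, hπ, exp_eq_one]
  simp

variable (M) in
/-- The finite set of primes of `M` lying above the finite set `S` of primes of `K`. -/
noncomputable def primesAbove (S : Finset (HeightOneSpectrum (𝓞 K))) :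
    Finset (HeightOneSpectrum (𝓞 M)) :=
  (S.finite_toSet.biUnion fun v _ ↦ finite_setOf_under_eq M v).toFinset

theorem mem_primesAbove {S : Finset (HeightOneSpectrum (𝓞 K))} {w : HeightOneSpectrum (𝓞 M)} :
    w ∈ primesAbove M S ↔ w.under (𝓞 K) ∈ S := by
  simp [primesAbove]

theorem map_algebraMap_mem_sUnits_primesAbove {S : Finset (HeightOneSpectrum (𝓞 K))} {x : Kˣ} :
    Units.map (algebraMap K M : K →* M) x ∈ sUnits (primesAbove M S) ↔ x ∈ sUnits S := by
  refine ⟨fun h v hv ↦ ?_, fun h w hw ↦ (valuation_algebraMap_eq_one_iff w).2 (h _ ?_)⟩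
  · obtain ⟨w, rfl⟩ := exists_under_eq M v
    exact (valuation_algebraMap_eq_one_iff w).1 (h w (by simpa [mem_primesAbove] using hv))
  · simpa [mem_primesAbove] using hw

theorem map_mem_sUnits_primesAbove (σ : M ≃ₐ[K] M) {S : Finset (HeightOneSpectrum (𝓞 K))} {x : Mˣ}
    (hx : x ∈ sUnits (primesAbove M S)) :
    Units.map (σ : M →* M) x ∈ sUnits (primesAbove M S) := by
  intro w hw
  refine (valuation_conjPrime σ w x).symm.trans (hx _ ?_)
  simpa [mem_primesAbove, under_conjPrime] using hw

end PrimesAbove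

section LargeSets

theorem exists_valuation_eq_exp_multiplicity_sub {R : Type*} [CommRing R] [IsDedekindDomain R]
    {K : Type*} [Field K] [Algebra R K] [IsFractionRing R K] {I J : nonZeroDivisors (Ideal R)}
    (h : ClassGroup.mk0 I = ClassGroup.mk0 J) :
    ∃ x : Kˣ, ∀ v : HeightOneSpectrum R, v.valuation K x =
      exp ((multiplicity v.asIdeal I.1 : ℤ) - multiplicity v.asIdeal J.1) := by
  obtain ⟨x, y, hx, hy, hxy⟩ := ClassGroup.mk0_eq_mk0_iff.1 h
  have hx' : algebraMap R K x ≠ 0 := by simpa using hx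
  have hy' : algebraMap R K y ≠ 0 := by simpa using hy
  refine ⟨Units.mk0 _ hx' * (Units.mk0 _ hy')⁻¹, fun v ↦ ?_⟩
  have hmul {a : R} (ha : a ≠ 0) (A : nonZeroDivisors (Ideal R)) :
      multiplicity v.asIdeal (Ideal.span {a} * A.1) =
        multiplicity v.asIdeal (Ideal.span {a}) + multiplicity v.asIdeal A.1 :=
    multiplicity_mul v.prime <| .of_prime_left v.prime <|
      mul_ne_zero (by simpa using ha) (nonZeroDivisors.ne_zero A.2)
  have hsum := congrArg (multiplicity v.asIdeal) hxy
  rw [hmul hx, hmul hy] at hsum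
  rw [Units.val_mul, Units.val_inv_eq_inv_val, Units.val_mk0, Units.val_mk0, map_mul, map_inv₀,
    v.valuation_of_algebraMap, v.valuation_of_algebraMap,
    v.intValuation_eq_exp_neg_multiplicity hx, v.intValuation_eq_exp_neg_multiplicity hy,
    ← exp_neg, ← exp_add]
  congr 1
  omega

theorem multiplicity_asIdeal_of_ne {R : Type*} [CommRing R] [IsDedekindDomain R]
    {u v : HeightOneSpectrum R} (h : u ≠ v) : multiplicity u.asIdeal v.asIdeal = 0 :=
  multiplicity_eq_zero.2 fun hd ↦ h <| HeightOneSpectrum.ext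
    (v.isMaximal.eq_of_le u.isPrime.ne_top (Ideal.dvd_iff_le.1 hd)).symm

variable {K : Type*} [Field K] [NumberField K]

/-- A finite set `S` of primes is large if it contains the primes above `2` and if every prime
outside `S` becomes principal in the ring of `S`-integers; `uniformizer` records a generator. -/
structure IsLarge (S : Finset (HeightOneSpectrum (𝓞 K))) : Prop where
  two : ∀ v ∉ S, v.valuation K 2 = 1
  uniformizer : ∀ v ∉ S, ∃ p : Kˣ, v.valuation K p = exp (-1) ∧
    ∀ u ∉ S, u ≠ v → u.valuation K p = 1

theorem IsLarge.mono {S T : Finset (HeightOneSpectrum (𝓞 K))} (hS : IsLarge S) (h : S ⊆ T) :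
    IsLarge T where
  two v hv := hS.two v fun hvS ↦ hv (h hvS)
  uniformizer v hv :=
    let ⟨p, hpv, hp⟩ := hS.uniformizer v fun hvS ↦ hv (h hvS)
    ⟨p, hpv, fun u hu ↦ hp u fun huS ↦ hu (h huS)⟩

theorem exists_isLarge (S₀ : Finset (HeightOneSpectrum (𝓞 K))) (X : Finset Kˣ) :
    ∃ S, S₀ ⊆ S ∧ IsLarge S ∧ ∀ x ∈ X, x ∈ sUnits S := by
  classical
  let idealClass (v : HeightOneSpectrum (𝓞 K)) : ClassGroup (𝓞 K) :=
    ClassGroup.mk0 ⟨v.asIdeal, mem_nonZeroDivisors_of_ne_zero v.ne_bot⟩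
  obtain ⟨T, -, hT⟩ := Set.exists_subset_bijOn Set.univ idealClass
  have hTfin : T.Finite := hT.finite_iff_finite.2 (Set.toFinite _)
  have hsupp (x : Kˣ) : {v : HeightOneSpectrum (𝓞 K) | v.valuation K x ≠ 1}.Finite :=
    finite_setOf_valuation_ne_one (𝓞 K) x.ne_zero
  refine ⟨S₀ ∪ hTfin.toFinset ∪ (finite_setOf_valuation_ne_one (𝓞 K) (two_ne_zero' K)).toFinset ∪
    X.biUnion fun x ↦ (hsupp x).toFinset, ?_, ⟨fun v hv ↦ ?_, fun v hv ↦ ?_⟩, fun x hx v hv ↦ ?_⟩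
  · rw [Finset.union_assoc, Finset.union_assoc]
    exact Finset.subset_union_left
  · by_contra h
    simp [h] at hv
  · obtain ⟨t, htT, ht⟩ := hT.surjOn ⟨v, trivial, rfl⟩
    obtain ⟨p, hp⟩ := exists_valuation_eq_exp_multiplicity_sub (K := K) ht
    have hne {u : HeightOneSpectrum (𝓞 K)} (hu : u ∉ T) : u ≠ t := fun h ↦ hu (h ▸ htT)
    simp only [Finset.mem_union, not_or, Set.Finite.mem_toFinset] at hv
    refine ⟨p, ?_, fun u hu huv ↦ ?_⟩
    · simp [hp, multiplicity_asIdeal_of_ne (hne hv.1.1.2)]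
    · simp only [Finset.mem_union, not_or, Set.Finite.mem_toFinset] at hu
      simp [hp, multiplicity_asIdeal_of_ne (hne hu.1.1.2), multiplicity_asIdeal_of_ne huv]
  · by_contra h
    exact hv (Finset.mem_union_right _ (Finset.mem_biUnion.2 ⟨x, hx, by simpa using h⟩))

theorem IsLarge.exists_valuation_eq {S : Finset (HeightOneSpectrum (𝓞 K))} (hS : IsLarge S)
    {g : HeightOneSpectrum (𝓞 K) → ℤᵐ⁰} (hg : ∀ v, g v ≠ 0) (hfin : {v | g v ≠ 1}.Finite) :
    ∃ x : Kˣ, ∀ v ∉ S, v.valuation K x = g v := by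
  classical
  have huniformizer (v) : ∃ p : Kˣ, v ∉ S → v.valuation K p = exp (-1) ∧
      ∀ u ∉ S, u ≠ v → u.valuation K p = 1 := by
    by_cases hv : v ∈ S
    · exact ⟨1, fun h ↦ absurd hv h⟩
    · exact (hS.uniformizer v hv).imp fun _ hp _ ↦ hp
  choose p hp using huniformizer
  refine ⟨∏ v ∈ hfin.toFinset with v ∉ S, p v ^ (-log (g v)), fun u hu ↦ ?_⟩
  rw [Units.coe_prod, map_prod, Finset.prod_eq_single u]
  · rw [Units.val_zpow_eq_zpow_val, map_zpow₀, (hp u hu).1, ← exp_zsmul, smul_eq_mul, mul_neg_one,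
      neg_neg, exp_log (hg u)]
  · intro v hv hvu
    rw [Units.val_zpow_eq_zpow_val, map_zpow₀, (hp v (Finset.mem_filter.1 hv).2).2 u hu hvu.symm,
      one_zpow]
  · intro h
    have hgu : g u = 1 := by simpa [hu] using h
    simp [hgu]

theorem IsLarge.exists_max_valuation_eq_one {S : Finset (HeightOneSpectrum (𝓞 K))} (hS : IsLarge S)
    {p q : K} (h : p ≠ 0 ∨ q ≠ 0) :
    ∃ c : Kˣ, ∀ v ∉ S, max (v.valuation K (c * p)) (v.valuation K (c * q)) = 1 := by
  have hg (v : HeightOneSpectrum (𝓞 K)) : max (v.valuation K p) (v.valuation K q) ≠ 0 := by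
    simpa [← zero_lt_iff, imp_iff_not_or] using h
  have hfin : {v : HeightOneSpectrum (𝓞 K) |
      (max (v.valuation K p) (v.valuation K q))⁻¹ ≠ 1}.Finite := by
    have hsub {r : K} (hr : r ≠ 0) := finite_setOf_valuation_ne_one (𝓞 K) hr
    rcases eq_or_ne p 0 with rfl | hp
    · simpa using hsub (h.resolve_left (not_not.2 rfl))
    rcases eq_or_ne q 0 with rfl | hq
    · simpa using hsub hp
    refine ((hsub hp).union (hsub hq)).subset fun v hv ↦ ?_
    by_contra hc
    simp only [Set.mem_union, Set.mem_ofPred_eq, not_or, not_not] at hc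
    simp [hc] at hv
  obtain ⟨c, hc⟩ := hS.exists_valuation_eq (fun v ↦ inv_ne_zero (hg v)) hfin
  refine ⟨c, fun v hv ↦ ?_⟩
  rw [map_mul, map_mul, hc v hv,
    ← Monotone.map_max (f := ((max (v.valuation K p) (v.valuation K q))⁻¹ * ·))
      fun _ _ h ↦ mul_le_mul_right h _, inv_mul_cancel₀ (hg v)]

end LargeSets

section QuadraticExtension

open QuadraticAlgebra

/-- The quadratic extension `K(√b)`. -/
abbrev SqrtExtension {K : Type*} [Field K] (b : Kˣ) : Type _ := QuadraticAlgebra K (b : K) 0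

/-- The nontrivial automorphism of `K(√b)` over `K`. -/
noncomputable def sqrtConj {K : Type*} [Field K] (b : Kˣ) :
    SqrtExtension b ≃ₐ[K] SqrtExtension b :=
  { starRingAut with commutes' := fun r ↦ by ext <;> simp }

variable {K : Type*} [Field K] {b : Kˣ}

theorem sqrtConj_apply (z : SqrtExtension b) : sqrtConj b z = star z := rfl

theorem add_star_eq (z : SqrtExtension b) : z + star z = 2 * algebraMap K _ z.re := by
  ext <;> simp [two_mul]

theorem sub_star_eq (z : SqrtExtension b) : z - star z = 2 * (algebraMap K _ z.im * ω) := by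
  ext <;> simp [two_mul]

theorem eq_re_add_im_mul_omega (z : SqrtExtension b) :
    z = algebraMap K _ z.re + algebraMap K _ z.im * ω := by
  ext <;> simp

theorem omega_sq : (ω : SqrtExtension b) ^ 2 = algebraMap K _ (b : K) := by
  ext <;> simp [sq]

theorem star_omega : star (ω : SqrtExtension b) = -ω := by
  ext <;> simp

theorem star_eq_self_iff [CharZero K] {z : SqrtExtension b} :
    star z = z ↔ algebraMap K _ z.re = z := by
  simp [QuadraticAlgebra.ext_iff, CharZero.neg_eq_self_iff, eq_comm (a := (0 : K))]

variable [hb : Fact (∀ r : K, r ^ 2 ≠ b + 0 * r)]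

theorem exists_eq_mul_star {x : SqrtExtension b} (hx : x * star x = 1) :
    ∃ y ≠ 0, y = x * star y := by
  by_cases h : x = -1
  · exact ⟨ω, by simp [QuadraticAlgebra.ext_iff], by rw [h, star_omega, neg_mul_neg, one_mul]⟩
  · exact ⟨1 + x, fun h1 ↦ h (by linear_combination h1),
      by rw [star_add, star_one, mul_add, hx, mul_one, add_comm]⟩

variable [NumberField K]

instance numberField_sqrtExtension : NumberField (SqrtExtension b) where
  to_charZero := charZero_of_injective_algebraMap (algebraMap K (SqrtExtension b)).injective
  to_finiteDimensional := Module.Finite.trans K _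

theorem valuation_omega_eq_one {w : HeightOneSpectrum (𝓞 (SqrtExtension b))}
    (h : (w.under (𝓞 K)).valuation K b = 1) :
    w.valuation (SqrtExtension b) ω = 1 := by
  rw [← valuation_algebraMap_eq_one_iff w, ← omega_sq, map_pow] at h
  simpa [pow_eq_one_iff] using h

theorem valuation_eq_one_of_valuation_star_eq {w : HeightOneSpectrum (𝓞 (SqrtExtension b))}
    (h2 : (w.under (𝓞 K)).valuation K 2 = 1) (hb : (w.under (𝓞 K)).valuation K b = 1)
    {z : SqrtExtension b}
    (hz : max ((w.under (𝓞 K)).valuation K z.re) ((w.under (𝓞 K)).valuation K z.im) = 1)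
    (hstar : w.valuation (SqrtExtension b) (star z) = w.valuation (SqrtExtension b) z) :
    w.valuation (SqrtExtension b) z = 1 := by
  rw [← valuation_algebraMap_eq_one_iff w, map_ofNat] at h2
  have hω := valuation_omega_eq_one hb
  have hle := (valuation_algebraMap_le_one_iff w).2 (hz ▸ le_max_left _ _)
  have hle' := (valuation_algebraMap_le_one_iff w).2 (hz ▸ le_max_right _ _)
  by_contra hne
  have hlt : w.valuation (SqrtExtension b) z < 1 := by
    refine lt_of_le_of_ne ?_ hne
    rw [eq_re_add_im_mul_omega z]
    exact (Valuation.map_add _ _ _).trans (max_le hle (by rwa [map_mul, hω, mul_one]))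
  have hre := Valuation.map_add_lt _ hlt (hstar.trans_lt hlt)
  have him := Valuation.map_sub_lt _ hlt (hstar.trans_lt hlt)
  rw [add_star_eq, map_mul, h2, one_mul] at hre
  rw [sub_star_eq, map_mul, map_mul, h2, hω, one_mul, mul_one] at him
  rw [valuation_algebraMap_lt_one_iff] at hre him
  exact absurd hz (max_lt hre him).ne

variable (b) in
/-- The norm map from the units of `K(√b)` lying over the `S`-units of `K` to the latter. -/
noncomputable def sUnitsNorm (S : Finset (HeightOneSpectrum (𝓞 K))) :
    sUnits (primesAbove (SqrtExtension b) S) →* sUnits S :=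
  ((Units.map QuadraticAlgebra.norm).comp (Subgroup.subtype _)).codRestrict _ fun z ↦ by
    rw [← map_algebraMap_mem_sUnits_primesAbove (M := SqrtExtension b)]
    convert mul_mem z.2 (map_mem_sUnits_primesAbove (sqrtConj b) z.2)
    exact Units.ext (algebraMap_norm_eq_mul_star _)

variable (b) in
/-- The inclusion of the `S`-units of `K` into the units of `K(√b)` lying over them. -/
noncomputable def sUnitsInclusion (S : Finset (HeightOneSpectrum (𝓞 K))) :
    sUnits S →* sUnits (primesAbove (SqrtExtension b) S) :=
  ((Units.map (algebraMap K (SqrtExtension b) : K →* SqrtExtension b)).comp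
    (Subgroup.subtype _)).codRestrict _ fun x ↦ map_algebraMap_mem_sUnits_primesAbove.2 x.2

variable (b) in
/-- The map `z ↦ z / z̄` on `S`-units of `K(√b)`. -/
noncomputable def sUnitsDivConj (S : Finset (HeightOneSpectrum (𝓞 K))) :
    sUnits (primesAbove (SqrtExtension b) S) →* sUnits (primesAbove (SqrtExtension b) S) :=
  MonoidHom.id _ / ((Units.map (sqrtConj b : SqrtExtension b →* SqrtExtension b)).comp
    (Subgroup.subtype _)).codRestrict _ fun z ↦ map_mem_sUnits_primesAbove (sqrtConj b) z.2

variable {S : Finset (HeightOneSpectrum (𝓞 K))}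

theorem coe_sUnitsDivConj (z : sUnits (primesAbove (SqrtExtension b) S)) :
    (sUnitsDivConj b S z).1.1 = z.1.1 / star z.1.1 :=
  Units.val_div_eq_div_val _ _

theorem sUnitsNorm_mem_normSubgroup (z : sUnits (primesAbove (SqrtExtension b) S)) :
    (sUnitsNorm b S z : Kˣ) ∈ normSubgroup (b : K) :=
  ⟨z.1.1.re, z.1.1.im, (norm_def z.1.1).trans (by ring)⟩

theorem mem_ker_sUnitsNorm {z : sUnits (primesAbove (SqrtExtension b) S)} :
    z ∈ (sUnitsNorm b S).ker ↔ z.1.1 * star z.1.1 = 1 := by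
  rw [MonoidHom.mem_ker, ← algebraMap_norm_eq_mul_star, FaithfulSMul.algebraMap_eq_one_iff,
    Subtype.ext_iff, Units.ext_iff]
  rfl

theorem sUnitsNorm_inclusion (x : sUnits S) : sUnitsNorm b S (sUnitsInclusion b S x) = x ^ 2 :=
  Subtype.ext (Units.ext (norm_algebraMap _))

theorem ker_sUnitsDivConj : (sUnitsDivConj b S).ker = (sUnitsInclusion b S).range := by
  ext z
  have hstar : star z.1.1 ≠ 0 := by simp
  rw [MonoidHom.mem_ker, Subtype.ext_iff, Units.ext_iff, coe_sUnitsDivConj, OneMemClass.coe_one,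
    Units.val_one, div_eq_one_iff_eq hstar, eq_comm, star_eq_self_iff]
  refine ⟨fun h ↦ ?_, ?_⟩
  · have h0 : z.1.1.re ≠ 0 := by
      intro h0
      simp [h0, eq_comm] at h
    have hz : Units.map (algebraMap K (SqrtExtension b) : K →* SqrtExtension b) (Units.mk0 _ h0) =
      z := Units.ext h
    exact ⟨⟨Units.mk0 _ h0, map_algebraMap_mem_sUnits_primesAbove.1 (hz ▸ z.2)⟩, Subtype.ext hz⟩
  · rintro ⟨x, rfl⟩
    simp [sUnitsInclusion]

theorem sUnitsDivConj_eq_sq {z : sUnits (primesAbove (SqrtExtension b) S)}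
    (hz : z ∈ (sUnitsNorm b S).ker) : sUnitsDivConj b S z = z ^ 2 := by
  rw [mem_ker_sUnitsNorm] at hz
  refine Subtype.ext (Units.ext ?_)
  rw [coe_sUnitsDivConj, div_eq_iff (by simp), Subgroup.coe_pow, Units.val_pow_eq_pow_val]
  linear_combination - z.1.1 * hz

theorem IsLarge.range_sUnitsDivConj (hS : IsLarge S) (hb : b ∈ sUnits S) :
    (sUnitsDivConj b S).range = (sUnitsNorm b S).ker := by
  ext x
  rw [mem_ker_sUnitsNorm]
  refine ⟨?_, fun hx ↦ ?_⟩
  · rintro ⟨z, rfl⟩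
    have hstar : star z.1.1 ≠ 0 := by simp
    rw [coe_sUnitsDivConj, star_div₀, star_star]
    field_simp
  · obtain ⟨y, hy0, hy⟩ := exists_eq_mul_star hx
    obtain ⟨c, hc⟩ := hS.exists_max_valuation_eq_one (p := y.re) (q := y.im) (by
      simpa [QuadraticAlgebra.ext_iff, imp_iff_not_or] using hy0)
    set z : SqrtExtension b := algebraMap K _ (c : K) * y with hz
    have hz0 : z ≠ 0 := mul_ne_zero (by simp) hy0
    have hzx : z = x.1.1 * star z := by
      rw [hz, star_mul', ← sqrtConj_apply, AlgEquiv.commutes, mul_left_comm, ← hy]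
    have hzS : Units.mk0 z hz0 ∈ sUnits (primesAbove (SqrtExtension b) S) := by
      intro w hw
      have hwS : w.under (𝓞 K) ∉ S := by rwa [← mem_primesAbove]
      refine valuation_eq_one_of_valuation_star_eq (hS.two _ hwS) (hb _ hwS) ?_ ?_
      · simpa [hz] using hc _ hwS
      · have hxw : w.valuation (SqrtExtension b) x.1 = 1 := x.2 w hw
        conv_rhs => rw [Units.val_mk0, hzx, map_mul, hxw, one_mul]
        rfl
    refine ⟨⟨_, hzS⟩, Subtype.ext (Units.ext ?_)⟩
    rw [coe_sUnitsDivConj, div_eq_iff (by simpa using hz0)]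
    exact hzx

theorem IsLarge.index_sUnitsNorm_mul (hS : IsLarge S) (hb : b ∈ sUnits S) :
    2 ^ (S.card + Fintype.card (InfinitePlace K)) = (sUnitsNorm b S).range.index *
      (powMonoidHom 2 : (sUnitsNorm b S).ker →* (sUnitsNorm b S).ker).range.index := by
  rw [← index_range_powMonoidHom_two_sUnits]
  exact index_range_powMonoidHom_two_eq_mul _ _ _ sUnitsNorm_inclusion ker_sUnitsDivConj
    (hS.range_sUnitsDivConj hb) fun _ ↦ sUnitsDivConj_eq_sq

end QuadraticExtension

section Places

/-- The places of a number field: its nonzero primes and its infinite places. -/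
abbrev Place (K : Type*) [Field K] : Type _ := HeightOneSpectrum (𝓞 K) ⊕ InfinitePlace K

/-- The elements of a field that are positive at `w` if `w` is real; for complex `w`, all of `Kˣ`.
In either case these are the squares of the completion at `w` that lie in `K`. -/
noncomputable def positiveAt {K : Type*} [Field K] (w : InfinitePlace K) : Subgroup Kˣ where
  carrier := {x | ∀ h : w.IsReal, 0 < InfinitePlace.embedding_of_isReal h (x : K)}
  one_mem' h := by simp
  mul_mem' hx hy h := by
    rw [Units.val_mul, map_mul]
    exact mul_pos (hx h) (hy h)
  inv_mem' hx h := by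
    rw [Units.val_inv_eq_inv_val, map_inv₀]
    exact inv_pos.2 (hx h)

variable {K : Type*} [Field K] [NumberField K]

/-- The elements of `Kˣ` that are squares in the completion of `K` at the given place. -/
noncomputable def squaresAt : Place K → Subgroup Kˣ :=
  Sum.elim (fun v ↦ localSquares (v.valuation K)) positiveAt

/-- The primes in `S` together with all infinite places. -/
noncomputable def placesOf (S : Finset (HeightOneSpectrum (𝓞 K))) : Finset (Place K) :=
  S.disjSum Finset.univ

theorem card_placesOf (S : Finset (HeightOneSpectrum (𝓞 K))) :
    (placesOf S).card = S.card + Fintype.card (InfinitePlace K) :=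
  Finset.card_disjSum _ _

end Places

section Counting

open QuadraticAlgebra

theorem card_add_card_filter_le_card {α β : Type*} {S : Finset β} {T : Finset α}
    {f : α → β} (hf : Set.MapsTo f T S) {P : β → Prop} [DecidablePred P]
    (hne : ∀ y ∈ S, ∃ x ∈ T, f x = y)
    (htwo : ∀ y ∈ S, P y → ∃ x ∈ T, ∃ x' ∈ T, x ≠ x' ∧ f x = y ∧ f x' = y) :
    S.card + (S.filter P).card ≤ T.card := by
  classical
  rw [Finset.card_eq_sum_card_fiberwise hf, Finset.card_filter, Finset.card_eq_sum_ones,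
    ← Finset.sum_add_distrib]
  refine Finset.sum_le_sum fun y hy ↦ ?_
  split_ifs with hP
  · obtain ⟨x, hx, x', hx', hxx', rfl, h⟩ := htwo y hy hP
    exact Finset.one_lt_card.2 ⟨x, by simp [hx], x', by simp [hx', h], hxx'⟩
  · obtain ⟨x, hx, rfl⟩ := hne y hy
    exact Finset.card_pos.2 ⟨x, by simp [hx]⟩

theorem finrank_range_add_finrank_ker {A B : Type*} [CommGroup A] [CommGroup B]
    [Module.Finite ℤ (Additive A)] (f : A →* B) :
    finrank ℤ (Additive f.range) + finrank ℤ (Additive f.ker) = finrank ℤ (Additive A) := by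
  let F : Additive A →ₗ[ℤ] Additive B := (MonoidHom.toAdditive f).toIntLinearMap
  rw [← Submodule.finrank_quotient_add_finrank (LinearMap.ker F), F.quotKerEquivRange.finrank_eq]
  rfl

variable {K : Type*} [Field K] [NumberField K] {b : Kˣ} [hb : Fact (∀ r : K, r ^ 2 ≠ b + 0 * r)]

/-- If `σ` fixed `w`, then the root `θ = (1 + √b y) / 2` of `X² - X + (1 - b y²) / 4` would have the
same valuation as its conjugate `1 - θ`, hence valuation at least `1`, although `θ (1 - θ)` has
valuation less than `1`. -/
theorem conjPrime_ne_self {w : HeightOneSpectrum (𝓞 (SqrtExtension b))}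
    (h : b ∈ localSquares ((w.under (𝓞 K)).valuation K)) : conjPrime (sqrtConj b) w ≠ w := by
  intro hw
  obtain ⟨y, -, hy⟩ := h
  set θ : SqrtExtension b := (1 + ω * algebraMap K _ y) / 2 with hθ
  have hconj : star θ = 1 - θ := by
    rw [hθ, star_div₀, star_add, star_mul', star_omega, star_one, star_ofNat, ← sqrtConj_apply,
      AlgEquiv.commutes]
    ring
  have hmul : θ * (1 - θ) * algebraMap K _ 4 = algebraMap K _ (1 - b * y ^ 2) := by
    rw [map_sub, map_mul, map_pow, ← omega_sq, map_ofNat, map_one]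
    ring
  have hval : w.valuation _ (1 - θ) = w.valuation _ θ := by
    conv_rhs => rw [← hw, valuation_conjPrime, sqrtConj_apply, hconj]
  have hle : 1 ≤ w.valuation _ θ := by
    by_contra! hlt
    have := Valuation.map_add_lt (w.valuation (SqrtExtension b)) hlt (hval.trans_lt hlt)
    rw [add_sub_cancel, map_one] at this
    exact lt_irrefl _ this
  rw [Valuation.map_sub_swap, ← valuation_algebraMap_lt_iff w, ← hmul, map_mul, map_mul,
    hval] at hy
  exact (le_mul_of_one_le_left zero_le (one_le_mul hle hle)).not_gt hy

theorem notMem_positiveAt_of_conjugate_eq {ψ : SqrtExtension b →+* ℂ}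
    (h : ComplexEmbedding.conjugate ψ = ψ.comp (sqrtConj b : SqrtExtension b →+* SqrtExtension b)) :
    b ∉ positiveAt ((InfinitePlace.mk ψ).comap (algebraMap K _)) := by
  intro hb
  have hconj (x : SqrtExtension b) : (starRingEnd ℂ) (ψ x) = ψ (star x) := congrArg (· x) h
  have hreal : ComplexEmbedding.IsReal (ψ.comp (algebraMap K _)) := by
    ext x
    refine (hconj _).trans ?_
    rw [← sqrtConj_apply, AlgEquiv.commutes]
    rfl
  have hv : (InfinitePlace.mk (ψ.comp (algebraMap K _))).IsReal := ⟨_, hreal, rfl⟩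
  have hpos : 0 < InfinitePlace.embedding_of_isReal hv (b : K) := hb hv
  have hsq : (InfinitePlace.embedding_of_isReal hv (b : K) : ℂ) = ψ ω ^ 2 := by
    rw [InfinitePlace.embedding_of_isReal_apply, InfinitePlace.embedding_mk_eq_of_isReal hreal,
      RingHom.comp_apply, ← omega_sq, map_pow]
  have hneg : ψ ω ^ 2 = ((-Complex.normSq (ψ ω) : ℝ) : ℂ) := by
    rw [Complex.ofReal_neg, Complex.normSq_eq_conj_mul_self, hconj, star_omega, map_neg]
    ring
  rw [Complex.ofReal_injective (hsq.trans hneg)] at hpos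
  exact hpos.not_ge (neg_nonpos.2 (Complex.normSq_nonneg _))

theorem exists_ne_comap_eq {v : InfinitePlace K} (h : b ∈ positiveAt v) :
    ∃ w w' : InfinitePlace (SqrtExtension b), w ≠ w' ∧ w.comap (algebraMap K _) = v ∧
      w'.comap (algebraMap K _) = v := by
  obtain ⟨w, rfl⟩ := InfinitePlace.comap_surjective (k := K) (K := SqrtExtension b) v
  obtain ⟨ψ, rfl⟩ : ∃ ψ, InfinitePlace.mk ψ = w := ⟨_, w.mk_embedding⟩
  refine ⟨.mk ψ, .mk (ψ.comp (sqrtConj b : SqrtExtension b →+* SqrtExtension b)), ?_, rfl, ?_⟩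
  · intro he
    rcases InfinitePlace.mk_eq_iff.1 he with he | he
    · have hω := congrArg (· ω) he
      simp only [RingHom.comp_apply, RingHom.coe_coe, sqrtConj_apply, star_omega, map_neg] at hω
      exact absurd (CharZero.eq_neg_self_iff.1 hω) (by simp [QuadraticAlgebra.ext_iff])
    · exact notMem_positiveAt_of_conjugate_eq he h
  · change _ = (InfinitePlace.mk ψ).comap (algebraMap K _)
    rw [InfinitePlace.comap_mk, InfinitePlace.comap_mk]
    congr 1
    ext x
    simp

open Classical in
theorem card_placesOf_add_card_filter_mem_squaresAt_le
    (S : Finset (HeightOneSpectrum (𝓞 K))) :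
    (placesOf S).card + ((placesOf S).filter (b ∈ squaresAt ·)).card ≤
      (placesOf (primesAbove (SqrtExtension b) S)).card := by
  refine card_add_card_filter_le_card
    (f := Sum.map (HeightOneSpectrum.under (𝓞 K)) (InfinitePlace.comap · (algebraMap K _)))
    ?_ ?_ ?_
  · rintro (w | w) <;> simp [placesOf, mem_primesAbove]
  · rintro (v | v) hv
    · obtain ⟨w, rfl⟩ := exists_under_eq (SqrtExtension b) v
      exact ⟨.inl w, by simpa [placesOf, mem_primesAbove] using hv, rfl⟩
    · obtain ⟨w, rfl⟩ := InfinitePlace.comap_surjective (k := K) (K := SqrtExtension b) v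
      exact ⟨.inr w, by simp [placesOf], rfl⟩
  · rintro (v | v) hv hb
    · obtain ⟨w, rfl⟩ := exists_under_eq (SqrtExtension b) v
      refine ⟨.inl (conjPrime (sqrtConj b) w), ?_, .inl w, ?_,
        fun h ↦ conjPrime_ne_self hb (Sum.inl_injective h), congrArg _ (under_conjPrime _ w), rfl⟩
      all_goals simpa [placesOf, mem_primesAbove, under_conjPrime] using hv
    · obtain ⟨w, w', hne, hw, hw'⟩ := exists_ne_comap_eq hb
      exact ⟨.inr w, by simp [placesOf], .inr w', by simp [placesOf],
        fun h ↦ hne (Sum.inr_injective h), congrArg _ hw, congrArg _ hw'⟩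

variable {S : Finset (HeightOneSpectrum (𝓞 K))}

theorem sUnitsInclusion_injective : Function.Injective (sUnitsInclusion b S) := fun _ _ h ↦
  Subtype.ext <| Units.ext <| (algebraMap K (SqrtExtension b)).injective <|
    congrArg (fun z ↦ z.1.1) h

theorem IsLarge.finrank_ker_sUnitsNorm (hS : IsLarge S) (hb : b ∈ sUnits S) :
    finrank ℤ (Additive (sUnitsNorm b S).ker) + finrank ℤ (Additive (sUnits S)) =
      finrank ℤ (Additive (sUnits (primesAbove (SqrtExtension b) S))) := by
  rw [← finrank_range_add_finrank_ker (sUnitsDivConj b S), hS.range_sUnitsDivConj hb,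
    ker_sUnitsDivConj, (MulEquiv.toAdditive
      (MonoidHom.ofInjective (sUnitsInclusion_injective (b := b)))).toIntLinearEquiv.finrank_eq]

theorem IsLarge.index_range_powMonoidHom_two_ker_sUnitsNorm (hS : IsLarge S) (hb : b ∈ sUnits S) :
    (powMonoidHom 2 : (sUnitsNorm b S).ker →* (sUnitsNorm b S).ker).range.index *
      2 ^ (placesOf S).card = 2 ^ ((placesOf (primesAbove (SqrtExtension b) S)).card + 1) := by
  have hfin : Module.Finite ℤ (Additive (sUnitsNorm b S).ker) :=
    inferInstanceAs
      (Module.Finite ℤ (AddSubgroup.toIntSubmodule (sUnitsNorm b S).ker.toAddSubgroup))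
  have hinj : Function.Injective ((Subgroup.subtype _).comp (sUnitsNorm b S).ker.subtype) :=
    (Subgroup.subtype_injective _).comp (Subgroup.subtype_injective _)
  rw [index_range_powMonoidHom two_ne_zero, card_ker_powMonoidHom_two hinj
    (g := ⟨⟨-1, neg_one_mem_sUnits _⟩, mem_ker_sUnitsNorm.2 (by simp)⟩) rfl, ← pow_succ, ← pow_add]
  have hrank := hS.finrank_ker_sUnitsNorm hb
  have hrank_below := finrank_sUnits_add_one S
  have hrank_above := finrank_sUnits_add_one (primesAbove (SqrtExtension b) S)
  rw [card_placesOf, card_placesOf]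
  congr 1
  omega

open Classical in
theorem IsLarge.two_mul_relIndex_normSubgroup_le (hS : IsLarge S) {b : Kˣ} (hb : b ∈ sUnits S)
    (hsq : ¬IsSquare (b : K)) :
    (normSubgroup (b : K)).relIndex (sUnits S) ≠ 0 ∧
      2 * (normSubgroup (b : K)).relIndex (sUnits S) ≤
        2 ^ ((placesOf S).filter (b ∉ squaresAt ·)).card := by
  have : Fact (∀ r : K, r ^ 2 ≠ b + 0 * r) :=
    ⟨fun r h ↦ hsq ⟨r, by linear_combination -h⟩⟩
  have hindex := hS.index_sUnitsNorm_mul hb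
  have hker := hS.index_range_powMonoidHom_two_ker_sUnitsNorm hb
  have hplaces := card_placesOf_add_card_filter_mem_squaresAt_le (b := b) S
  have hcompl := Finset.card_filter_add_card_filter_not (s := placesOf S) (b ∈ squaresAt ·)
  have hle : (sUnitsNorm b S).range ≤ (normSubgroup (b : K)).subgroupOf (sUnits S) := by
    rintro _ ⟨z, rfl⟩
    exact sUnitsNorm_mem_normSubgroup z
  have hfi : (sUnitsNorm b S).range.FiniteIndex := ⟨by
    intro h
    simp [h] at hindex⟩
  refine ⟨(Subgroup.finiteIndex_of_le hle).index_ne_zero,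
    (Nat.mul_le_mul_left 2 (Subgroup.index_antitone hle)).trans ?_⟩
  rw [← card_placesOf] at hindex
  refine Nat.le_of_mul_le_mul_right ?_
    (Nat.two_pow_pos (placesOf (primesAbove (SqrtExtension b) S)).card)
  calc
    _ = (sUnitsNorm b S).range.index * ((powMonoidHom 2 :
        (sUnitsNorm b S).ker →* (sUnitsNorm b S).ker).range.index * 2 ^ (placesOf S).card) := by
      rw [hker]
      ring
    _ = 2 ^ ((placesOf S).filter (b ∉ squaresAt ·)).card *
        2 ^ ((placesOf S).card + ((placesOf S).filter (b ∈ squaresAt ·)).card) := by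
      rw [← mul_assoc, ← hindex, ← pow_add, ← pow_add]
      congr 1
      omega
    _ ≤ _ := Nat.mul_le_mul_left _ (Nat.pow_le_pow_right two_pos hplaces)

end Counting

section GlobalSquares

variable {K : Type*} [Field K] [NumberField K]

theorem IsLarge.isSquare_of_forall_mem_squaresAt {S : Finset (HeightOneSpectrum (𝓞 K))}
    (hS : IsLarge S) {x : Kˣ} (hx : x ∈ sUnits S) (h : ∀ i ∈ placesOf S, x ∈ squaresAt i) :
    IsSquare (x : K) := by
  classical
  by_contra hsq
  obtain ⟨hne, hle⟩ := hS.two_mul_relIndex_normSubgroup_le hx hsq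
  rw [Finset.filter_false_of_mem fun i hi ↦ not_not.2 (h i hi), Finset.card_empty] at hle
  omega

theorem isSquare_of_forall_mem_squaresAt {x : Kˣ} (h : ∀ i : Place K, x ∈ squaresAt i) :
    IsSquare (x : K) := by
  obtain ⟨S, -, hS, hx⟩ := exists_isLarge ∅ {x}
  exact hS.isSquare_of_forall_mem_squaresAt (hx x (Finset.mem_singleton_self x)) fun i _ ↦ h i

theorem exists_ne_zero_forall_natCast_mem (S : Finset (HeightOneSpectrum (𝓞 K))) :
    ∃ N : ℕ, N ≠ 0 ∧ ∀ v ∈ S, (N : 𝓞 K) ∈ v.asIdeal := by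
  refine ⟨∏ v ∈ S, Ideal.absNorm v.asIdeal, Finset.prod_ne_zero_iff.2 fun v _ ↦ ?_, fun v hv ↦ ?_⟩
  · rw [ne_eq, Ideal.absNorm_eq_zero_iff]
    exact v.ne_bot
  · exact Ideal.mem_of_dvd _ (Nat.cast_dvd_cast (Finset.dvd_prod_of_mem _ hv))
      (Ideal.absNorm_mem v.asIdeal)

theorem exists_natCast_mem_asIdeal {p : ℕ} (hp : p.Prime) :
    ∃ v : HeightOneSpectrum (𝓞 K), (p : 𝓞 K) ∈ v.asIdeal := by
  have : Fact p.Prime := ⟨hp⟩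
  have := Int.ideal_span_isMaximal_of_prime p
  obtain ⟨I, hI, hover⟩ := Ideal.exists_maximal_ideal_liesOver_of_isIntegral (S := 𝓞 K)
    (Ideal.span {(p : ℤ)})
  have hpI : (p : 𝓞 K) ∈ I := by
    simpa using (I.mem_of_liesOver (Ideal.span {(p : ℤ)}) p).1 (Ideal.mem_span_singleton_self _)
  refine ⟨⟨I, hI.isPrime, ?_⟩, hpI⟩
  rintro rfl
  exact hp.ne_zero (by simpa using hpI)

theorem valuation_natCast_eq_exp_neg_one {v : HeightOneSpectrum (𝓞 K)} {p : ℕ} (hp : p.Prime)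
    (hpv : (p : 𝓞 K) ∈ v.asIdeal) (hv : ¬v.asIdeal ∣ differentIdeal ℤ (𝓞 K)) :
    v.valuation K (p : K) = exp (-1 : ℤ) := by
  have hiff (n : ℕ) : v.valuation K (p : K) ≤ exp (-(n : ℤ)) ↔ (p : 𝓞 K) ∈ v.asIdeal ^ n := by
    simpa using valuation_algebraMap_le_exp_neg_iff v (K := K) (a := (p : 𝓞 K)) (n := n)
  have hnot : ¬v.valuation K (p : K) ≤ exp (-(2 : ℕ) : ℤ) := fun h ↦ hv <| by
    have : Fact p.Prime := ⟨hp⟩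
    have := Int.ideal_span_isMaximal_of_prime p
    rw [← pow_one v.asIdeal]
    refine pow_sub_one_dvd_differentIdeal ℤ (p := Ideal.span {(p : ℤ)}) v.asIdeal 2
      (by simpa using hp.ne_zero) ?_
    rw [Ideal.dvd_iff_le, Ideal.map_span, Set.image_singleton, Ideal.span_singleton_le_iff_mem]
    simpa using (hiff 2).1 h
  refine le_antisymm ((hiff 1).2 (by rwa [pow_one])) ?_
  refine (lt_mul_exp_iff_le (by simpa using hp.ne_zero)).1 ?_
  calc exp (-1 : ℤ) = exp (-(2 : ℕ) : ℤ) * exp 1 := by rw [← exp_add]; rfl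
    _ < _ := mul_lt_mul_of_pos_right (not_le.1 hnot) (by simp)

/-- The element `t` is a rational prime `p ≡ 1` modulo `4` and modulo `S`, and `v` is a prime above
`p`, taken unramified by avoiding the divisors of the different. -/
theorem exists_valuation_eq_exp_neg_one_and_mem_squaresAt (S : Finset (HeightOneSpectrum (𝓞 K))) :
    ∃ v ∉ S, ∃ t : Kˣ, v.valuation K t = exp (-1 : ℤ) ∧ ∀ i ∈ placesOf S, t ∈ squaresAt i := by
  classical
  have hfin := Ideal.finite_factors (differentIdeal_ne_bot (A := ℤ) (B := 𝓞 K))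
  obtain ⟨N, hN, hNS⟩ := exists_ne_zero_forall_natCast_mem (S ∪ hfin.toFinset)
  obtain ⟨p, hp, -, hmod⟩ := Nat.exists_prime_gt_modEq_one (k := 4 * N) 0 (by omega)
  obtain ⟨c, hc⟩ := (Nat.modEq_iff_dvd' hp.one_le).1 hmod.symm
  have hpc : (p : 𝓞 K) = 1 + 4 * (N * c) := by
    rw [← mul_assoc]
    exact_mod_cast congrArg Nat.cast (show p = 1 + 4 * N * c by have := hp.one_le; omega)
  obtain ⟨v, hpv⟩ := exists_natCast_mem_asIdeal (K := K) hp
  have hv : v ∉ S ∪ hfin.toFinset := fun h ↦ v.isPrime.ne_top <| by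
    rw [Ideal.eq_top_iff_one, show (1 : 𝓞 K) = p - N * (4 * c) by rw [hpc]; ring]
    exact sub_mem hpv (Ideal.mul_mem_right _ _ (hNS v h))
  rw [Finset.mem_union, not_or, Set.Finite.mem_toFinset] at hv
  refine ⟨v, hv.1, Units.mk0 (p : K) (by exact_mod_cast hp.ne_zero),
    valuation_natCast_eq_exp_neg_one hp hpv hv.2, ?_⟩
  rintro (u | w) hi
  · have hu : (N : 𝓞 K) ∈ u.asIdeal := hNS u (by simp_all [placesOf])
    have hNc : u.valuation K (algebraMap (𝓞 K) K (N * c)) < 1 := by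
      rw [HeightOneSpectrum.valuation_of_algebraMap, u.intValuation_lt_one_iff_mem]
      exact Ideal.mul_mem_right _ _ hu
    have hpK : (p : K) - 1 = 4 * algebraMap (𝓞 K) K (N * c) := by
      simpa [sub_eq_iff_eq_add', map_ofNat] using congrArg (algebraMap (𝓞 K) K) hpc
    refine mem_localSquares_of_sub_sq_lt (y := 1) ?_
    rw [Units.val_mk0, Units.val_one, one_pow, map_one, mul_one, hpK, map_mul]
    exact mul_lt_of_lt_one_right valuation_four_pos hNc
  · intro h
    simp [hp.pos]

theorem sq_mem_positiveAt {K : Type*} [Field K] (w : InfinitePlace K) (x : Kˣ) :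
    x ^ 2 ∈ positiveAt w := fun h ↦ by
  rw [Units.val_pow_eq_pow_val, map_pow]
  have : InfinitePlace.embedding_of_isReal h (x : K) ≠ 0 := by simp
  positivity

theorem sq_mem_squaresAt (x : Kˣ) : ∀ i : Place K, x ^ 2 ∈ squaresAt i
  | .inl _ => sq_mem_localSquares x
  | .inr w => sq_mem_positiveAt w x

theorem map_mem_localSquares {M : Type*} [Field M] [NumberField M] [Algebra K M]
    {w : HeightOneSpectrum (𝓞 M)} {x : Kˣ}
    (hx : x ∈ localSquares ((w.under (𝓞 K)).valuation K)) :
    Units.map (algebraMap K M : K →* M) x ∈ localSquares (w.valuation M) := by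
  obtain ⟨y, hy, h⟩ := hx
  refine ⟨algebraMap K M y, by simpa using hy, ?_⟩
  rw [← valuation_algebraMap_lt_iff w, map_ofNat (algebraMap K M)] at h
  simpa using h

theorem map_mem_positiveAt {K M : Type*} [Field K] [Field M] [Algebra K M]
    {w : InfinitePlace M} {x : Kˣ}
    (hx : x ∈ positiveAt (w.comap (algebraMap K M))) :
    Units.map (algebraMap K M : K →* M) x ∈ positiveAt w := fun h ↦ by
  convert hx (h.comap (algebraMap K M)) using 1
  apply Complex.ofReal_injective
  rw [InfinitePlace.embedding_of_isReal_apply, InfinitePlace.embedding_of_isReal_apply,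
    InfinitePlace.comap_embedding_of_isReal _ (h.comap _)]
  rfl

theorem isSquare_or_isSquare_mul_of_isSquare_algebraMap {K : Type*} [Field K] [NeZero (2 : K)]
    {b : Kˣ} {x : K} (h : IsSquare (algebraMap K (SqrtExtension b) x)) :
    IsSquare x ∨ IsSquare (x * b) := by
  obtain ⟨y, hy⟩ := h
  have hre : x = y.re ^ 2 + b * y.im ^ 2 := by
    simpa [sq, mul_assoc] using congrArg QuadraticAlgebra.re hy
  have him : 2 * (y.re * y.im) = 0 := by
    have := congrArg QuadraticAlgebra.im hy
    simp at this
    linear_combination -this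
  rcases mul_eq_zero.1 ((mul_eq_zero.1 him).resolve_left two_ne_zero) with h0 | h0
  · exact .inr ⟨b * y.im, by rw [hre, h0]; ring⟩
  · exact .inl ⟨y.re, by rw [hre, h0]; ring⟩

theorem not_isSquare_of_valuation_eq_exp_odd {K : Type*} [Field K] {V : Valuation K ℤᵐ⁰} {x : Kˣ}
    {k : ℤ} (h : V x = exp (2 * k + 1)) : ¬IsSquare (x : K) := by
  rintro ⟨r, hr⟩
  have hr0 : r ≠ 0 := by
    rintro rfl
    simp at hr
  exact notMem_evenValuation_of_eq_exp_odd h ⟨Units.mk0 r hr0, by simp [hr, sq]⟩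

/-- If `x` were a square at all primes outside `S`, it would be a square at all places of
`K(√(x * t))`, hence in that field, for every `t` which is a square at `S` and at infinity. -/
theorem exists_notMem_localSquares {x : Kˣ} (hx : ¬IsSquare (x : K))
    (S : Finset (HeightOneSpectrum (𝓞 K))) : ∃ v ∉ S, x ∉ localSquares (v.valuation K) := by
  classical
  by_contra! hcon
  have hfin := finite_setOf_valuation_ne_one (𝓞 K) x.ne_zero
  obtain ⟨v, hv, t, hvt, ht⟩ :=
    exists_valuation_eq_exp_neg_one_and_mem_squaresAt (S ∪ hfin.toFinset)
  have hvx : v.valuation K x = 1 := by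
    by_contra h
    exact hv (by simp [h])
  have hxt : ¬IsSquare ((x * t : Kˣ) : K) :=
    not_isSquare_of_valuation_eq_exp_odd (V := v.valuation K) (k := -1) (by simp [hvx, hvt])
  have : Fact (∀ r : K, r ^ 2 ≠ (x * t : Kˣ) + 0 * r) :=
    ⟨fun r h ↦ hxt ⟨r, by linear_combination -h⟩⟩
  let ι : Kˣ →* (SqrtExtension (x * t))ˣ :=
    Units.map (algebraMap K (SqrtExtension (x * t)) : K →* _)
  have hω : (QuadraticAlgebra.omega : SqrtExtension (x * t)) ≠ 0 := by
    simp [QuadraticAlgebra.ext_iff]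
  have hιx : ι x = (Units.mk0 _ hω) ^ 2 * (ι t)⁻¹ := by
    rw [eq_mul_inv_iff_mul_eq, ← map_mul]
    exact Units.ext omega_sq.symm
  have hsq : IsSquare ((ι x : (SqrtExtension (x * t))ˣ) : SqrtExtension (x * t)) := by
    refine isSquare_of_forall_mem_squaresAt ?_
    rintro (w | w)
    · by_cases hw : w.under (𝓞 K) ∈ S
      · rw [hιx]
        refine mul_mem (sq_mem_squaresAt _ _) (inv_mem (map_mem_localSquares (ht (.inl _) ?_)))
        simp [placesOf, hw]
      · exact map_mem_localSquares (hcon _ hw)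
    · rw [hιx]
      refine mul_mem (sq_mem_squaresAt _ _) (inv_mem (map_mem_positiveAt (ht (.inr _) ?_)))
      simp [placesOf]
  rcases isSquare_or_isSquare_mul_of_isSquare_algebraMap hsq with h | h
  · exact hx h
  · exact not_isSquare_of_valuation_eq_exp_odd (V := v.valuation K) (x := x * (x * t))
      (k := -1) (by simp [hvx, hvt]) h

end GlobalSquares

section Index

variable {G : Type*} [CommGroup G]

theorem index_le_two_of_mem_or_mul_mem {H : Subgroup G} {a : G} (h : ∀ x, x ∈ H ∨ a * x ∈ H) :
    H.index ≤ 2 := by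
  have hsurj : Function.Surjective (fun b : Bool ↦ (↑(if b then 1 else a⁻¹) : G ⧸ H)) := by
    intro y
    obtain ⟨x, rfl⟩ := QuotientGroup.mk_surjective y
    rcases h x with h | h
    · exact ⟨true, QuotientGroup.eq.2 (by simpa using h)⟩
    · exact ⟨false, QuotientGroup.eq.2 (by simpa using h)⟩
  simpa [Subgroup.index] using Nat.card_le_card_of_surjective _ hsurj

theorem mul_mem_of_relIndex_le_two {H E : Subgroup G} (hne : H.relIndex E ≠ 0)
    (hle : H.relIndex E ≤ 2) {x y : G} (hx : x ∈ E) (hy : y ∈ E) (hxH : x ∉ H) (hyH : y ∉ H) :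
    x * y ∈ H := by
  have hne_one : H.relIndex E ≠ 1 := fun h ↦ hxH (Subgroup.relIndex_eq_one.1 h hx)
  have htwo : (H.subgroupOf E).index = 2 := show H.relIndex E = 2 by lia
  have := (Subgroup.mul_mem_iff_of_index_two htwo (a := ⟨x, hx⟩) (b := ⟨y, hy⟩)).2 <| by
    simp [Subgroup.mem_subgroupOf, hxH, hyH]
  simpa [Subgroup.mem_subgroupOf] using this

/-- The products of the `g i` over the subsets of `X` are pairwise incongruent modulo `J`. -/
theorem two_pow_card_le_relIndex {ι : Type*} {U J : Subgroup G} {N : ι → Subgroup G} {g : ι → G}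
    {X : Finset ι} (hJ : ∀ i ∈ X, J ≤ N i) (hU : ∀ i ∈ X, g i ∈ U) (hg : ∀ i ∈ X, g i ∉ N i)
    (hne : ∀ i ∈ X, ∀ j ∈ X, i ≠ j → g i ∈ N j) (hfin : J.relIndex U ≠ 0) :
    2 ^ X.card ≤ J.relIndex U := by
  classical
  have hsub {T T' : Finset ι} (hT : T ⊆ X) (hT' : T' ⊆ X)
      (h : (∏ i ∈ T, g i)⁻¹ * ∏ i ∈ T', g i ∈ J) : T ⊆ T' := by
    intro i hi
    by_contra hi'
    have hi_not : (∏ j ∈ T, g j)⁻¹ * ∏ j ∈ T', g j ∉ N i := by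
      rw [Subgroup.mul_mem_cancel_right _ <| prod_mem fun j hj ↦
        hne j (hT' hj) i (hT hi) fun e ↦ hi' (e ▸ hj), inv_mem_iff, ← Finset.mul_prod_erase T g hi,
        Subgroup.mul_mem_cancel_right _ <| prod_mem fun j hj ↦
          hne j (hT (Finset.mem_of_mem_erase hj)) i (hT hi) (Finset.ne_of_mem_erase hj)]
      exact hg i (hT hi)
    exact hi_not (hJ i (hT hi) h)
  have : (J.subgroupOf U).FiniteIndex := ⟨hfin⟩
  let mk (T : X.powerset) : U ⧸ J.subgroupOf U :=
    QuotientGroup.mk ⟨∏ i ∈ T.1, g i, prod_mem fun i hi ↦ hU i (Finset.mem_powerset.1 T.2 hi)⟩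
  have hmk {T T' : X.powerset} (e : mk T = mk T') : T.1 ⊆ T'.1 :=
    hsub (Finset.mem_powerset.1 T.2) (Finset.mem_powerset.1 T'.2) <| by
      simpa [Subgroup.mem_subgroupOf] using QuotientGroup.eq.1 e
  have hinj : mk.Injective := fun T T' e ↦ Subtype.ext ((hmk e).antisymm (hmk e.symm))
  have := Nat.card_le_card_of_injective mk hinj
  rwa [Nat.card_eq_fintype_card, Fintype.card_coe, Finset.card_powerset] at this

end Index

section AuxiliaryPrimes

variable {K : Type*} [Field K] [NumberField K]

theorem mem_evenValuation_of_eq_one {K : Type*} [Field K] {Γ₀ : Type*}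
    [LinearOrderedCommGroupWithZero Γ₀] {V : Valuation K Γ₀} {x : Kˣ} (h : V x = 1) :
    x ∈ evenValuation V :=
  ⟨1, by simp [h]⟩

theorem sUnits_le_evenValuation {S : Finset (HeightOneSpectrum (𝓞 K))}
    {v : HeightOneSpectrum (𝓞 K)} (hv : v ∉ S) : sUnits S ≤ evenValuation (v.valuation K) :=
  fun _ hx ↦ mem_evenValuation_of_eq_one (hx v hv)

theorem relIndex_localSquares_evenValuation_of_two {v : HeightOneSpectrum (𝓞 K)}
    (h : v.valuation K 2 = 1) :
    (localSquares (v.valuation K)).relIndex (evenValuation (v.valuation K)) ≠ 0 ∧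
      (localSquares (v.valuation K)).relIndex (evenValuation (v.valuation K)) ≤ 2 := by
  have := v.asIdeal.finiteQuotientOfFreeOfNeBot v.ne_bot
  simpa [twoMultiplicity_eq_zero v h] using relIndex_localSquares_evenValuation_le (K := K) (v := v)

theorem mul_mem_localSquares {v : HeightOneSpectrum (𝓞 K)} (h : v.valuation K 2 = 1) {x y : Kˣ}
    (hx : x ∈ evenValuation (v.valuation K)) (hy : y ∈ evenValuation (v.valuation K))
    (hxv : x ∉ localSquares (v.valuation K)) (hyv : y ∉ localSquares (v.valuation K)) :
    x * y ∈ localSquares (v.valuation K) :=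
  have ⟨hne, hle⟩ := relIndex_localSquares_evenValuation_of_two h
  mul_mem_of_relIndex_le_two hne hle hx hy hxv hyv

/-- A prime of `K(√a)` at which `x` is not a square lies over a prime at which `a` is a square:
otherwise `x * a` would be a square there. -/
theorem exists_mem_localSquares_notMem_localSquares {a x : Kˣ} (ha : ¬IsSquare (a : K))
    (hx : ¬IsSquare (x : K)) (hxa : ¬IsSquare (x * a : K))
    (S₀ : Finset (HeightOneSpectrum (𝓞 K))) :
    ∃ v ∉ S₀, a ∈ localSquares (v.valuation K) ∧ x ∉ localSquares (v.valuation K) := by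
  classical
  obtain ⟨S, hS₀, hS, hmem⟩ := exists_isLarge S₀ {a, x}
  have : Fact (∀ r : K, r ^ 2 ≠ a + 0 * r) := ⟨fun r h ↦ ha ⟨r, by linear_combination -h⟩⟩
  let ι : Kˣ →* (SqrtExtension a)ˣ := Units.map (algebraMap K (SqrtExtension a) : K →* _)
  obtain ⟨w, hw, hwx⟩ := exists_notMem_localSquares (x := ι x)
    (fun h ↦ (isSquare_or_isSquare_mul_of_isSquare_algebraMap h).elim hx hxa)
    (primesAbove (SqrtExtension a) S)
  rw [mem_primesAbove] at hw
  set v := w.under (𝓞 K)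
  have hxv : x ∉ localSquares (v.valuation K) := fun h ↦ hwx (map_mem_localSquares h)
  refine ⟨v, fun h ↦ hw (hS₀ h), ?_, hxv⟩
  by_contra hav
  have hmul := map_mem_localSquares (M := SqrtExtension a) <| mul_mem_localSquares (hS.two _ hw)
    (sUnits_le_evenValuation hw (hmem x (by simp))) (sUnits_le_evenValuation hw (hmem a (by simp)))
    hxv hav
  have hω : (QuadraticAlgebra.omega : SqrtExtension a) ≠ 0 := by
    simp [QuadraticAlgebra.ext_iff]
  have hιa : ι a = Units.mk0 _ hω ^ 2 := Units.ext omega_sq.symm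
  rw [map_mul, Subgroup.mul_mem_cancel_right _ (hιa ▸ sq_mem_localSquares _)] at hmul
  exact hwx hmul

/-- Primes `p ∈ X` outside `S` at which `a` is a square, together with `S`-units `u p` that are
dual to them: for `p, q ∈ X`, the element `u p` is a square at `q` if and only if `q ≠ p`. -/
structure IsDualSystem (S X : Finset (HeightOneSpectrum (𝓞 K))) (a : Kˣ)
    (u : HeightOneSpectrum (𝓞 K) → Kˣ) : Prop where
  notMem : ∀ p ∈ X, p ∉ S
  mem_localSquares : ∀ p ∈ X, a ∈ localSquares (p.valuation K)
  mem_sUnits : ∀ p ∈ X, u p ∈ sUnits S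
  notMem_self : ∀ p ∈ X, u p ∉ localSquares (p.valuation K)
  mem_of_ne : ∀ p ∈ X, ∀ q ∈ X, p ≠ q → u p ∈ localSquares (q.valuation K)

/-- The subgroup of squares of `S`-units. -/
noncomputable def sUnitsSquares (S : Finset (HeightOneSpectrum (𝓞 K))) : Subgroup Kˣ :=
  (sUnits S).map (powMonoidHom 2)

theorem mem_sUnitsSquares {S : Finset (HeightOneSpectrum (𝓞 K))} {x : Kˣ} :
    x ∈ sUnitsSquares S ↔ x ∈ sUnits S ∧ IsSquare (x : K) := by
  constructor
  · rintro ⟨y, hy, rfl⟩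
    exact ⟨pow_mem hy 2, y, by simp [sq]⟩
  · rintro ⟨hx, y, hy⟩
    have hy0 : y ≠ 0 := by
      rintro rfl
      simp at hy
    refine ⟨Units.mk0 y hy0, fun v hv ↦ ?_, Units.ext (by simp [hy, sq])⟩
    have := hx v hv
    change v.valuation K x = 1 at this
    rw [hy, map_mul, ← sq] at this
    exact (pow_eq_one_iff.1 this).resolve_right two_ne_zero

theorem sUnitsSquares_le_localSquares (S : Finset (HeightOneSpectrum (𝓞 K)))
    (v : HeightOneSpectrum (𝓞 K)) : sUnitsSquares S ≤ localSquares (v.valuation K) := by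
  rintro _ ⟨y, -, rfl⟩
  exact sq_mem_localSquares _

theorem relIndex_sUnitsSquares (S : Finset (HeightOneSpectrum (𝓞 K))) :
    (sUnitsSquares S).relIndex (sUnits S) = 2 ^ (S.card + Fintype.card (InfinitePlace K)) := by
  rw [← index_range_powMonoidHom_two_sUnits, Subgroup.relIndex]
  congr 1
  ext x
  rw [Subgroup.mem_subgroupOf]
  exact ⟨fun ⟨y, hy, e⟩ ↦ ⟨⟨y, hy⟩, Subtype.ext e⟩, fun ⟨y, e⟩ ↦ ⟨y, y.2, congrArg Subtype.val e⟩⟩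

namespace IsDualSystem

variable {S X : Finset (HeightOneSpectrum (𝓞 K))} {a : Kˣ} {u : HeightOneSpectrum (𝓞 K) → Kˣ}

open Classical in
theorem insert (h : IsDualSystem S X a u) (hS : IsLarge S) {x : Kˣ} (hxS : x ∈ sUnits S)
    (hxX : ∀ p ∈ X, x ∈ localSquares (p.valuation K)) {p₀ : HeightOneSpectrum (𝓞 K)}
    (hp₀ : p₀ ∉ S ∪ X) (ha : a ∈ localSquares (p₀.valuation K))
    (hx : x ∉ localSquares (p₀.valuation K)) :
    IsDualSystem S (insert p₀ X) a (Function.update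
      (fun p ↦ if u p ∈ localSquares (p₀.valuation K) then u p else u p * x) p₀ x) := by
  rw [Finset.notMem_union] at hp₀
  obtain ⟨hpS, hpX⟩ := hp₀
  have hne {p} (hp : p ∈ X) : p ≠ p₀ := fun e ↦ hpX (e ▸ hp)
  refine ⟨?_, ?_, ?_, ?_, ?_⟩
  · exact Finset.forall_mem_insert _ _ _ |>.2 ⟨hpS, h.notMem⟩
  · exact Finset.forall_mem_insert _ _ _ |>.2 ⟨ha, h.mem_localSquares⟩
  · refine Finset.forall_mem_insert _ _ _ |>.2 ⟨by simpa using hxS, fun p hp ↦ ?_⟩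
    rw [Function.update_of_ne (hne hp)]
    split_ifs
    exacts [h.mem_sUnits p hp, mul_mem (h.mem_sUnits p hp) hxS]
  · refine Finset.forall_mem_insert _ _ _ |>.2 ⟨by simpa using hx, fun p hp ↦ ?_⟩
    rw [Function.update_of_ne (hne hp)]
    split_ifs
    · exact h.notMem_self p hp
    · rw [Subgroup.mul_mem_cancel_right _ (hxX p hp)]
      exact h.notMem_self p hp
  · refine Finset.forall_mem_insert _ _ _ |>.2 ⟨fun q hq hpq ↦ ?_, fun p hp q hq hpq ↦ ?_⟩
    · rw [Function.update_self]
      exact hxX q ((Finset.mem_insert.1 hq).resolve_left hpq.symm)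
    · rw [Function.update_of_ne (hne hp)]
      rcases Finset.mem_insert.1 hq with rfl | hq <;> split_ifs with hu
      · exact hu
      · exact mul_mem_localSquares (hS.two _ hpS) (sUnits_le_evenValuation hpS (h.mem_sUnits p hp))
          (sUnits_le_evenValuation hpS hxS) hu hx
      · exact h.mem_of_ne p hp q hq hpq
      · exact mul_mem (h.mem_of_ne p hp q hq hpq) (hxX q hq)

theorem card_le (h : IsDualSystem S X a u) : X.card ≤ S.card + Fintype.card (InfinitePlace K) := by
  have := two_pow_card_le_relIndex (fun p _ ↦ sUnitsSquares_le_localSquares S p) h.mem_sUnits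
    h.notMem_self h.mem_of_ne (by simp [relIndex_sUnitsSquares])
  rw [relIndex_sUnitsSquares] at this
  exact (Nat.pow_le_pow_iff_right one_lt_two).1 this

/-- For maximal `X`, the `S`-units that are squares at all primes of `X` are, up to squares, the
powers of `a`. -/
theorem card_add_one_ge (h : IsDualSystem S X a u) (hS : IsLarge S) (ha : a ∈ sUnits S)
    (hmax : ∀ x ∈ sUnits S, (∀ p ∈ X, x ∈ localSquares (p.valuation K)) →
      IsSquare (x : K) ∨ IsSquare (x * a : K)) :
    S.card + Fintype.card (InfinitePlace K) ≤ X.card + 1 := by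
  set J : Subgroup Kˣ := sUnits S ⊓ ⨅ p : X, localSquares (p.1.valuation K)
  have mem_J {x : Kˣ} :
      x ∈ J ↔ x ∈ sUnits S ∧ ∀ p ∈ X, x ∈ localSquares (p.valuation K) := by
    simp [J, Subgroup.mem_iInf]
  have hsq_le : sUnitsSquares S ≤ J := fun x hx ↦
    mem_J.2 ⟨(mem_sUnitsSquares.1 hx).1, fun p _ ↦ sUnitsSquares_le_localSquares S p hx⟩
  have hJ_relIndex : J.relIndex (sUnits S) ≤ 2 ^ X.card := by
    rw [Subgroup.inf_relIndex_left, ← Fintype.card_coe, ← Finset.card_univ, ← Finset.prod_const]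
    refine (Subgroup.relIndex_iInf_le _).trans (Finset.prod_le_prod' fun p _ ↦ ?_)
    have hp := h.notMem p p.2
    obtain ⟨hne, hle⟩ := relIndex_localSquares_evenValuation_of_two (hS.two _ hp)
    exact (Subgroup.relIndex_le_of_le_right (sUnits_le_evenValuation hp) hne).trans hle
  have hsq_relIndex : (sUnitsSquares S).relIndex J ≤ 2 := by
    refine index_le_two_of_mem_or_mul_mem (a := ⟨a, mem_J.2 ⟨ha, h.mem_localSquares⟩⟩) ?_
    rintro ⟨x, hx⟩
    obtain ⟨hxS, hxX⟩ := mem_J.1 hx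
    refine (hmax x hxS hxX).imp (fun h ↦ mem_sUnitsSquares.2 ⟨hxS, h⟩)
      fun h ↦ mem_sUnitsSquares.2 ⟨mul_mem ha hxS, ?_⟩
    simpa [mul_comm] using h
  rw [← Nat.pow_le_pow_iff_right (a := 2) one_lt_two, ← relIndex_sUnitsSquares,
    ← Subgroup.relIndex_mul_relIndex _ _ _ hsq_le inf_le_left, pow_succ, mul_comm]
  exact Nat.mul_le_mul hJ_relIndex hsq_relIndex

end IsDualSystem

theorem exists_isDualSystem {S : Finset (HeightOneSpectrum (𝓞 K))} (hS : IsLarge S) {a : Kˣ}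
    (haS : a ∈ sUnits S) (ha : ¬IsSquare (a : K)) :
    ∃ X u, IsDualSystem S X a u ∧ S.card + Fintype.card (InfinitePlace K) ≤ X.card + 1 := by
  classical
  let cards : Set ℕ := {n | ∃ X u, IsDualSystem S X a u ∧ X.card = n}
  have hbdd : BddAbove cards := ⟨_, fun n ⟨_, _, h, hn⟩ ↦ hn ▸ h.card_le⟩
  obtain ⟨X, u, h, hX⟩ : sSup cards ∈ cards := by
    refine Nat.sSup_mem ⟨0, ∅, 1, ?_, rfl⟩ hbdd
    constructor <;> simp
  refine ⟨X, u, h, h.card_add_one_ge hS haS fun x hxS hxX ↦ ?_⟩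
  by_contra! hx
  obtain ⟨p, hp, hap, hxp⟩ := exists_mem_localSquares_notMem_localSquares ha hx.1 hx.2 (S ∪ X)
  have := le_csSup hbdd ⟨_, _, h.insert hS hxS hxX hp hap hxp, rfl⟩
  rw [Finset.card_insert_of_notMem fun h ↦ hp (Finset.mem_union_right S h)] at this
  lia

namespace IsDualSystem

variable {S X : Finset (HeightOneSpectrum (𝓞 K))} {a : Kˣ} {u : HeightOneSpectrum (𝓞 K) → Kˣ}
  {p : HeightOneSpectrum (𝓞 K)}

open Classical in
theorem exists_uniformizer (h : IsDualSystem S X a u) (hS : IsLarge S) (hp : p ∈ X) :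
    ∃ π ∈ sUnits (S ∪ X), p.valuation K π = exp (-1) ∧
      ∀ q ∈ X, q ≠ p → π ∈ localSquares (q.valuation K) := by
  obtain ⟨π, hπp, hπ⟩ := hS.uniformizer p (h.notMem p hp)
  let F := X.filter fun q ↦ q ≠ p ∧ π ∉ localSquares (q.valuation K)
  have hFX : F ⊆ X := Finset.filter_subset _ _
  have hprod : ∏ q ∈ F, u q ∈ sUnits S := prod_mem fun q hq ↦ h.mem_sUnits q (hFX hq)
  refine ⟨π * ∏ q ∈ F, u q, mul_mem (fun v hv ↦ ?_) (sUnits_mono Finset.subset_union_left hprod),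
    ?_, fun q hq hqp ↦ ?_⟩
  · rw [Finset.mem_coe, Finset.notMem_union] at hv
    exact hπ v hv.1 fun e ↦ hv.2 (e ▸ hp)
  · rw [Units.val_mul, map_mul, hπp, show p.valuation K _ = 1 from hprod p (h.notMem p hp), mul_one]
  · have hmem (r) (hr : r ∈ F) (hrq : r ≠ q) := h.mem_of_ne r (hFX hr) q hq hrq
    have hqS := h.notMem q hq
    by_cases hπq : π ∈ localSquares (q.valuation K)
    · exact mul_mem hπq <| prod_mem fun r hr ↦ hmem r hr fun e ↦
        (Finset.mem_filter.1 hr).2.2 (e ▸ hπq)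
    · rw [← Finset.mul_prod_erase F u (Finset.mem_filter.2 ⟨hq, hqp, hπq⟩), ← mul_assoc]
      refine mul_mem (mul_mem_localSquares (hS.two _ hqS)
        (mem_evenValuation_of_eq_one (hπ q hqS hqp))
        (sUnits_le_evenValuation hqS (h.mem_sUnits q hq)) hπq (h.notMem_self q hq)) ?_
      exact prod_mem fun r hr ↦ hmem r (Finset.mem_of_mem_erase hr) (Finset.ne_of_mem_erase hr)

open Classical in
theorem exists_mul_mem_localSquares (h : IsDualSystem S X a u) (hS : IsLarge S) (hp : p ∈ X)
    (x : Kˣ) : ∃ g ∈ sUnits (S ∪ X), x * g ∈ localSquares (p.valuation K) ∧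
      ∀ q ∈ X, q ≠ p → g ∈ localSquares (q.valuation K) := by
  have hpS := h.notMem p hp
  obtain ⟨π, hπU, hπp, hπ⟩ := h.exists_uniformizer hS hp
  have hπ_odd : π ∉ evenValuation (p.valuation K) :=
    notMem_evenValuation_of_eq_exp_odd (k := -1) (by simp [hπp])
  obtain ⟨g, hgU, hxg, hg⟩ : ∃ g ∈ sUnits (S ∪ X), x * g ∈ evenValuation (p.valuation K) ∧
      ∀ q ∈ X, q ≠ p → g ∈ localSquares (q.valuation K) := by
    by_cases hx : x ∈ evenValuation (p.valuation K)
    · exact ⟨1, one_mem _, by simpa using hx, fun q _ _ ↦ one_mem _⟩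
    · refine ⟨π, hπU, ?_, hπ⟩
      rw [Subgroup.mul_mem_iff_of_index_two (index_evenValuation (p.valuation_surjective K))]
      simp [hx, hπ_odd]
  by_cases hx : x * g ∈ localSquares (p.valuation K)
  · exact ⟨g, hgU, hx, hg⟩
  · refine ⟨g * u p, mul_mem hgU (sUnits_mono Finset.subset_union_left (h.mem_sUnits p hp)), ?_,
      fun q hq hqp ↦ mul_mem (hg q hq hqp) (h.mem_of_ne p hp q hq hqp.symm)⟩
    rw [← mul_assoc]
    exact mul_mem_localSquares (hS.two _ hpS) hxg
      (sUnits_le_evenValuation hpS (h.mem_sUnits p hp)) hx (h.notMem_self p hp)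

open Classical in
theorem exists_notMem_localSquares_sup_normSubgroup (h : IsDualSystem S X a u) (hS : IsLarge S)
    (hp : p ∈ X) {b : Kˣ} (hb : b ∉ localSquares (p.valuation K)) :
    ∃ g ∈ sUnits (S ∪ X), g ∉ localSquares (p.valuation K) ⊔ normSubgroup (b : K) ∧
      ∀ q ∈ X, q ≠ p → g ∈ localSquares (q.valuation K) := by
  have := p.asIdeal.finiteQuotientOfFreeOfNeBot p.ne_bot
  have hloc := isQuasiFinite_valuation (K := K) p
  obtain ⟨x, hx⟩ := hloc.exists_notMem_localSquares_sup_normSubgroup hb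
  obtain ⟨g, hgU, hxg, hg⟩ := h.exists_mul_mem_localSquares hS hp x
  refine ⟨g, hgU, fun hgn ↦ hx ?_, hg⟩
  rw [← Subgroup.mul_mem_cancel_right _ hgn]
  exact Subgroup.mem_sup_left hxg

open Classical in
theorem two_pow_card_filter_le_relIndex_normSubgroup (h : IsDualSystem S X a u) (hS : IsLarge S)
    {b : Kˣ} (hfin : (normSubgroup (b : K)).relIndex (sUnits (S ∪ X)) ≠ 0) :
    2 ^ (X.filter fun p ↦ b ∉ localSquares (p.valuation K)).card ≤
      (normSubgroup (b : K)).relIndex (sUnits (S ∪ X)) := by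
  choose! g hgU hgn hg using fun p (hp : p ∈ X.filter fun p ↦ b ∉ localSquares (p.valuation K)) ↦
    have ⟨hpX, hpb⟩ := Finset.mem_filter.1 hp
    h.exists_notMem_localSquares_sup_normSubgroup hS hpX hpb
  exact two_pow_card_le_relIndex (fun p _ ↦ le_sup_right) hgU hgn
    (fun p hp q hq hpq ↦ Subgroup.mem_sup_left (hg p hp q (Finset.filter_subset _ _ hq) hpq.symm))
    hfin

open Classical in
theorem isSquare_of_forall_mem_squaresAt (h : IsDualSystem S X a u) (hS : IsLarge S) {b : Kˣ}
    (hbU : b ∈ sUnits (S ∪ X)) (hb : ∀ i ∈ placesOf S, b ∈ squaresAt i) : IsSquare (b : K) := by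
  by_contra hsq
  obtain ⟨hne, hle⟩ :=
    (hS.mono Finset.subset_union_left).two_mul_relIndex_normSubgroup_le hbU hsq
  have hbad : (placesOf (S ∪ X)).filter (b ∉ squaresAt ·) ⊆
      (X.filter fun p ↦ b ∉ localSquares (p.valuation K)).map .inl := by
    rintro (p | w) hi <;> rw [Finset.mem_filter] at hi
    · have hpS : p ∉ S := fun hp ↦ hi.2 (hb _ (by simpa [placesOf] using hp))
      have hpX : p ∈ X := by simpa [placesOf, hpS] using hi.1
      exact Finset.mem_map_of_mem _ (Finset.mem_filter.2 ⟨hpX, hi.2⟩)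
    · exact absurd (hb _ (by simp [placesOf])) hi.2
  have hcard := Finset.card_le_card hbad
  rw [Finset.card_map] at hcard
  have := h.two_pow_card_filter_le_relIndex_normSubgroup hS hne
  have := Nat.pow_le_pow_right two_pos hcard
  lia

end IsDualSystem

end AuxiliaryPrimes

section Index

variable {G ι : Type*} [CommGroup G] [Fintype ι] {U A : Subgroup G} {Q R : ι → Subgroup G}

theorem relIndex_iInf_mul_prod_index_le (hQR : ∀ i, Q i ≤ R i) (hQ : ∀ i, (Q i).index ≠ 0) :
    (⨅ i, Q i).relIndex U * ∏ i, (R i).index ≤ (⨅ i, R i).relIndex U * ∏ i, (Q i).index := by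
  have hrelIndex (H : Subgroup G) (i : ι) : (Q i).relIndex H ≠ 0 := fun h ↦
    hQ i (Subgroup.index_eq_zero_of_relIndex_eq_zero h)
  have hle : (⨅ i, Q i).relIndex (⨅ i, R i) ≤ ∏ i, (Q i).relIndex (R i) :=
    (Subgroup.relIndex_iInf_le _).trans <| Finset.prod_le_prod' fun i _ ↦
      Subgroup.relIndex_le_of_le_right (iInf_le R i) (hrelIndex _ i)
  have htower : (⨅ i, Q i).relIndex ((⨅ i, R i) ⊓ U) * (⨅ i, R i).relIndex U =
      (⨅ i, Q i).relIndex U := by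
    rw [Subgroup.relIndex_inf_mul_relIndex, inf_eq_left.2 (iInf_mono hQR)]
  calc (⨅ i, Q i).relIndex U * ∏ i, (R i).index
      = (⨅ i, R i).relIndex U *
          ((⨅ i, Q i).relIndex ((⨅ i, R i) ⊓ U) * ∏ i, (R i).index) := by rw [← htower]; ring
    _ ≤ (⨅ i, R i).relIndex U * ((∏ i, (Q i).relIndex (R i)) * ∏ i, (R i).index) := by
        gcongr
        exact (Subgroup.relIndex_le_of_le_right inf_le_left
          (Subgroup.relIndex_iInf_ne_zero (hrelIndex _))).trans hle
    _ = (⨅ i, R i).relIndex U * ∏ i, (Q i).index := by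
        rw [← Finset.prod_mul_distrib]
        simp only [Subgroup.relIndex_mul_index (hQR _)]

theorem index_eq_and_mem_of_two_mul_relIndex_le (hQR : ∀ i, Q i ≤ R i) (hAR : ∀ i, A ≤ R i)
    (hQ : ∀ i, (Q i).index ≠ 0) (hprod : ∏ i, (Q i).index ≤ 2 * (⨅ i, Q i).relIndex U) {m : ι → ℕ}
    (hmpos : ∀ i, 0 < m i) (hm : ∀ i, m i ≤ (R i).index) (hA : A.relIndex U ≠ 0)
    (hAm : 2 * A.relIndex U ≤ ∏ i, m i) :
    (∀ i, (R i).index = m i) ∧ ∀ x ∈ U, (∀ i, x ∈ R i) → x ∈ A := by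
  have hAR' : A ≤ ⨅ i, R i := le_iInf hAR
  have hRA : (⨅ i, R i).relIndex U ≤ A.relIndex U := Subgroup.relIndex_le_of_le_left hAR' hA
  have hQU : 0 < (⨅ i, Q i).relIndex U := Nat.pos_of_ne_zero <|
    Subgroup.relIndex_iInf_ne_zero fun i h ↦ hQ i (Subgroup.index_eq_zero_of_relIndex_eq_zero h)
  have hR : ∏ i, (R i).index ≤ 2 * (⨅ i, R i).relIndex U := by
    refine Nat.le_of_mul_le_mul_left ?_ hQU
    calc _ ≤ _ := relIndex_iInf_mul_prod_index_le hQR hQ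
      _ ≤ (⨅ i, R i).relIndex U * (2 * (⨅ i, Q i).relIndex U) := by gcongr
      _ = _ := by ring
  have hmR : ∏ i, m i ≤ ∏ i, (R i).index := Finset.prod_le_prod' fun i _ ↦ hm i
  constructor
  · by_contra! ⟨i, hi⟩
    have := Finset.prod_lt_prod (fun i _ ↦ hmpos i) (fun i _ ↦ hm i)
      ⟨i, Finset.mem_univ i, (hm i).lt_of_ne' hi⟩
    lia
  · intro x hx hxR
    have heq : (⨅ i, R i).relIndex U = A.relIndex U := by lia
    have htower := Subgroup.relIndex_inf_mul_relIndex A (⨅ i, R i) U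
    rw [inf_eq_left.2 hAR', heq] at htower
    have hone := Nat.eq_of_mul_eq_mul_right (Nat.pos_of_ne_zero hA) (htower.trans (one_mul _).symm)
    exact Subgroup.relIndex_eq_one.1 hone ⟨Subgroup.mem_iInf.2 hxR, hx⟩

end Index

section LocalGlobal

variable {K : Type*} [Field K]

theorem positiveAt_eq_top {w : InfinitePlace K} (hw : ¬w.IsReal) : positiveAt w = ⊤ :=
  eq_top_iff.2 fun _ _ h ↦ absurd h hw

theorem neg_one_notMem_positiveAt {w : InfinitePlace K} (hw : w.IsReal) : -1 ∉ positiveAt w :=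
  fun h ↦ absurd (h hw) (by simp)

open Classical in
theorem index_positiveAt (w : InfinitePlace K) :
    (positiveAt w).index = if w.IsReal then 2 else 1 := by
  split_ifs with hw
  · refine Subgroup.index_eq_two_iff.2 ⟨-1, fun x ↦ ?_⟩
    have hx : InfinitePlace.embedding_of_isReal hw (x : K) ≠ 0 := by simp
    have mem_iff (y : Kˣ) : y ∈ positiveAt w ↔ 0 < InfinitePlace.embedding_of_isReal hw (y : K) :=
      ⟨fun h ↦ h hw, fun h _ ↦ h⟩
    rw [mem_iff, mem_iff, Units.val_mul, map_mul, Units.val_neg, map_neg, Units.val_one, map_one,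
      mul_neg_one, neg_pos]
    rcases hx.lt_or_gt with h | h
    · simp [h, h.le]
    · simp [h, h.not_gt]
  · simp [positiveAt_eq_top hw]

theorem normSubgroup_le_positiveAt {a : Kˣ} {w : InfinitePlace K} (ha : a ∉ positiveAt w) :
    normSubgroup (a : K) ≤ positiveAt w := by
  rintro x ⟨p, q, hx⟩ hw
  have ha' : InfinitePlace.embedding_of_isReal hw (a : K) ≤ 0 := not_lt.1 fun h ↦ ha fun _ ↦ h
  have hx0 : InfinitePlace.embedding_of_isReal hw (x : K) ≠ 0 := by simp
  refine lt_of_le_of_ne ?_ hx0.symm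
  rw [hx, map_sub, map_mul, map_pow, map_pow]
  nlinarith [sq_nonneg (InfinitePlace.embedding_of_isReal hw p),
    mul_nonneg (neg_nonneg.2 ha') (sq_nonneg (InfinitePlace.embedding_of_isReal hw q))]

variable [NumberField K]

theorem prod_index_positiveAt :
    ∏ w : InfinitePlace K, (positiveAt w).index = 2 ^ InfinitePlace.nrRealPlaces K := by
  classical
  simp_rw [index_positiveAt]
  rw [Finset.prod_ite, Finset.prod_const, Finset.prod_const_one, mul_one,
    InfinitePlace.nrRealPlaces, Fintype.card_subtype]

theorem index_squaresAt_ne_zero (i : Place K) : (squaresAt i).index ≠ 0 := by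
  rcases i with v | w
  · have := v.asIdeal.finiteQuotientOfFreeOfNeBot v.ne_bot
    exact index_localSquares_le.1
  · change (positiveAt w).index ≠ 0
    rw [index_positiveAt]
    split_ifs <;> simp

theorem prod_index_squaresAt_le (S : Finset (HeightOneSpectrum (𝓞 K))) :
    ∏ i ∈ placesOf S, (squaresAt i).index ≤ 2 ^ (2 * (placesOf S).card) := by
  rw [placesOf, Finset.prod_disjSum, ← placesOf, card_placesOf]
  refine (Nat.mul_le_mul (prod_index_localSquares_le S) prod_index_positiveAt.le).trans_eq ?_
  rw [InfinitePlace.card_eq_nrRealPlaces_add_nrComplexPlaces,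
    ← InfinitePlace.card_add_two_mul_card_eq_rank K, show 4 = 2 ^ 2 from rfl, ← pow_mul, ← pow_add,
    ← pow_add]
  congr 1
  ring

theorem squaresAt_sup_normSubgroup_ne_top {a : Kˣ} {i : Place K} (h : a ∉ squaresAt i) :
    squaresAt i ⊔ normSubgroup (a : K) ≠ ⊤ := by
  rcases i with v | w
  · have := v.asIdeal.finiteQuotientOfFreeOfNeBot v.ne_bot
    have hloc := isQuasiFinite_valuation (K := K) v
    obtain ⟨x, hx⟩ := hloc.exists_notMem_localSquares_sup_normSubgroup h
    exact fun htop ↦ hx (htop ▸ Subgroup.mem_top x)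
  · have hw : w.IsReal := by_contra fun hw ↦ h fun hw' ↦ absurd hw' hw
    intro htop
    refine neg_one_notMem_positiveAt hw ?_
    rw [← sup_eq_left.2 (normSubgroup_le_positiveAt h)]
    exact htop ▸ Subgroup.mem_top _

open Classical in
theorem IsDualSystem.two_pow_le_relIndex_iInf_squaresAt {S X : Finset (HeightOneSpectrum (𝓞 K))}
    {a : Kˣ} {u : HeightOneSpectrum (𝓞 K) → Kˣ} (h : IsDualSystem S X a u) (hS : IsLarge S) :
    2 ^ (placesOf (S ∪ X)).card ≤
      (⨅ i : placesOf S, squaresAt i.1).relIndex (sUnits (S ∪ X)) := by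
  rw [card_placesOf, ← relIndex_sUnitsSquares, ← Subgroup.inf_relIndex_right (⨅ _, _)]
  refine Subgroup.relIndex_le_of_le_left (fun x ⟨hx, hxU⟩ ↦ ?_) ?_
  · exact mem_sUnitsSquares.2 ⟨hxU, h.isSquare_of_forall_mem_squaresAt hS hxU fun i hi ↦
      Subgroup.mem_iInf.1 hx ⟨i, hi⟩⟩
  · rw [Subgroup.inf_relIndex_right]
    exact Subgroup.relIndex_iInf_ne_zero fun i h ↦
      index_squaresAt_ne_zero i.1 (Subgroup.index_eq_zero_of_relIndex_eq_zero h)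

open Classical in
theorem IsDualSystem.prod_index_squaresAt_le {S X : Finset (HeightOneSpectrum (𝓞 K))}
    {a : Kˣ} {u : HeightOneSpectrum (𝓞 K) → Kˣ} (h : IsDualSystem S X a u) (hS : IsLarge S)
    (hcard : S.card + Fintype.card (InfinitePlace K) ≤ X.card + 1) :
    ∏ i : placesOf S, (squaresAt i.1).index ≤
      2 * (⨅ i : placesOf S, squaresAt i.1).relIndex (sUnits (S ∪ X)) := by
  rw [Finset.prod_coe_sort (placesOf S) fun i ↦ (squaresAt i).index]
  refine (QuaternionHasse.prod_index_squaresAt_le S).trans (le_trans ?_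
    (Nat.mul_le_mul_left 2 (h.two_pow_le_relIndex_iInf_squaresAt hS)))
  rw [← pow_succ', card_placesOf, card_placesOf,
    Finset.card_union_of_disjoint (Finset.disjoint_right.2 h.notMem)]
  exact Nat.pow_le_pow_right two_pos (by lia)

open Classical in
theorem IsDualSystem.filter_notMem_squaresAt_subset {S X : Finset (HeightOneSpectrum (𝓞 K))}
    {a : Kˣ} {u : HeightOneSpectrum (𝓞 K) → Kˣ} (h : IsDualSystem S X a u) :
    (placesOf (S ∪ X)).filter (a ∉ squaresAt ·) ⊆ (placesOf S).filter (a ∉ squaresAt ·) := by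
  rintro (p | w) hi <;> rw [Finset.mem_filter] at hi ⊢
  · have hpX : p ∉ X := fun hp ↦ hi.2 (h.mem_localSquares p hp)
    exact ⟨by simpa [placesOf, hpX] using hi.1, hi.2⟩
  · exact ⟨by simp [placesOf], hi.2⟩

open Classical in
theorem le_index_squaresAt_sup_normSubgroup (a : Kˣ) (i : Place K) :
    (if a ∈ squaresAt i then 1 else 2) ≤ (squaresAt i ⊔ normSubgroup (a : K)).index := by
  have hne_zero : (squaresAt i ⊔ normSubgroup (a : K)).index ≠ 0 := fun h ↦
    index_squaresAt_ne_zero i <| Nat.eq_zero_of_zero_dvd <|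
      h ▸ Subgroup.index_dvd_of_le le_sup_left
  split_ifs with hi
  · lia
  · have := mt Subgroup.index_eq_one.1 (squaresAt_sup_normSubgroup_ne_top hi)
    lia

open Classical in
theorem IsLarge.index_sup_normSubgroup_and_mem {S : Finset (HeightOneSpectrum (𝓞 K))}
    (hS : IsLarge S) {a : Kˣ} (haS : a ∈ sUnits S) (ha : ¬IsSquare (a : K)) :
    (∀ i ∈ placesOf S, (squaresAt i ⊔ normSubgroup (a : K)).index =
      if a ∈ squaresAt i then 1 else 2) ∧
    ∀ x ∈ sUnits S, (∀ i ∈ placesOf S, x ∈ squaresAt i ⊔ normSubgroup (a : K)) →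
      x ∈ normSubgroup (a : K) := by
  obtain ⟨X, u, h, hcard⟩ := exists_isDualSystem hS haS ha
  have hSX : S ⊆ S ∪ X := Finset.subset_union_left
  obtain ⟨hfin, hle⟩ := (hS.mono hSX).two_mul_relIndex_normSubgroup_le (sUnits_mono hSX haS) ha
  have hprod : 2 * (normSubgroup (a : K)).relIndex (sUnits (S ∪ X)) ≤
      ∏ i : placesOf S, if a ∈ squaresAt i.1 then 1 else 2 := by
    rw [Finset.prod_coe_sort (placesOf S) fun i ↦ if a ∈ squaresAt i then 1 else 2,
      Finset.prod_ite, Finset.prod_const_one, one_mul, Finset.prod_const]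
    exact hle.trans
      (Nat.pow_le_pow_right two_pos (Finset.card_le_card h.filter_notMem_squaresAt_subset))
  obtain ⟨hindex, hmem⟩ := index_eq_and_mem_of_two_mul_relIndex_le
    (Q := fun i : placesOf S ↦ squaresAt i.1)
    (R := fun i : placesOf S ↦ squaresAt i.1 ⊔ normSubgroup (a : K)) (fun _ ↦ le_sup_left)
    (fun _ ↦ le_sup_right) (fun i ↦ index_squaresAt_ne_zero i.1)
    (h.prod_index_squaresAt_le hS hcard) (fun i ↦ by split_ifs <;> simp)
    (fun i ↦ le_index_squaresAt_sup_normSubgroup a i.1) hfin hprod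
  exact ⟨fun i hi ↦ hindex ⟨i, hi⟩,
    fun x hx hxi ↦ hmem x (sUnits_mono hSX hx) fun i ↦ hxi i i.2⟩

theorem mem_squaresAt_of_isSquare {a : Kˣ} (ha : IsSquare (a : K)) (i : Place K) :
    a ∈ squaresAt i := by
  obtain ⟨s, hs⟩ := ha
  have hs0 : s ≠ 0 := fun h ↦ a.ne_zero (by rw [hs, h, mul_zero])
  obtain rfl : a = Units.mk0 s hs0 ^ 2 := Units.ext (by simp [hs, sq])
  exact sq_mem_squaresAt _ i

theorem normSubgroup_eq_top_of_isSquare {K : Type*} [Field K] [NeZero (2 : K)] {a : Kˣ}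
    (ha : IsSquare (a : K)) : normSubgroup (a : K) = ⊤ := by
  obtain ⟨s, hs⟩ := ha
  have hs0 : s ≠ 0 := fun h ↦ a.ne_zero (by rw [hs, h, mul_zero])
  refine eq_top_iff.2 fun x _ ↦ ⟨(x + 1) / 2, (x - 1) / (2 * s), ?_⟩
  rw [hs]
  field_simp
  ring

open Classical in
theorem index_squaresAt_sup_normSubgroup (a : Kˣ) (i : Place K) :
    (squaresAt i ⊔ normSubgroup (a : K)).index = if a ∈ squaresAt i then 1 else 2 := by
  by_cases ha : IsSquare (a : K)
  · simp [normSubgroup_eq_top_of_isSquare ha, mem_squaresAt_of_isSquare ha i]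
  · obtain ⟨S, hSi, hS, haS⟩ := exists_isLarge (i.elim singleton fun _ ↦ ∅) {a}
    refine (hS.index_sup_normSubgroup_and_mem (haS a (by simp)) ha).1 i ?_
    rcases i with v | w
    · exact Finset.inl_mem_disjSum.2 (hSi (Finset.mem_singleton_self v))
    · exact Finset.inr_mem_disjSum.2 (Finset.mem_univ w)

/-- The Hasse norm theorem for `K(√a)`. -/
theorem mem_normSubgroup_of_forall_mem_squaresAt_sup {a x : Kˣ}
    (h : ∀ i, x ∈ squaresAt i ⊔ normSubgroup (a : K)) : x ∈ normSubgroup (a : K) := by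
  classical
  by_cases ha : IsSquare (a : K)
  · simp [normSubgroup_eq_top_of_isSquare ha]
  · obtain ⟨S, -, hS, hmem⟩ := exists_isLarge ∅ {a, x}
    exact (hS.index_sup_normSubgroup_and_mem (hmem a (by simp)) ha).2 x (hmem x (by simp))
      fun i _ ↦ h i

end LocalGlobal

section NoncommutativeAlgebra

variable {R D : Type*} [CommRing R] [Ring D] [Algebra R D]

theorem mem_bot_of_mul_self_eq [NoZeroDivisors D] {x : D} {y : R}
    (h : x * x = algebraMap R D (y * y)) :
    x ∈ (⊥ : Subalgebra R D) := by
  have hcomm : Commute x (algebraMap R D y) := (Algebra.commutes y x).symm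
  rw [map_mul, hcomm.mul_self_eq_mul_self_iff] at h
  rcases h with rfl | rfl
  · exact Subalgebra.algebraMap_mem _ y
  · exact neg_mem (Subalgebra.algebraMap_mem _ y)

theorem exists_anticommute_of_notMem_center {i : D} {a : R} (hi : i * i = algebraMap R D a)
    (hic : i ∉ Subalgebra.center R D) : ∃ j ≠ 0, j * i = -(i * j) := by
  obtain ⟨y, hy⟩ : ∃ y, y * i ≠ i * y := by
    by_contra! hall
    exact hic (Subalgebra.mem_center_iff.2 hall)
  refine ⟨y * i - i * y, sub_ne_zero.2 hy, ?_⟩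
  rw [sub_mul, mul_sub, mul_assoc y, ← mul_assoc i i, hi, Algebra.commutes, ← mul_assoc, neg_sub]

end NoncommutativeAlgebra

section QuadraticElements

variable {K D : Type*} [Field K] [Ring D] [Algebra K D]

theorem finrank_dvd_finrank_of_algHom {F : Type*} [Field F] [Algebra K F] (f : F →ₐ[K] D) :
    finrank K F ∣ finrank K D := by
  let _ : Module F D := Module.compHom D f.toRingHom
  have : IsScalarTower K F D := ⟨fun k c d ↦ by
    change f (k • c) * d = k • (f c * d)
    rw [map_smul, smul_mul_assoc]⟩
  exact ⟨_, (finrank_mul_finrank K F D).symm⟩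

variable [FiniteDimensional K D]

theorem natDegree_minpoly_dvd_finrank [IsDomain D] (x : D) :
    (minpoly K x).natDegree ∣ finrank K D := by
  have hx : IsIntegral K x := .of_finite K x
  have : Fact (Irreducible (minpoly K x)) := ⟨minpoly.irreducible hx⟩
  let pb := AdjoinRoot.powerBasis (minpoly.ne_zero hx)
  have hgen : minpoly K pb.gen = minpoly K x := by
    rw [AdjoinRoot.minpoly_powerBasis_gen_of_monic (minpoly.monic hx)]
  rw [← hgen, pb.natDegree_minpoly, ← pb.finrank]
  exact finrank_dvd_finrank_of_algHom (pb.lift x (by rw [hgen, minpoly.aeval]))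

theorem mem_center_of_natDegree_minpoly_eq_finrank {x : D}
    (hx : (minpoly K x).natDegree = finrank K D) : x ∈ Subalgebra.center K D := by
  have hspan := (linearIndependent_pow (K := K) x).span_eq_top_of_card_eq_finrank' (by simpa)
  have hle : Submodule.span K (Set.range fun i : Fin (minpoly K x).natDegree ↦ x ^ (i : ℕ)) ≤
      Subalgebra.toSubmodule (Subalgebra.centralizer K {x}) := by
    rw [Submodule.span_le]
    rintro _ ⟨i, rfl⟩
    exact Set.mem_centralizer_iff.2 (by simpa using (pow_mul_comm' x i).symm)
  refine Subalgebra.mem_center_iff.2 fun y ↦ ?_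
  exact (Set.mem_centralizer_iff.1 (hle (hspan ▸ Submodule.mem_top (x := y))) x rfl).symm

theorem natDegree_minpoly_eq_of_finrank_eq_sq [IsDomain D] {p : ℕ} (hp : p.Prime)
    (hD : finrank K D = p ^ 2) {x : D} (hx : x ∉ Subalgebra.center K D) :
    (minpoly K x).natDegree = p := by
  obtain ⟨k, hk, hdeg⟩ := (Nat.dvd_prime_pow hp).1 (hD ▸ natDegree_minpoly_dvd_finrank x)
  have hk0 : k ≠ 0 := by
    rintro rfl
    obtain ⟨c, rfl⟩ := minpoly.mem_range_of_degree_eq_one K x <|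
      (Polynomial.degree_eq_iff_natDegree_eq_of_pos one_pos).2 (by simpa using hdeg)
    exact hx (Subalgebra.algebraMap_mem _ c)
  have hk2 : k ≠ 2 := by
    rintro rfl
    exact hx (mem_center_of_natDegree_minpoly_eq_finrank (hdeg.trans hD.symm))
  obtain rfl : k = 1 := by lia
  simpa using hdeg

theorem exists_mul_self_eq_smul_add [IsDomain D] (hD : finrank K D = 4) {x : D}
    (hx : x ∉ Subalgebra.center K D) : ∃ p q : K, x * x = p • x + algebraMap K D q := by
  have hdeg := natDegree_minpoly_eq_of_finrank_eq_sq Nat.prime_two hD hx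
  have hlead : (minpoly K x).coeff 2 = 1 := hdeg ▸ minpoly.monic (.of_finite K x)
  have h := minpoly.aeval K x
  rw [Polynomial.aeval_eq_sum_range, hdeg, Finset.sum_range_succ, Finset.sum_range_succ,
    Finset.sum_range_one, hlead, pow_zero, pow_one, one_smul, sq] at h
  refine ⟨-(minpoly K x).coeff 1, -(minpoly K x).coeff 0, ?_⟩
  rw [Algebra.algebraMap_eq_smul_one, neg_smul, neg_smul]
  linear_combination (norm := abel) h

end QuadraticElements

section QuaternionAlgebra

open scoped Quaternion

theorem notMem_normSubgroup_of_noZeroDivisors {R : Type*} [CommRing R] [Nontrivial R] {a : R}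
    {b : Rˣ} [NoZeroDivisors ℍ[R,a,(b : R)]] : b ∉ normSubgroup a := by
  rintro ⟨p, q, h⟩
  have hmul : (⟨p, q, 1, 0⟩ * ⟨p, -q, -1, 0⟩ : ℍ[R,a,(b : R)]) = 0 := by
    ext <;> simp [h] <;> ring
  rcases mul_eq_zero.1 hmul with h | h <;> simpa using congrArg QuaternionAlgebra.imJ h

variable {K : Type*} [Field K] [NeZero (2 : K)]

theorem quaternionAlgebra_algHom_injective {A : Type*} [Ring A] [Algebra K A] [Nontrivial A]
    {a b : K} (ha : ¬IsSquare a) (hb : b ≠ 0) (f : ℍ[K,a,b] →ₐ[K] A) :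
    Function.Injective f := by
  have hpq {p q : K} (h : f ⟨p, q, 0, 0⟩ = 0) : p = 0 ∧ q = 0 := by
    have hmul : (⟨p, q, 0, 0⟩ * ⟨p, -q, 0, 0⟩ : ℍ[K,a,b]) =
        algebraMap K _ (p ^ 2 - a * q ^ 2) := by
      rw [QuaternionAlgebra.algebraMap_eq]
      ext <;> simp <;> ring
    have hnorm : p ^ 2 - a * q ^ 2 = 0 := by
      rw [← map_eq_zero (algebraMap K A), ← f.commutes, ← hmul, map_mul, h, zero_mul]
    obtain rfl : q = 0 := by
      by_contra hq
      exact ha ⟨p / q, by field_simp; linear_combination -hnorm⟩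
    simpa using hnorm
  rw [injective_iff_map_eq_zero]
  rintro ⟨p, q, r, s⟩ h
  have ha0 : a ≠ 0 := by rintro rfl; exact ha (.zero)
  have hi : f ⟨a * (2 * q), 2 * p, 0, 0⟩ = 0 := by
    have : (⟨a * (2 * q), 2 * p, 0, 0⟩ : ℍ[K,a,b]) =
        ⟨0, 1, 0, 0⟩ * ⟨p, q, r, s⟩ + ⟨p, q, r, s⟩ * ⟨0, 1, 0, 0⟩ := by
      ext <;> simp <;> ring
    rw [this, map_add, map_mul, map_mul, h, mul_zero, zero_mul, add_zero]
  obtain ⟨rfl, rfl⟩ : p = 0 ∧ q = 0 := by simpa [two_ne_zero, ha0, and_comm] using hpq hi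
  have hj : f ⟨r * b, s * b, 0, 0⟩ = 0 := by
    have : (⟨r * b, s * b, 0, 0⟩ : ℍ[K,a,b]) = ⟨0, 0, r, s⟩ * ⟨0, 0, 1, 0⟩ := by
      ext <;> simp <;> ring
    rw [this, map_mul, h, zero_mul]
  obtain ⟨rfl, rfl⟩ : r = 0 ∧ s = 0 := by simpa [hb] using hpq hj
  rfl

theorem nonempty_quaternionAlgebra_algEquiv {A : Type*} [Ring A] [Algebra K A]
    (hA : finrank K A = 4) {a b : K} (ha : ¬IsSquare a) (hb : b ≠ 0)
    (q : QuaternionAlgebra.Basis A a 0 b) : Nonempty (ℍ[K,a,b] ≃ₐ[K] A) := by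
  have : Module.Finite K A := finite_of_finrank_pos (by lia)
  have : Nontrivial A := nontrivial_of_finrank_pos (R := K) (by lia)
  have hinj := quaternionAlgebra_algHom_injective ha hb q.liftHom
  refine ⟨.ofBijective q.liftHom ⟨hinj, ?_⟩⟩
  exact (LinearMap.injective_iff_surjective_of_finrank_eq_finrank (f := q.liftHom.toLinearMap)
    (by rw [hA, QuaternionAlgebra.finrank_eq_four])).1 hinj

theorem nonempty_quaternionAlgebra_algEquiv_mul {a : K} (ha : ¬IsSquare a) {n : Kˣ}
    (hn : n ∈ normSubgroup a) (b : Kˣ) :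
    Nonempty (ℍ[K,a,(n * b : K)] ≃ₐ[K] ℍ[K,a,(b : K)]) := by
  obtain ⟨p, q, hn⟩ := hn
  refine nonempty_quaternionAlgebra_algEquiv (QuaternionAlgebra.finrank_eq_four a 0 _) ha (by simp)
    { i := ⟨0, 1, 0, 0⟩, j := ⟨0, 0, p, q⟩, k := ⟨0, 0, a * q, p⟩,
      i_mul_i := ?_, j_mul_j := ?_, i_mul_j := ?_, j_mul_i := ?_ }
  all_goals ext <;> simp [hn] <;> ring

theorem isSquare_algebraMap_quaternionAlgebra_iff {a b β : K} (hβ : ¬IsSquare β) :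
    IsSquare (algebraMap K ℍ[K,a,b] β) ↔ ∃ x y z, β = a * x ^ 2 + b * (y ^ 2 - a * z ^ 2) := by
  constructor
  · rintro ⟨⟨r, x, y, z⟩, h⟩
    rw [QuaternionAlgebra.algebraMap_eq, QuaternionAlgebra.ext_iff] at h
    obtain ⟨h0, h1, h2, h3⟩ := h
    simp only [QuaternionAlgebra.mk_mul_mk] at h0 h1 h2 h3
    have hr : r = 0 := by
      by_contra hr
      have h2r : 2 * r ≠ 0 := mul_ne_zero two_ne_zero hr
      obtain rfl : x = 0 := (mul_eq_zero.1 (by linear_combination -h1)).resolve_left h2r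
      obtain rfl : y = 0 := (mul_eq_zero.1 (by linear_combination -h2)).resolve_left h2r
      obtain rfl : z = 0 := (mul_eq_zero.1 (by linear_combination -h3)).resolve_left h2r
      exact hβ ⟨r, by linear_combination h0⟩
    exact ⟨x, y, z, by rw [h0, hr]; ring⟩
  · rintro ⟨x, y, z, h⟩
    exact ⟨⟨0, x, y, z⟩, by rw [QuaternionAlgebra.algebraMap_eq]; ext <;> simp [h] <;> ring⟩

end QuaternionAlgebra

section QuaternionDivisionAlgebra

open scoped Quaternion

variable {K D : Type*} [Field K] [NeZero (2 : K)] [Ring D] [IsDomain D] [Algebra K D]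

theorem exists_isSquare_algebraMap (hc : Subalgebra.center K D = ⊥) (hD : finrank K D = 4) :
    ∃ a : Kˣ, ¬IsSquare (a : K) ∧ IsSquare (algebraMap K D a) := by
  have : Module.Finite K D := finite_of_finrank_pos (by lia)
  obtain ⟨x, hx⟩ : ∃ x : D, x ∉ Subalgebra.center K D := by
    by_contra! hall
    have htop : (⊥ : Subalgebra K D) = ⊤ := hc ▸ eq_top_iff.2 fun x _ ↦ hall x
    have := Subalgebra.bot_eq_top_iff_finrank_eq_one.1 htop
    lia
  obtain ⟨p, q, hpq⟩ := exists_mul_self_eq_smul_add hD hx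
  obtain ⟨s, rfl⟩ : ∃ s, p = 2 * s := ⟨p / 2, by field_simp⟩
  have hsq : (x - algebraMap K D s) * (x - algebraMap K D s) = algebraMap K D (q + s * s) := by
    simp only [Algebra.algebraMap_eq_smul_one, sub_mul, mul_sub, smul_mul_assoc, mul_smul_comm,
      one_mul, mul_one] at hpq ⊢
    rw [hpq]
    module
  suffices hns : ¬IsSquare (q + s * s) from
    ⟨.mk0 (q + s * s) fun h ↦ hns (h ▸ .zero), hns, _, hsq.symm⟩
  rintro ⟨y, hy⟩
  rw [hc] at hx
  rw [hy] at hsq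
  exact hx (by simpa using add_mem (mem_bot_of_mul_self_eq hsq) (Subalgebra.algebraMap_mem _ s))

theorem exists_mul_self_eq_of_anticommute (hD : finrank K D = 4) {i j : D} (hi : i ≠ 0)
    (hj : j ≠ 0) (hij : j * i = -(i * j)) : ∃ b : Kˣ, j * j = algebraMap K D b := by
  have : Module.Finite K D := finite_of_finrank_pos (by lia)
  have htwo : (2 : K) • (i * j) ≠ 0 := smul_ne_zero two_ne_zero (mul_ne_zero hi hj)
  have hjc : j ∉ Subalgebra.center K D := fun h ↦ htwo <| by
    rw [two_smul]
    nth_rewrite 1 [Subalgebra.mem_center_iff.1 h i]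
    rw [hij, neg_add_cancel]
  obtain ⟨p, q, hpq⟩ := exists_mul_self_eq_smul_add hD hjc
  have hcomm : j * j * i = i * (j * j) := by
    rw [mul_assoc, hij, mul_neg, ← mul_assoc, hij, neg_mul, neg_neg, mul_assoc]
  obtain rfl : p = 0 := by
    refine (smul_eq_zero.1 (?_ : p • (2 : K) • (i * j) = 0)).resolve_right htwo
    rw [hpq, add_mul, mul_add, smul_mul_assoc, mul_smul_comm, hij, Algebra.commutes,
      add_left_inj] at hcomm
    linear_combination (norm := module) -hcomm
  rw [zero_smul, zero_add] at hpq
  have hq : q ≠ 0 := by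
    rintro rfl
    exact mul_self_ne_zero.2 hj (by rw [hpq, map_zero])
  exact ⟨.mk0 q hq, hpq⟩

theorem exists_quaternionAlgebra_algEquiv (hc : Subalgebra.center K D = ⊥)
    (hD : finrank K D = 4) {a : K} (ha : ¬IsSquare a) (haD : IsSquare (algebraMap K D a)) :
    ∃ b : Kˣ, Nonempty (ℍ[K,a,(b : K)] ≃ₐ[K] D) := by
  obtain ⟨i, hi⟩ := haD
  have hic : i ∉ Subalgebra.center K D := by
    rw [hc]
    rintro ⟨k, rfl⟩
    exact ha ⟨k, (algebraMap K D).injective (by simpa using hi)⟩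
  obtain ⟨j, hj, hij⟩ := exists_anticommute_of_notMem_center hi.symm hic
  have hi0 : i ≠ 0 := fun h ↦ hic (h ▸ zero_mem _)
  obtain ⟨b, hb⟩ := exists_mul_self_eq_of_anticommute hD hi0 hj hij
  refine ⟨b, nonempty_quaternionAlgebra_algEquiv hD ha b.ne_zero
    { i := i, j := j, k := i * j, i_mul_i := ?_, j_mul_j := ?_, i_mul_j := rfl, j_mul_i := ?_ }⟩
  · rw [← hi, Algebra.algebraMap_eq_smul_one, zero_smul, add_zero]
  · rw [hb, Algebra.algebraMap_eq_smul_one]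
  · rw [hij, zero_smul, zero_sub]

end QuaternionDivisionAlgebra

section SquaresInAlgebras

variable {R A B : Type*} [CommRing R] [Ring A] [Algebra R A] [Ring B] [Algebra R B]

theorem isSquare_algebraMap_iff_of_algEquiv (e : A ≃ₐ[R] B) (r : R) :
    IsSquare (algebraMap R A r) ↔ IsSquare (algebraMap R B r) :=
  ⟨fun h ↦ by simpa using h.map e, fun h ↦ by simpa using h.map e.symm⟩

theorem nonempty_quadraticAlgebra_algHom_iff (r : R) :
    Nonempty (QuadraticAlgebra R r 0 →ₐ[R] A) ↔ IsSquare (algebraMap R A r) := by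
  constructor
  · rintro ⟨f⟩
    refine ⟨f QuadraticAlgebra.omega, ?_⟩
    rw [← map_mul, ← f.commutes, QuadraticAlgebra.omega_mul_omega_eq_add,
      Algebra.algebraMap_eq_smul_one, zero_smul, add_zero]
  · rintro ⟨x, hx⟩
    exact ⟨QuadraticAlgebra.lift
      ⟨x, by rw [← hx, Algebra.algebraMap_eq_smul_one, zero_smul, add_zero]⟩⟩

end SquaresInAlgebras

section HilbertSymbol

open scoped Quaternion

variable {K : Type*} [Field K] [NumberField K]

theorem mem_squaresAt_sup_normSubgroup_of_eq_sub {i : Place K} {a q c : Kˣ} {α : K}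
    (ha : a ∉ squaresAt i) (hq : q ∈ squaresAt i) (h : (c : K) = q - a * α ^ 2) :
    c ∈ squaresAt i ⊔ normSubgroup (a : K) := by
  rcases i with v | w
  · exact mem_localSquares_sup_normSubgroup_of_eq_mul_sub hq (m := 1) (n := α) (by rw [h]; ring)
  · refine Subgroup.mem_sup_left fun hw ↦ ?_
    have ha' : InfinitePlace.embedding_of_isReal hw (a : K) ≤ 0 :=
      not_lt.1 fun h ↦ ha fun _ ↦ h
    rw [h, map_sub, map_mul, map_pow]
    linarith [hq hw, mul_nonpos_of_nonpos_of_nonneg ha'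
      (sq_nonneg (InfinitePlace.embedding_of_isReal hw α))]

theorem ne_mul_sq_of_mem_squaresAt {i : Place K} {a q : Kˣ} (ha : a ∉ squaresAt i)
    (hq : q ∈ squaresAt i) (α : K) : (q : K) ≠ a * α ^ 2 := by
  intro h
  have hα : α ≠ 0 := by
    rintro rfl
    exact q.ne_zero (by simp [h])
  obtain rfl : q = a * Units.mk0 α hα ^ 2 := Units.ext (by simpa using h)
  exact ha ((Subgroup.mul_mem_cancel_right _ (sq_mem_squaresAt _ i)).1 hq)

theorem mem_squaresAt_sup_normSubgroup_of_isSquare_imp {i : Place K} {a b c : Kˣ}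
    (ha : a ∉ squaresAt i) (hb : b ∉ normSubgroup (a : K))
    (hbc : ∀ β : K, ¬IsSquare β → IsSquare (algebraMap K ℍ[K,(a : K),(b : K)] β) →
      IsSquare (algebraMap K ℍ[K,(a : K),(c : K)] β))
    (h : b ∈ squaresAt i ⊔ normSubgroup (a : K)) :
    c ∈ squaresAt i ⊔ normSubgroup (a : K) := by
  obtain ⟨q, hq, n, hn, rfl⟩ := Subgroup.mem_sup.1 h
  obtain ⟨p, r, hpr⟩ := mem_normSubgroup.1 hn
  have hbn : q * n * n ∈ squaresAt i := by
    rw [mul_assoc, ← sq]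
    exact mul_mem hq (sq_mem_squaresAt n i)
  have hns : ¬IsSquare ((q * n * n : Kˣ) : K) := by
    rintro ⟨y, hy⟩
    have hmem : q * n * n ∈ normSubgroup (a : K) := ⟨y, 0, by rw [hy]; ring⟩
    exact hb ((Subgroup.mul_mem_cancel_right _ hn).1 hmem)
  obtain ⟨x, y, z, hxyz⟩ := (isSquare_algebraMap_quaternionAlgebra_iff hns).1 <| hbc _ hns <|
    (isSquare_algebraMap_quaternionAlgebra_iff hns).2
      ⟨0, p, r, by rw [Units.val_mul, ← hpr]; ring⟩
  have hm : y ^ 2 - (a : K) * z ^ 2 ≠ 0 := fun h0 ↦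
    ne_mul_sq_of_mem_squaresAt ha hbn x (by rw [hxyz, h0, mul_zero, add_zero])
  have hcm : c * Units.mk0 _ hm ∈ squaresAt i ⊔ normSubgroup (a : K) :=
    mem_squaresAt_sup_normSubgroup_of_eq_sub ha hbn (α := x)
      (by rw [hxyz, Units.val_mul, Units.val_mk0]; ring)
  exact (Subgroup.mul_mem_cancel_right _
    (Subgroup.mem_sup_right (mem_normSubgroup.2 ⟨y, z, rfl⟩))).1 hcm

theorem mul_mem_normSubgroup_of_isSquare_iff {a b c : Kˣ}
    (hb : b ∉ normSubgroup (a : K)) (hc : c ∉ normSubgroup (a : K))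
    (hbc : ∀ β : K, ¬IsSquare β → (IsSquare (algebraMap K ℍ[K,(a : K),(b : K)] β) ↔
      IsSquare (algebraMap K ℍ[K,(a : K),(c : K)] β))) :
    b * c ∈ normSubgroup (a : K) := by
  refine mem_normSubgroup_of_forall_mem_squaresAt_sup fun i ↦ ?_
  have hindex := index_squaresAt_sup_normSubgroup a i
  split_ifs at hindex with ha
  · simp [Subgroup.index_eq_one.1 hindex]
  · rw [Subgroup.mul_mem_iff_of_index_two hindex]
    exact ⟨mem_squaresAt_sup_normSubgroup_of_isSquare_imp ha hb fun β hβ ↦ (hbc β hβ).1,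
      mem_squaresAt_sup_normSubgroup_of_isSquare_imp ha hc fun β hβ ↦ (hbc β hβ).2⟩

theorem nonempty_quaternionAlgebra_algEquiv_of_isSquare_iff {a b c : Kˣ}
    [NoZeroDivisors ℍ[K,(a : K),(b : K)]] [NoZeroDivisors ℍ[K,(a : K),(c : K)]]
    (hbc : ∀ β : K, ¬IsSquare β → (IsSquare (algebraMap K ℍ[K,(a : K),(b : K)] β) ↔
      IsSquare (algebraMap K ℍ[K,(a : K),(c : K)] β))) :
    Nonempty (ℍ[K,(a : K),(b : K)] ≃ₐ[K] ℍ[K,(a : K),(c : K)]) := by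
  have hb : b ∉ normSubgroup (a : K) := notMem_normSubgroup_of_noZeroDivisors
  have hc : c ∉ normSubgroup (a : K) := notMem_normSubgroup_of_noZeroDivisors
  have ha : ¬IsSquare (a : K) := fun ha ↦ hb (by simp [normSubgroup_eq_top_of_isSquare ha])
  have hn : b * c * (c⁻¹) ^ 2 ∈ normSubgroup (a : K) :=
    mul_mem (mul_mem_normSubgroup_of_isSquare_iff hb hc hbc) (sq_mem_normSubgroup _ _)
  have hnc : ((b * c * (c⁻¹) ^ 2 : Kˣ) : K) * c = b := by
    rw [← Units.val_mul]
    congr 1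
    group
  exact hnc ▸ nonempty_quaternionAlgebra_algEquiv_mul ha hn c

end HilbertSymbol

section QuadraticSubfields

variable {K : Type u} [Field K] {A B : Type*} [Ring A] [Algebra K A] [Ring B] [Algebra K B]

theorem isSquare_algebraMap_iff_of_quadratic_subfields
    (h : ∀ (F : Type u) [Field F] [Algebra K F], finrank K F = 2 →
      (Nonempty (F →ₐ[K] A) ↔ Nonempty (F →ₐ[K] B))) {β : K} (hβ : ¬IsSquare β) :
    IsSquare (algebraMap K A β) ↔ IsSquare (algebraMap K B β) := by
  have : Fact (∀ r : K, r ^ 2 ≠ β + 0 * r) := ⟨fun r hr ↦ hβ ⟨r, by linear_combination -hr⟩⟩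
  rw [← nonempty_quadraticAlgebra_algHom_iff, ← nonempty_quadraticAlgebra_algHom_iff]
  exact h _ (QuadraticAlgebra.finrank_eq_two _ _)

end QuadraticSubfields

end QuaternionHasse

open QuaternionHasse

/-- over a number field `K`, two quaternion division algebras (central
division `K`-algebras of degree 2) with the same quadratic subfields are `K`-isomorphic. -/
theorem quaternion_algebras_over_number_field_with_same_quadratic_subfields_isomorphic
    (K : Type u) [Field K] [NumberField K]
    (D₁ : Type v) [DivisionRing D₁] [Algebra K D₁] [FiniteDimensional K D₁]
    (hc₁ : Subalgebra.center K D₁ = ⊥) (hd₁ : Module.finrank K D₁ = 4)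
    (D₂ : Type w) [DivisionRing D₂] [Algebra K D₂] [FiniteDimensional K D₂]
    (hc₂ : Subalgebra.center K D₂ = ⊥) (hd₂ : Module.finrank K D₂ = 4)
    (hsub : ∀ (F : Type u) [Field F] [Algebra K F], Module.finrank K F = 2 →
      (Nonempty (F →ₐ[K] D₁) ↔ Nonempty (F →ₐ[K] D₂))) :
    Nonempty (D₁ ≃ₐ[K] D₂) := by
  have hsq (β : K) (hβ : ¬IsSquare β) :
      IsSquare (algebraMap K D₁ β) ↔ IsSquare (algebraMap K D₂ β) :=
    isSquare_algebraMap_iff_of_quadratic_subfields hsub hβ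
  obtain ⟨a, ha, ha₁⟩ := exists_isSquare_algebraMap hc₁ hd₁
  obtain ⟨b, ⟨e₁⟩⟩ := exists_quaternionAlgebra_algEquiv hc₁ hd₁ ha ha₁
  obtain ⟨c, ⟨e₂⟩⟩ := exists_quaternionAlgebra_algEquiv hc₂ hd₂ ha ((hsq a ha).1 ha₁)
  have := e₁.injective.noZeroDivisors e₁ (map_zero e₁) (map_mul e₁)
  have := e₂.injective.noZeroDivisors e₂ (map_zero e₂) (map_mul e₂)
  obtain ⟨e⟩ := nonempty_quaternionAlgebra_algEquiv_of_isSquare_iff (b := b) (c := c) fun β hβ ↦ by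
    rw [isSquare_algebraMap_iff_of_algEquiv e₁, isSquare_algebraMap_iff_of_algEquiv e₂, hsq β hβ]
  exact ⟨e₁.symm.trans (e.trans e₂)⟩
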